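/- arXiv:math/0212329 — 2 statements merged into one kernel-verified Lean document; each statement's English description precedes it below -/
import Mathlib

section
/- For every prime p there exists a strongly infinite-dimensional compact metric space Y with cohomological dimension dim_{Z[1/p]} Y = 1. -/
open Set Function

open scoped ENNReal

noncomputable section

/-! ### Alexander–Spanier (Čech) cohomology -/

namespace AS

variable (A : Type*) [AddCommGroup A]

/-- Alexander–Spanier `n`-cochains on `X` with coefficients in `A`. -/
abbrev Cochain (X : Type*) (n : ℕ) : Type _ := (Fin (n + 1) → X) → A

/-- The Alexander–Spanier coboundary operator. -/
def d (X : Type*) (n : ℕ) : Cochain A X n →+ Cochain A X (n + 1) :=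
  AddMonoidHom.mk' (fun φ s => ∑ i : Fin (n + 2), ((-1 : ℤ) ^ (i : ℕ)) • φ (s ∘ i.succAbove))
    (fun φ ψ => funext fun s => by
      simp [smul_add, Finset.sum_add_distrib])

/-- An open cover of `X`. -/
def IsOpenCover {X : Type*} [TopologicalSpace X] (U : Set (Set X)) : Prop :=
  (∀ u ∈ U, IsOpen u) ∧ ⋃₀ U = univ

/-- A tuple is `U`-small if it is contained in a single member of `U`. -/
def Small {X : Type*} (U : Set (Set X)) {k : ℕ} (s : Fin k → X) : Prop :=
  ∃ u ∈ U, ∀ i, s i ∈ u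

/-- The subgroup of cochains vanishing on all tuples that are small with respect to
some open cover (i.e. vanishing in a neighbourhood of the diagonal). -/
def locZero (X : Type*) [TopologicalSpace X] (n : ℕ) : AddSubgroup (Cochain A X n) where
  carrier := {φ | ∃ U, IsOpenCover U ∧ ∀ s : Fin (n + 1) → X, Small U s → φ s = 0}
  zero_mem' := ⟨{univ}, ⟨fun u hu => by rw [mem_singleton_iff] at hu; rw [hu]; exact isOpen_univ,
      by simp⟩, fun s _ => rfl⟩
  add_mem' := by
    rintro φ ψ ⟨U, ⟨hUo, hUc⟩, hφ⟩ ⟨W, ⟨hWo, hWc⟩, hψ⟩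
    refine ⟨(fun p : Set X × Set X => p.1 ∩ p.2) '' (U ×ˢ W), ⟨?_, ?_⟩, ?_⟩
    · rintro _ ⟨⟨u, w⟩, ⟨hu, hw⟩, rfl⟩
      exact (hUo u hu).inter (hWo w hw)
    · apply eq_univ_of_forall
      intro x
      have hx1 : x ∈ ⋃₀ U := hUc ▸ mem_univ x
      have hx2 : x ∈ ⋃₀ W := hWc ▸ mem_univ x
      obtain ⟨u, hu, hxu⟩ := hx1
      obtain ⟨w, hw, hxw⟩ := hx2
      exact ⟨u ∩ w, ⟨⟨u, w⟩, ⟨hu, hw⟩, rfl⟩, hxu, hxw⟩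
    · rintro s ⟨_, ⟨⟨u, w⟩, ⟨hu, hw⟩, rfl⟩, hs⟩
      have h1 : φ s = 0 := hφ s ⟨u, hu, fun i => (hs i).1⟩
      have h2 : ψ s = 0 := hψ s ⟨w, hw, fun i => (hs i).2⟩
      show φ s + ψ s = 0
      rw [h1, h2, add_zero]
  neg_mem' := by
    rintro φ ⟨U, hU, hφ⟩
    exact ⟨U, hU, fun s hs => by show -φ s = 0; rw [hφ s hs, neg_zero]⟩

/-- The Alexander–Spanier cochain complex: cochains modulo locally zero cochains. -/
abbrev QC (X : Type*) [TopologicalSpace X] (n : ℕ) : Type _ := Cochain A X n ⧸ locZero A X n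

lemma d_locZero (X : Type*) [TopologicalSpace X] (n : ℕ) :
    locZero A X n ≤ (locZero A X (n + 1)).comap (d A X n) := by
  rintro φ ⟨U, hU, hφ⟩
  refine ⟨U, hU, fun s ⟨u, hu, hs⟩ => ?_⟩
  show (d A X n φ) s = 0
  have : ∀ i : Fin (n + 2), φ (s ∘ i.succAbove) = 0 :=
    fun i => hφ _ ⟨u, hu, fun j => hs _⟩
  simp only [d, AddMonoidHom.mk'_apply]
  exact Finset.sum_eq_zero fun i _ => by rw [this i, smul_zero]

/-- The induced differential on the Alexander–Spanier complex. -/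
def dQ (X : Type*) [TopologicalSpace X] (n : ℕ) : QC A X n →+ QC A X (n + 1) :=
  QuotientAddGroup.map _ _ (d A X n) (d_locZero A X n)

/-- Cocycles. -/
def cocycles (X : Type*) [TopologicalSpace X] (n : ℕ) : AddSubgroup (QC A X n) :=
  (dQ A X n).ker

/-- Coboundaries (the trivial subgroup in degree `0`). -/
def cobounds (X : Type*) [TopologicalSpace X] (n : ℕ) : AddSubgroup (QC A X n) :=
  match n with
  | 0 => ⊥
  | (m + 1) => (dQ A X m).range

/-- Alexander–Spanier cohomology of `X` with coefficients in `A`; for paracompact Hausdorff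
(e.g. metric) spaces this is naturally isomorphic to Čech cohomology. -/
def ASH (n : ℕ) (X : Type*) [TopologicalSpace X] : Type _ :=
  ↥(cocycles A X n) ⧸ ((cobounds A X n).comap (cocycles A X n).subtype)

instance (n : ℕ) (X : Type*) [TopologicalSpace X] : AddCommGroup (ASH A n X) :=
  inferInstanceAs (AddCommGroup
    (↥(cocycles A X n) ⧸ ((cobounds A X n).comap (cocycles A X n).subtype)))

end AS

namespace AS

variable (A : Type*) [AddCommGroup A]

/-- Pullback of Alexander–Spanier cochains along a map. -/
def pull {X Y : Type*} (f : X → Y) (n : ℕ) : Cochain A Y n →+ Cochain A X n :=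
  AddMonoidHom.mk' (fun φ s => φ (f ∘ s)) (fun φ ψ => rfl)

lemma pull_d {X Y : Type*} (f : X → Y) (n : ℕ) (φ : Cochain A Y n) :
    pull A f (n + 1) (d A Y n φ) = d A X n (pull A f n φ) := rfl

lemma pull_locZero {X Y : Type*} [TopologicalSpace X] [TopologicalSpace Y] {f : X → Y}
    (hf : Continuous f) (n : ℕ) :
    locZero A Y n ≤ (locZero A X n).comap (pull A f n) := by
  rintro φ ⟨U, ⟨hUo, hUc⟩, hφ⟩
  refine ⟨(f ⁻¹' ·) '' U, ⟨?_, ?_⟩, ?_⟩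
  · rintro _ ⟨u, hu, rfl⟩
    exact (hUo u hu).preimage hf
  · apply eq_univ_of_forall
    intro x
    have : f x ∈ ⋃₀ U := hUc ▸ mem_univ _
    obtain ⟨u, hu, hx⟩ := this
    exact ⟨f ⁻¹' u, ⟨u, hu, rfl⟩, hx⟩
  · rintro s ⟨_, ⟨u, hu, rfl⟩, hs⟩
    exact hφ _ ⟨u, hu, fun i => hs i⟩

/-- Pullback on the Alexander–Spanier complex. -/
def pullQ {X Y : Type*} [TopologicalSpace X] [TopologicalSpace Y] {f : X → Y}
    (hf : Continuous f) (n : ℕ) : QC A Y n →+ QC A X n :=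
  QuotientAddGroup.map _ _ (pull A f n) (pull_locZero A hf n)

lemma pullQ_d {X Y : Type*} [TopologicalSpace X] [TopologicalSpace Y] {f : X → Y}
    (hf : Continuous f) (n : ℕ) (x : QC A Y n) :
    pullQ A hf (n + 1) (dQ A Y n x) = dQ A X n (pullQ A hf n x) := by
  refine QuotientAddGroup.induction_on x ?_
  intro φ
  simp only [pullQ, dQ, QuotientAddGroup.map_mk, pull_d]

lemma pullQ_cocycles {X Y : Type*} [TopologicalSpace X] [TopologicalSpace Y] {f : X → Y}
    (hf : Continuous f) (n : ℕ) {x : QC A Y n} (hx : x ∈ cocycles A Y n) :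
    pullQ A hf n x ∈ cocycles A X n := by
  have : dQ A Y n x = 0 := hx
  show dQ A X n (pullQ A hf n x) = 0
  rw [← pullQ_d, this, map_zero]

lemma pullQ_cobounds {X Y : Type*} [TopologicalSpace X] [TopologicalSpace Y] {f : X → Y}
    (hf : Continuous f) (n : ℕ) {x : QC A Y n} (hx : x ∈ cobounds A Y n) :
    pullQ A hf n x ∈ cobounds A X n := by
  match n with
  | 0 =>
    have : x = 0 := hx
    rw [this, map_zero]
    exact (⊥ : AddSubgroup (QC A X 0)).zero_mem
  | (m + 1) =>
    obtain ⟨y, rfl⟩ := hx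
    exact ⟨pullQ A hf m y, (pullQ_d A hf m y).symm⟩

/-- The map on cocycles induced by a continuous map. -/
def pullZ {X Y : Type*} [TopologicalSpace X] [TopologicalSpace Y] {f : X → Y}
    (hf : Continuous f) (n : ℕ) : ↥(cocycles A Y n) →+ ↥(cocycles A X n) :=
  AddMonoidHom.codRestrict ((pullQ A hf n).comp (cocycles A Y n).subtype) _
    (fun x => pullQ_cocycles A hf n x.2)

/-- The homomorphism induced on Alexander–Spanier (Čech) cohomology by a continuous map.
Note the contravariance: a map `f : X → Y` induces `ASHmap : ASH A n Y →+ ASH A n X`. -/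
def ASHmap {X Y : Type*} [TopologicalSpace X] [TopologicalSpace Y] {f : X → Y}
    (hf : Continuous f) (n : ℕ) : ASH A n Y →+ ASH A n X :=
  QuotientAddGroup.map _ _ (pullZ A hf n) (by
    rintro ⟨x, hx⟩ hmem
    have : x ∈ cobounds A Y n := hmem
    exact pullQ_cobounds A hf n this)

end AS

namespace AS

variable (A : Type*) [AddCommGroup A]

/-- Čech cohomology with compact supports: for compact `B` this is the (Alexander–Spanier =
Čech) cohomology of `B` itself, and for noncompact `B` it is that of the one-point
compactification of `B`. -/
def Hc (n : ℕ) (B : Type*) [TopologicalSpace B] : Type _ :=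
  open scoped Classical in
  if CompactSpace B then ASH A n B else ASH A n (OnePoint B)

end AS

/-- The cohomological dimension `dim_A X` of a space `X` with respect to an abelian group `A`:
the supremum of the integers `n` for which there is a locally compact subset `B ⊆ X` with
`H^n_c(B; A) ≠ 0`. -/
noncomputable def cohDim (A : Type*) [AddCommGroup A] (X : Type*) [TopologicalSpace X] : ℕ∞ :=
  sSup {e : ℕ∞ | ∃ n : ℕ, e = (n : ℕ∞) ∧
    ∃ B : Set X, LocallyCompactSpace B ∧ Nontrivial (AS.Hc A n B)}

/-! ### Essential maps and strong infinite-dimensionality -/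

/-- The boundary of the cube `I^n`. -/
def cubeBoundary (n : ℕ) : Set (Fin n → unitInterval) :=
  {x | ∃ i, x i = 0 ∨ x i = 1}

/-- A continuous map `f : X → I^n` is *essential* if there is no homotopy of pairs
`(X, f⁻¹(∂Iⁿ)) × I → (Iⁿ, ∂Iⁿ)` from `f` to a map into `∂Iⁿ`. -/
def IsEssential {X : Type*} [TopologicalSpace X] {n : ℕ} (f : X → (Fin n → unitInterval)) :
    Prop :=
  ¬ ∃ F : X × unitInterval → (Fin n → unitInterval), Continuous F ∧
      (∀ x, F (x, 0) = f x) ∧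
      (∀ x, f x ∈ cubeBoundary n → ∀ t, F (x, t) ∈ cubeBoundary n) ∧
      (∀ x, F (x, 1) ∈ cubeBoundary n)

/-- `X` is *strongly infinite-dimensional* if there is an essential map of `X` onto the
Hilbert cube, i.e. a continuous surjection `f : X → Q` whose composition with every
coordinate projection `Q → Iⁿ` is essential. -/
def StronglyInfiniteDimensional (X : Type*) [TopologicalSpace X] : Prop :=
  ∃ f : X → (ℕ → unitInterval), Continuous f ∧ Function.Surjective f ∧
    ∀ (n : ℕ) (c : Fin n → ℕ), Function.Injective c → IsEssential (fun x i => f x (c i))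

/-!
Let `F` be a uniformly dense sequence of complex functions on `I^ℕ × (S¹)^ℕ` such that `F j` does
not depend on the circle coordinates with index at least `j`, and let `Y` be the set of points `z`
at which every `F j z ^ p` points in the direction `z.2 j` (no condition where `F j z = 0`).

A circle-valued map `f` on a closed subset of `Y` extends to a complex function, which some `F j`
approximates within `1`; there `F j / f` has a continuous logarithm, and the `j`-th circle
coordinate corrected by this logarithm extends `f ^ p` to `Y`. Hence, after multiplication by `p`,
integral `1`-cocycles extend from closed subsets, and over `ℤ[1/p]` all of them do. Extension of
`1`-cocycles from closed subsets kills cohomology in degrees at least two.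

The projection of `Y` to the Hilbert cube still carries fundamental chains modulo `p`. Given a
chain that satisfies the conditions with index below `m`, choose an argument of `F m` at each
vertex and turn the `m`-th circle coordinate to `p` times this argument, filling in with prisms.
Another choice of arguments adds a multiple of `p` full turns, which vanishes modulo `p`, so the
result is again a chain. The cup product of functions that separate the opposite faces takes the
value `1` on it, so these functions attain `1/2` simultaneously on `Y`. This makes the projection
essential, and it also produces a nonzero class in degree one.
-/

/-! ### Mod `p` chains on finite lists -/

namespace ListCochain

variable {X Y R : Type*} [CommRing R]

/-- Evaluation of a cochain on the augmented, ordered simplicial boundary of a list. -/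
def bd : List X → ((List X → R) →ₗ[R] R)
  | [] => 0
  | x :: t => LinearMap.proj t - (bd t).comp (LinearMap.funLeft R R (List.cons x))

/-- The simplicial coboundary operator on cochains defined on finite lists of points; the empty
list is the augmentation vertex. -/
def δ : (List X → R) →ₗ[R] (List X → R) := LinearMap.pi bd

/-- Evaluation of a cochain on the prism over a list spanned by two maps. -/
def prism (f g : X → Y) : List X → ((List Y → R) →ₗ[R] R)
  | [] => 0
  | x :: t => LinearMap.proj (f x :: g x :: t.map g) -
      (prism f g t).comp (LinearMap.funLeft R R (List.cons (f x)))

/-- The prism operator: the cochain homotopy between the pullbacks along two maps. -/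
def prismOp (f g : X → Y) : (List Y → R) →ₗ[R] (List X → R) := LinearMap.pi (prism f g)

/-- Pullback of list cochains along a map. -/
def pullback (f : X → Y) : (List Y → R) →ₗ[R] (List X → R) := LinearMap.funLeft R R (List.map f)

@[simp] lemma pullback_apply (f : X → Y) (α : List Y → R) (t : List X) :
    pullback f α t = α (t.map f) := rfl

@[simp] lemma δ_nil (α : List X → R) : δ α [] = 0 := rfl

lemma δ_cons (α : List X → R) (x : X) (t : List X) :
    δ α (x :: t) = α t - δ (fun s => α (x :: s)) t := rfl

lemma prismOp_nil (f g : X → Y) (α : List Y → R) : prismOp f g α [] = 0 := rfl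

lemma prismOp_cons (f g : X → Y) (α : List Y → R) (x : X) (t : List X) :
    prismOp f g α (x :: t) =
      α (f x :: g x :: t.map g) - prismOp f g (fun s => α (f x :: s)) t := rfl

lemma δ_δ (α : List X → R) : δ (δ α) = 0 := by
  funext t
  induction t generalizing α with
  | nil => rfl
  | cons x t ih =>
    have h : (fun s => δ α (x :: s)) = α - δ (fun s => α (x :: s)) := rfl
    rw [δ_cons, h, map_sub, Pi.sub_apply, ih]
    simp

lemma δ_pullback (f : X → Y) (α : List Y → R) : δ (pullback f α) = pullback f (δ α) := by
  funext t
  induction t generalizing α with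
  | nil => rfl
  | cons x t ih =>
    have := ih (fun s => α (f x :: s))
    rw [pullback_apply, List.map_cons, δ_cons, δ_cons]
    exact congrArg (α (t.map f) - ·) this

lemma δ_prismOp (f g : X → Y) (α : List Y → R) :
    δ (prismOp f g α) + prismOp f g (δ α) = pullback g α - pullback f α := by
  funext t
  induction t generalizing α with
  | nil => simp [prismOp_nil]
  | cons x t ih =>
    have h1 : (fun s => prismOp f g α (x :: s)) =
        pullback g (fun s => α (f x :: g x :: s)) - prismOp f g (fun s => α (f x :: s)) := rfl
    have h2 : (fun s => δ α (f x :: s)) = α - δ (fun s => α (f x :: s)) := rfl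
    have h3 := ih (fun s => α (f x :: s))
    simp only [Pi.add_apply, Pi.sub_apply, pullback_apply] at h3
    simp only [Pi.add_apply, Pi.sub_apply, pullback_apply, List.map_cons]
    rw [δ_cons, prismOp_cons, h1, h2, map_sub, map_sub, δ_pullback, δ_cons, δ_cons]
    simp only [Pi.sub_apply, pullback_apply]
    linear_combination h3

/-- The lists whose entries are images under `f` or `g` of entries of `t`; they contain all the
simplices of the prism over `t`. -/
def prismLists (f g : X → Y) (t : List X) : Set (List Y) :=
  {l | ∀ y ∈ l, ∃ x ∈ t, y = f x ∨ y = g x}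

lemma prismLists_mono {f g : X → Y} {t t' : List X} (h : t ⊆ t') :
    prismLists f g t ⊆ prismLists f g t' := fun _ hl y hy =>
  (hl y hy).imp fun _ hx => ⟨h hx.1, hx.2⟩

lemma map_mem_prismLists (f g : X → Y) (t : List X) : t.map f ∈ prismLists f g t := by
  simpa [prismLists] using fun x hx => ⟨x, hx, Or.inl rfl⟩

lemma forall_mem_of_mem_prismLists {f g : X → Y} {t : List X} {l : List Y} {C : Set X} {D : Set Y}
    (hl : l ∈ prismLists f g t) (ht : ∀ x ∈ t, x ∈ C) (hf : MapsTo f C D) (hg : MapsTo g C D) :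
    ∀ y ∈ l, y ∈ D := by
  intro y hy
  obtain ⟨x, hx, rfl | rfl⟩ := hl y hy
  exacts [hf (ht x hx), hg (ht x hx)]

lemma prismOp_eq_zero {f g : X → Y} {α : List Y → R} {t : List X}
    (h : ∀ l ∈ prismLists f g t, α l = 0) : prismOp f g α t = 0 := by
  induction t generalizing α with
  | nil => rfl
  | cons x t ih =>
    rw [prismOp_cons, h, ih, sub_zero]
    · intro l hl
      refine h _ (List.forall_mem_cons.2 ⟨⟨x, by simp, Or.inl rfl⟩, ?_⟩)
      exact prismLists_mono (List.subset_cons_self x t) hl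
    · simpa [prismLists] using fun z hz => Or.inr ⟨z, hz, Or.inr rfl⟩

/-- The sum of the first `n` prism operators of a sequence of maps. -/
def prismSum (f : ℕ → X → Y) (n : ℕ) : (List Y → R) →ₗ[R] (List X → R) :=
  ∑ i ∈ Finset.range n, prismOp (f i) (f (i + 1))

lemma prismSum_apply (f : ℕ → X → Y) (n : ℕ) (α : List Y → R) (t : List X) :
    prismSum f n α t = ∑ i ∈ Finset.range n, prismOp (f i) (f (i + 1)) α t := by
  simp [prismSum]

lemma prismSum_nil (f : ℕ → X → Y) (n : ℕ) (α : List Y → R) : prismSum f n α [] = 0 := by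
  simp [prismSum_apply, prismOp_nil]

lemma δ_prismSum (f : ℕ → X → Y) (n : ℕ) (α : List Y → R) :
    δ (prismSum f n α) + prismSum f n (δ α) = pullback (f n) α - pullback (f 0) α := by
  induction n with
  | zero => simp [prismSum]
  | succ n ih =>
    have h := δ_prismOp (f n) (f (n + 1)) α
    have e : ∀ β : List Y → R, prismSum f (n + 1) β =
        prismSum f n β + prismOp (f n) (f (n + 1)) β := fun β => by
      simp [prismSum, Finset.sum_range_succ]
    rw [e, e, map_add]
    linear_combination (exp := 1) ih + h

/-- The operator summing, over a list with head `x`, the first `k x` prisms. -/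
def headPrism (f : ℕ → X → Y) (k : X → ℕ) : (List Y → R) →ₗ[R] (List X → R) :=
  LinearMap.pi fun t => match t with
    | [] => 0
    | x :: t => (LinearMap.proj (x :: t)).comp (prismSum f (k x))

/-- The cochain map which sends a list with head `x` to its image under `f (k x)`, corrected by
the prisms between `f (k x)` and `f (k y)` on the face with head `y`. -/
def spread (f : ℕ → X → Y) (k : X → ℕ) : (List Y → R) →ₗ[R] (List X → R) :=
  pullback (f 0) + δ.comp (headPrism f k) + (headPrism f k).comp δ

lemma headPrism_cons (f : ℕ → X → Y) (k : X → ℕ) (α : List Y → R) (x : X) (t : List X) :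
    headPrism f k α (x :: t) = prismSum f (k x) α (x :: t) := rfl

lemma spread_apply (f : ℕ → X → Y) (k : X → ℕ) (α : List Y → R) :
    spread f k α = pullback (f 0) α + δ (headPrism f k α) + headPrism f k (δ α) := rfl

lemma δ_spread (f : ℕ → X → Y) (k : X → ℕ) (α : List Y → R) :
    δ (spread f k α) = spread f k (δ α) := by
  simp [spread_apply, δ_δ, δ_pullback]

lemma spread_nil (f : ℕ → X → Y) (k : X → ℕ) (α : List Y → R) :
    spread f k α [] = α [] := by
  simp only [spread_apply, Pi.add_apply, δ_nil, pullback_apply, List.map_nil, add_zero]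
  exact add_zero _

lemma spread_cons (f : ℕ → X → Y) (k : X → ℕ) (α : List Y → R) (x : X) (t : List X) :
    spread f k α (x :: t) = α ((x :: t).map (f (k x))) +
      (headPrism f k α t - prismSum f (k x) α t) := by
  have h := congrFun (δ_prismSum f (k x) α) (x :: t)
  have e : (fun s => headPrism f k α (x :: s)) = fun s => prismSum f (k x) α (x :: s) := rfl
  simp only [spread_apply, Pi.add_apply]
  rw [headPrism_cons, δ_cons, e]
  simp only [Pi.add_apply, Pi.sub_apply] at h
  rw [δ_cons] at h
  simp only [pullback_apply] at h ⊢
  linear_combination h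

/-- The augmentation cocycle: `1` on singletons and `0` on all other lists. -/
def one : List X → R
  | [_] => 1
  | _ => 0

lemma one_map (f : X → Y) (t : List X) : (one (t.map f) : R) = one t := by
  rcases t with _ | ⟨x, _ | ⟨y, t⟩⟩ <;> rfl

lemma prismOp_one (f g : X → Y) : prismOp f g (one : List Y → R) = 0 := by
  funext t
  have h0 : ∀ t : List X, prismOp f g (fun _ : List Y => (0 : R)) t = 0 :=
    fun t => prismOp_eq_zero fun _ _ => rfl
  rcases t with _ | ⟨x, t⟩
  · rfl
  · rw [prismOp_cons]
    rcases t with _ | ⟨y, t⟩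
    · simp [one, prismOp_nil]
    · rw [prismOp_cons]
      simp [one, h0]

lemma spread_one (f : ℕ → X → Y) (k : X → ℕ) : spread f k (one : List Y → R) = one := by
  have h : ∀ n t, prismSum f n (one : List Y → R) t = 0 := fun n t => by
    simp [prismSum_apply, prismOp_one]
  funext t
  rcases t with _ | ⟨x, t⟩
  · exact spread_nil f k one
  · rw [spread_cons, h, one_map]
    rcases t with _ | ⟨y, t⟩
    · exact (congrArg _ (sub_zero _)).trans (add_zero _)
    · simp [headPrism_cons, h]

/-- The cup product `ds₁ ∪ ⋯ ∪ dsₙ` of the coboundaries of a list of functions. -/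
def cup : List (X → R) → List X → R
  | [], t => one t
  | s :: S, x :: y :: t => (s y - s x) * cup S (y :: t)
  | _, _ => 0

/-- The cochain `s · (ds₁ ∪ ⋯ ∪ dsₙ)`, a primitive of `ds ∪ ds₁ ∪ ⋯ ∪ dsₙ`. -/
def cupPre (s : X → R) (S : List (X → R)) : List X → R
  | [] => 0
  | x :: t => s x * cup S (x :: t)

lemma cup_nil (S : List (X → R)) : cup S [] = 0 := by
  cases S <;> rfl

lemma cup_cons_of_δ_cup (s : X → R) (S : List (X → R)) (h : δ (cup S) = 0) :
    cup (s :: S) = δ (cupPre s S) := by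
  funext t
  rcases t with _ | ⟨x, t⟩
  · rfl
  · have e : (fun r => cupPre s S (x :: r)) = s x • fun r => cup S (x :: r) := rfl
    have h' := congrFun h (x :: t)
    rw [δ_cons] at h'
    rw [δ_cons, e, map_smul, Pi.smul_apply, smul_eq_mul]
    rcases t with _ | ⟨y, t⟩
    · simp [cup, cupPre]
    · simp only [cup, cupPre, Pi.zero_apply] at h' ⊢
      linear_combination -(s x * h')

lemma δ_cup (S : List (X → R)) : δ (cup S) = 0 := by
  induction S with
  | nil =>
    funext t
    rcases t with _ | ⟨x, _ | ⟨y, _ | ⟨z, t⟩⟩⟩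
    · rfl
    · simp [cup, δ_cons, one]
    · simp [cup, δ_cons, one]
    · have h0 : (fun _ : List X => (0 : R)) = 0 := rfl
      simp [cup, δ_cons, one, h0]
  | cons s S ih => rw [cup_cons_of_δ_cup s S ih, δ_δ]

lemma cup_cons (s : X → R) (S : List (X → R)) : cup (s :: S) = δ (cupPre s S) :=
  cup_cons_of_δ_cup s S (δ_cup S)

lemma cup_eq_zero_of_constant {S : List (X → R)} {s : X → R} {t : List X} (hs : s ∈ S)
    (h : ∀ y ∈ t, ∀ z ∈ t, s y = s z) : cup S t = 0 := by
  induction S generalizing t with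
  | nil => exact absurd hs List.not_mem_nil
  | cons s' S ih =>
    rcases t with _ | ⟨x, _ | ⟨y, t⟩⟩
    · rfl
    · rfl
    · rw [cup]
      rcases List.mem_cons.1 hs with rfl | hs
      · rw [h y (by simp) x (by simp), sub_self, zero_mul]
      · rw [ih hs fun y hy z hz => h y (List.mem_cons_of_mem _ hy) z (List.mem_cons_of_mem _ hz),
          mul_zero]

lemma cupPre_eq_zero_of_constant {S : List (X → R)} {s s' : X → R} {t : List X} (hs : s' ∈ S)
    (h : ∀ y ∈ t, ∀ z ∈ t, s' y = s' z) : cupPre s S t = 0 := by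
  rcases t with _ | ⟨x, t⟩
  · rfl
  · rw [cupPre, cup_eq_zero_of_constant hs h, mul_zero]

lemma cupPre_of_forall_eq_zero {S : List (X → R)} {s : X → R} {t : List X}
    (h : ∀ x ∈ t, s x = 0) : cupPre s S t = 0 := by
  rcases t with _ | ⟨x, t⟩
  · rfl
  · rw [cupPre, h x (by simp), zero_mul]

lemma cupPre_of_forall_eq_one {S : List (X → R)} {s : X → R} {t : List X}
    (h : ∀ x ∈ t, s x = 1) : cupPre s S t = cup S t := by
  rcases t with _ | ⟨x, t⟩
  · rw [cup_nil]; rfl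
  · rw [cupPre, h x (by simp), one_mul]

/-- The cochain `α` vanishes on the lists of `good` with entries in `C`. -/
def VanishesOn (good : Set (List X)) (C : Set X) (α : List X → R) : Prop :=
  ∀ t ∈ good, (∀ x ∈ t, x ∈ C) → α t = 0

lemma VanishesOn.prismOp_eq_zero {good : Set (List X)} {C : Set X} {α : List X → R}
    (hα : VanishesOn good C α) {f g : X → X} (hf : MapsTo f C C) (hg : MapsTo g C C) {t : List X}
    (ht : ∀ x ∈ t, x ∈ C) (hgood : prismLists f g t ⊆ good) : prismOp f g α t = 0 :=
  ListCochain.prismOp_eq_zero fun l hl =>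
    hα l (hgood hl) (forall_mem_of_mem_prismLists hl ht hf hg)

lemma VanishesOn.prismSum {good good' : Set (List X)} {C : Set X} {α : List X → R}
    (hα : VanishesOn good' C α) {f : ℕ → X → X} (hf : ∀ e, MapsTo (f e) C C) (N : ℕ)
    (hgood : ∀ t ∈ good, ∀ e, prismLists (f e) (f (e + 1)) t ⊆ good') :
    VanishesOn good C (prismSum f N α) := by
  intro t ht htC
  rw [prismSum_apply]
  exact Finset.sum_eq_zero fun e _ =>
    hα.prismOp_eq_zero (hf e) (hf (e + 1)) htC (hgood t ht e)

/-- `L` is evaluation on a relative fundamental chain, made of lists of `good` with entries in `C`,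
for the cube whose pairs of opposite faces are listed. The chain itself is never needed: the
inductive clause says that its boundary is, up to lists contained in the faces `P.1` and in the
later pairs of faces, such a chain for the face `P.2`. -/
def IsCubeChain (good : Set (List X)) :
    List (Set X × Set X) → Set X → ((List X → R) →ₗ[R] R) → Prop
  | [], C, L => (∀ α, VanishesOn good C α → L α = 0) ∧
      (∀ α : List X → R, α [] = 0 → L (δ α) = 0) ∧ L one = 1
  | P :: ps, C, L => (∀ α, VanishesOn good C α → L α = 0) ∧
      ∃ L', IsCubeChain good ps (C ∩ P.2) L' ∧ ∀ α, VanishesOn good (C ∩ P.1) α →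
        (∀ Q ∈ ps, VanishesOn good (C ∩ Q.1) α ∧ VanishesOn good (C ∩ Q.2) α) → L (δ α) = L' α

namespace IsCubeChain

variable {good good' : Set (List X)} {ps : List (Set X × Set X)} {C : Set X}
  {L : (List X → R) →ₗ[R] R}

lemma eq_zero (h : IsCubeChain good ps C L) {α : List X → R} (hα : VanishesOn good C α) :
    L α = 0 := by
  cases ps <;> exact h.1 α hα

lemma apply_congr (h : IsCubeChain good ps C L) {α β : List X → R}
    (hαβ : ∀ t ∈ good, (∀ x ∈ t, x ∈ C) → α t = β t) : L α = L β := by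
  rw [← sub_eq_zero, ← map_sub]
  exact h.eq_zero fun t ht htC => sub_eq_zero.2 (hαβ t ht htC)

lemma apply_δ_eq_zero (h : IsCubeChain good ps C L) {α : List X → R} (h0 : α [] = 0)
    (hα : ∀ Q ∈ ps, VanishesOn good (C ∩ Q.1) α ∧ VanishesOn good (C ∩ Q.2) α) :
    L (δ α) = 0 := by
  cases ps with
  | nil => exact h.2.1 α h0
  | cons P ps =>
    obtain ⟨-, L', hL', hs⟩ := h
    rw [hs α (hα P (by simp)).1 fun Q hQ => hα Q (List.mem_cons_of_mem _ hQ)]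
    exact hL'.eq_zero (hα P (by simp)).2

lemma apply_cup {ι : Type*} {idx : List ι} {P : ι → Set X × Set X} {s : ι → X → R}
    (h : IsCubeChain good (idx.map P) C L)
    (hs₀ : ∀ i, ∀ z ∈ (P i).1, s i z = 0) (hs₁ : ∀ i, ∀ z ∈ (P i).2, s i z = 1) :
    L (cup (idx.map s)) = 1 := by
  induction idx generalizing C L with
  | nil => exact h.2.2
  | cons i idx ih =>
    obtain ⟨-, L', hL', hst⟩ := h
    have hL'cup : L' (cupPre (s i) (idx.map s)) = L' (cup (idx.map s)) :=
      hL'.apply_congr fun t _ ht => cupPre_of_forall_eq_one fun x hx => hs₁ i x (ht x hx).2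
    rw [List.map_cons, cup_cons, hst, hL'cup, ih hL']
    · exact fun t _ ht => cupPre_of_forall_eq_zero fun x hx => hs₀ i x (ht x hx).2
    · refine List.forall_mem_map.2 fun j hj => ⟨fun t _ ht => ?_, fun t _ ht => ?_⟩
      · exact cupPre_eq_zero_of_constant (List.mem_map_of_mem hj) fun y hy z hz =>
          (hs₀ j y (ht y hy).2).trans (hs₀ j z (ht z hz).2).symm
      · exact cupPre_eq_zero_of_constant (List.mem_map_of_mem hj) fun y hy z hz =>
          (hs₁ j y (ht y hy).2).trans (hs₁ j z (ht z hz).2).symm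

lemma exists_mem_forall_ne [Nontrivial R] {ι : Type*} {idx : List ι} {P : ι → Set X × Set X}
    {s : ι → X → R} (h : IsCubeChain good (idx.map P) C L)
    (hs₀ : ∀ i, ∀ z ∈ (P i).1, s i z = 0) (hs₁ : ∀ i, ∀ z ∈ (P i).2, s i z = 1) :
    ∃ t ∈ good, t ≠ [] ∧ ∀ i ∈ idx, ∃ y ∈ t, ∃ z ∈ t, s i y ≠ s i z := by
  by_contra! hconst
  refine one_ne_zero ((h.apply_cup hs₀ hs₁).symm.trans (h.eq_zero fun t ht _ => ?_))
  rcases eq_or_ne t [] with rfl | hne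
  · exact cup_nil _
  · obtain ⟨i, hi, hconst⟩ := hconst t ht hne
    exact cup_eq_zero_of_constant (List.mem_map_of_mem hi) hconst

lemma comp {κ : Type*} (h : IsCubeChain good ps C L) {f : κ → X → X} {E : Set X}
    (θ : (List X → R) →ₗ[R] (List X → R)) (hδ : ∀ α, δ (θ α) = θ (δ α))
    (hnil : ∀ α : List X → R, θ α [] = α []) (hone : θ one = one)
    (hθ : ∀ D, (∀ e, MapsTo (f e) D D) → ∀ α, VanishesOn good' (D ∩ E) α →
      VanishesOn good D (θ α))
    (hC : ∀ e, MapsTo (f e) C C)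
    (hps : ∀ Q ∈ ps, ∀ e, MapsTo (f e) Q.1 Q.1 ∧ MapsTo (f e) Q.2 Q.2) :
    IsCubeChain good' ps (C ∩ E) (L.comp θ) := by
  induction ps generalizing C L with
  | nil =>
    refine ⟨fun α hα => h.eq_zero (hθ C hC α hα), fun α hα => ?_, ?_⟩
    · rw [LinearMap.comp_apply, ← hδ]
      exact h.2.1 _ ((hnil α).trans hα)
    · rw [LinearMap.comp_apply, hone]
      exact h.2.2
  | cons P ps ih =>
    refine ⟨fun α hα => h.eq_zero (hθ C hC α hα), ?_⟩
    obtain ⟨-, L', hL', hst⟩ := h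
    obtain ⟨hP, hps⟩ := List.forall_mem_cons.1 hps
    have hθ' : ∀ D, (∀ e, MapsTo (f e) D D) → ∀ α, VanishesOn good' (C ∩ E ∩ D) α →
        VanishesOn good (C ∩ D) (θ α) := fun D hD α hα =>
      hθ _ (fun e => (hC e).inter_inter (hD e)) α (inter_right_comm C E D ▸ hα)
    refine ⟨L'.comp θ, ?_, fun α hα hαs => ?_⟩
    · rw [inter_right_comm]
      exact ih hL' (fun e => (hC e).inter_inter (hP e).2) hps
    · rw [LinearMap.comp_apply, ← hδ]
      exact hst _ (hθ' _ (fun e => (hP e).1) _ hα) fun Q hQ =>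
        ⟨hθ' _ (fun e => (hps Q hQ e).1) _ (hαs Q hQ).1,
          hθ' _ (fun e => (hps Q hQ e).2) _ (hαs Q hQ).2⟩

lemma cons (h : IsCubeChain good ps univ L) (f : ℕ → X → X) (N : ℕ) {A B : Set X}
    (hA : ∀ x, f 0 x ∈ A) (hB : ∀ x, f N x ∈ B)
    (hgood : ∀ t ∈ good, ∀ e, prismLists (f e) (f (e + 1)) t ⊆ good')
    (hps : ∀ Q ∈ ps, ∀ e, MapsTo (f e) Q.1 Q.1 ∧ MapsTo (f e) Q.2 Q.2) :
    IsCubeChain good' ((A, B) :: ps) univ (L.comp (prismSum f N)) := by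
  have map_mem : ∀ t ∈ good, ∀ e, t.map (f e) ∈ good' := fun t ht e =>
    hgood t ht e (map_mem_prismLists _ _ t)
  refine ⟨fun α hα => h.eq_zero (hα.prismSum (fun e => mapsTo_univ _ _) N hgood),
    L.comp (pullback (f N)), ?_, fun α hα hαs => ?_⟩
  · refine h.comp (pullback (f N)) (δ_pullback (f N)) (fun α => rfl)
      (funext fun t => one_map (f N) t) (fun D hD α hα t ht htD => ?_)
      (fun e => mapsTo_univ (f e) _) hps
    exact hα _ (map_mem t ht N) (List.forall_mem_map.2 fun x hx => ⟨hD N (htD x hx), hB x⟩)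
  · have hδ : prismSum f N (δ α) = pullback (f N) α - pullback (f 0) α - δ (prismSum f N α) := by
      rw [← δ_prismSum f N α, add_sub_cancel_left]
    have hpull : L (pullback (f 0) α) = 0 := h.eq_zero fun t ht _ =>
      hα _ (map_mem t ht 0) (List.forall_mem_map.2 fun x _ => ⟨mem_univ _, hA x⟩)
    have hside : L (δ (prismSum f N α)) = 0 := by
      refine h.apply_δ_eq_zero (prismSum_nil f N α) fun Q hQ => ?_
      simp only [univ_inter] at hαs ⊢
      exact ⟨(hαs Q hQ).1.prismSum (fun e => (hps Q hQ e).1) N hgood,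
        (hαs Q hQ).2.prismSum (fun e => (hps Q hQ e).2) N hgood⟩
    rw [LinearMap.comp_apply, hδ, map_sub, map_sub, hpull, hside, sub_zero, sub_zero]
    rfl

lemma spread (h : IsCubeChain good ps univ L) {f : ℕ → X → X} {k : X → ℕ} {N : ℕ}
    (hper : Periodic f N)
    (hps : ∀ Q ∈ ps, ∀ e, MapsTo (f e) Q.1 Q.1 ∧ MapsTo (f e) Q.2 Q.2) (hnil : [] ∈ good')
    (hhead : ∀ x t, x :: t ∈ good → (x :: t).map (f (k x)) ∈ good')
    (hsum : ∀ x y t, x :: y :: t ∈ good → ∀ w : ℕ → R, Periodic w N →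
      (∀ e, prismLists (f e) (f (e + 1)) (x :: y :: t) ⊆ good' → w e = 0) →
      ∑ e ∈ Finset.range (k x), w e = ∑ e ∈ Finset.range (k y), w e) :
    IsCubeChain good' ps univ (L.comp (ListCochain.spread f k)) := by
  rw [← univ_inter univ]
  refine h.comp (ListCochain.spread f k) (δ_spread f k) (spread_nil f k) (spread_one f k)
    (fun D hD α hα => ?_) (fun e => mapsTo_univ (f e) _) hps
  rw [inter_univ] at hα
  rintro (_ | ⟨x, t⟩) ht htD
  · rw [spread_nil]
    exact hα [] hnil (by simp)
  rw [spread_cons, hα _ (hhead x t ht) (List.forall_mem_map.2 fun y hy => hD _ (htD y hy)),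
    zero_add, sub_eq_zero]
  rcases t with _ | ⟨y, t⟩
  · exact (prismSum_nil f (k x) α).symm
  rw [headPrism_cons, prismSum_apply, prismSum_apply]
  refine (hsum x y t ht _ (fun e => ?_) fun e he => ?_).symm
  · rw [hper, add_right_comm, hper]
  · exact hα.prismOp_eq_zero (hD e) (hD (e + 1)) (fun z hz => htD z (List.mem_cons_of_mem _ hz))
      ((prismLists_mono (List.subset_cons_self _ _)).trans he)

end IsCubeChain

end ListCochain

section

open scoped FourierTransform

lemma fourierChar_intCast (n : ℤ) : 𝐞 n = 1 := Circle.exp_two_pi_mul_int n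

lemma fourierChar_eq_fourierChar_iff {x y : ℝ} : 𝐞 x = 𝐞 y ↔ ∃ n : ℤ, x = y + n := by
  rw [Real.fourierChar_apply', Real.fourierChar_apply', Circle.exp_eq_exp]
  have hpi : 2 * Real.pi ≠ 0 := by positivity
  refine exists_congr fun n => ⟨fun h => mul_left_cancel₀ hpi ?_, fun h => ?_⟩
  · rw [h]; ring
  · rw [h]; ring

lemma fourierChar_surjective : Surjective 𝐞 := fun u => by
  obtain ⟨t, rfl⟩ := Circle.exp_surjective u
  refine ⟨t / (2 * Real.pi), ?_⟩
  rw [Real.fourierChar_apply', mul_div_cancel₀ t (by positivity)]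

lemma dist_circle (u v : Circle) : dist u v = ‖(u : ℂ) - v‖ := dist_eq_norm (u : ℂ) v

lemma dist_fourierChar (x y : ℝ) :
    dist (𝐞 x) (𝐞 y) = 2 * |Real.sin (Real.pi * (x - y))| := by
  have h : (𝐞 x : ℂ) - 𝐞 y = 𝐞 y * ((𝐞 (x - y) : ℂ) - 1) := by
    rw [mul_sub, ← Circle.coe_mul, ← AddChar.map_add_eq_mul, add_sub_cancel, mul_one]
  have h' : 2 * Real.pi * (x - y) / 2 = Real.pi * (x - y) := by ring
  rw [dist_circle, h, norm_mul, Circle.norm_coe, one_mul,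
    Real.fourierChar_apply, mul_comm, Complex.norm_exp_I_mul_ofReal_sub_one, norm_mul,
    Real.norm_eq_abs, Real.norm_eq_abs, abs_two, h']

lemma dist_fourierChar_le (x y : ℝ) : dist (𝐞 x) (𝐞 y) ≤ 2 * Real.pi * |x - y| := by
  have h := Real.abs_sin_le_abs (x := Real.pi * (x - y))
  rw [abs_mul, abs_of_pos Real.pi_pos] at h
  rw [dist_fourierChar]
  linarith

lemma four_mul_abs_sub_le_dist_fourierChar {x y : ℝ} (h : |x - y| ≤ 1 / 2) :
    4 * |x - y| ≤ dist (𝐞 x) (𝐞 y) := by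
  rw [dist_fourierChar, ← abs_abs (Real.sin _), Real.abs_sin_eq_sin_abs_of_abs_le_pi, abs_mul,
    abs_of_pos Real.pi_pos]
  · have hsin := Real.mul_le_sin (x := Real.pi * |x - y|) (by positivity)
      (by nlinarith [Real.pi_pos])
    have hcancel : 2 / Real.pi * (Real.pi * |x - y|) = 2 * |x - y| := by field_simp
    linarith [le_abs_self (Real.sin (Real.pi * |x - y|))]
  · rw [abs_mul, abs_of_pos Real.pi_pos]
    nlinarith [Real.pi_pos]

lemma four_mul_abs_sub_round_le_dist_fourierChar (x y : ℝ) :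
    4 * |x - y - round (x - y)| ≤ dist (𝐞 x) (𝐞 y) := by
  have hy : 𝐞 (y + round (x - y)) = 𝐞 y := fourierChar_eq_fourierChar_iff.2 ⟨_, rfl⟩
  have h := four_mul_abs_sub_le_dist_fourierChar (x := x) (y := y + round (x - y))
    (by rw [← sub_sub]; exact abs_sub_round _)
  rwa [hy, ← sub_sub] at h

lemma round_sub_add_round_sub {x y z : ℝ} (hxy : dist (𝐞 x) (𝐞 y) < 1)
    (hyz : dist (𝐞 y) (𝐞 z) < 1) (hxz : dist (𝐞 x) (𝐞 z) < 1) :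
    round (x - y) + round (y - z) = round (x - z) := by
  have hxy' := four_mul_abs_sub_round_le_dist_fourierChar x y
  have hyz' := four_mul_abs_sub_round_le_dist_fourierChar y z
  have hxz' := four_mul_abs_sub_round_le_dist_fourierChar x z
  have h : |((round (x - y) + round (y - z) - round (x - z) : ℤ) : ℝ)| < 1 := by
    push_cast
    rw [abs_lt]
    constructor <;> linarith [abs_lt.1 (show |x - y - round (x - y)| < 1 / 4 by linarith),
      abs_lt.1 (show |y - z - round (y - z)| < 1 / 4 by linarith),
      abs_lt.1 (show |x - z - round (x - z)| < 1 / 4 by linarith)]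
  rw [← Int.cast_abs] at h
  exact sub_eq_zero.1 (Int.abs_lt_one_iff.1 (by exact_mod_cast h))

lemma exists_eq_norm_mul_fourierChar (w : ℂ) : ∃ a : ℝ, 0 ≤ a ∧ w = ‖w‖ * 𝐞 a := by
  obtain ⟨a, ha⟩ := fourierChar_surjective (Circle.exp w.arg)
  refine ⟨Int.fract a, Int.fract_nonneg a, ?_⟩
  have h : 𝐞 (Int.fract a) = 𝐞 a :=
    fourierChar_eq_fourierChar_iff.2 ⟨-⌊a⌋, by push_cast; exact sub_eq_add_neg a ⌊a⌋⟩
  rw [h, ha, Circle.coe_exp, Complex.norm_mul_exp_arg_mul_I]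

lemma dist_circle_le_of_eq_norm_mul {w w' : ℂ} {u u' : Circle} (hw : w = ‖w‖ * u)
    (hw' : w' = ‖w'‖ * u') {r ε : ℝ} (hr : 0 < r) (hrw : r ≤ ‖w‖) (hd : dist w w' ≤ ε * r) :
    dist u u' ≤ 2 * ε := by
  have h : (‖w‖ : ℂ) * ((u : ℂ) - u') = (w - w') - ((‖w‖ - ‖w'‖ : ℝ) : ℂ) * u' := by
    push_cast
    linear_combination hw' - hw
  have hle : ‖w‖ * dist u u' ≤ ‖w - w'‖ + ‖w - w'‖ := by
    rw [dist_circle, ← norm_norm w, ← Complex.norm_real ‖w‖, ← norm_mul, h]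
    refine (norm_sub_le _ _).trans (add_le_add_right ?_ _)
    rw [norm_mul, Circle.norm_coe, mul_one, Complex.norm_real]
    exact abs_norm_sub_norm_le w w'
  rw [dist_eq_norm] at hd
  have hr' : r * dist u u' ≤ r * (2 * ε) := by
    linarith [mul_le_mul_of_nonneg_right hrw (dist_nonneg (x := u) (y := u'))]
  exact le_of_mul_le_mul_left hr' hr

end

section PeriodicSum

variable {N : ℕ}

lemma sum_range_add_mul_period {M : Type*} [AddCommMonoid M] {w : ℕ → M} (hw : Periodic w N)
    (n T : ℕ) : ∑ e ∈ Finset.range (n + T * N), w e =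
      ∑ e ∈ Finset.range n, w e + T • ∑ e ∈ Finset.range N, w e := by
  have one_period : ∀ m, ∑ e ∈ Finset.range (m + N), w e =
      ∑ e ∈ Finset.range m, w e + ∑ e ∈ Finset.range N, w e := fun m => by
    rw [add_comm m, Finset.sum_range_add, add_comm]
    exact congrArg (· + _) (Finset.sum_congr rfl fun e _ => by rw [add_comm, hw])
  induction T with
  | zero => simp
  | succ T ih => rw [Nat.succ_mul, ← add_assoc, one_period, ih, add_assoc, succ_nsmul]

lemma sum_range_add_mul_char_mul_period {p : ℕ} {w : ℕ → ZMod p} (hw : Periodic w N) (n T : ℕ) :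
    ∑ e ∈ Finset.range (n + T * p * N), w e = ∑ e ∈ Finset.range n, w e := by
  rw [sum_range_add_mul_period hw, mul_smul, nsmul_eq_mul p, CharP.cast_eq_zero, zero_mul,
    smul_zero, add_zero]

lemma sum_range_eq_of_forall_eq_zero {M : Type*} [AddCommMonoid M] {w : ℕ → M} {n m : ℕ}
    (h : n ≤ m) (hw : ∀ e, n ≤ e → e < m → w e = 0) :
    ∑ e ∈ Finset.range n, w e = ∑ e ∈ Finset.range m, w e :=
  Finset.sum_subset (by simpa using h) fun e he hn => hw e (by simpa using hn) (by simpa using he)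

lemma sum_range_floor_eq {p : ℕ} {w : ℕ → ZMod p} (hN : 0 < N) (hw : Periodic w N)
    {a b ρ : ℝ} (ha : 0 ≤ a) (hb : 0 ≤ b) {s : ℤ} (hs : 2 / N + p * |a - b - s| ≤ ρ)
    (h0 : ∀ (e : ℕ) (T : ℤ), |e / N - p * a - T| ≤ ρ → w e = 0) :
    ∑ e ∈ Finset.range ⌊p * N * a⌋₊, w e = ∑ e ∈ Finset.range ⌊p * N * b⌋₊, w e := by
  -- Adding multiples of `p * N` does not change the sums and makes `s` disappear.
  obtain ⟨T, S, hTS⟩ : ∃ T S : ℕ, (S : ℤ) = T + s := ⟨s.natAbs, (s.natAbs + s).toNat, by omega⟩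
  have hN' : (0 : ℝ) < N := by exact_mod_cast hN
  have ha₁ := Nat.floor_le (show 0 ≤ p * N * a by positivity)
  have ha₂ := Nat.lt_floor_add_one (p * N * a)
  have hb₁ := Nat.floor_le (show 0 ≤ p * N * b by positivity)
  have hb₂ := Nat.lt_floor_add_one (p * N * b)
  have hab : |p * N * a - p * N * b - p * N * s| ≤ N * ρ - 2 := by
    rw [← mul_sub, ← mul_sub, abs_mul, abs_of_nonneg (by positivity)]
    have := mul_le_mul_of_nonneg_left hs hN'.le
    rw [mul_add, mul_div_cancel₀ _ hN'.ne'] at this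
    linarith
  have hS : (S : ℝ) * p * N = T * p * N + p * N * s := by
    rw [← Int.cast_natCast S, hTS]
    push_cast
    ring
  have near : ∀ e : ℕ, |(e : ℝ) - (p * N * a + T * p * N)| ≤ N * ρ → w e = 0 := fun e he => by
    refine h0 e (T * p) (le_of_mul_le_mul_left ?_ hN')
    rw [← abs_of_pos hN', ← abs_mul, abs_of_pos hN']
    refine (congrArg abs ?_).trans_le he
    push_cast
    field_simp
    ring
  rw [abs_le] at hab
  rw [← sum_range_add_mul_char_mul_period hw _ T,
    ← sum_range_add_mul_char_mul_period hw ⌊p * N * b⌋₊ S]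
  rcases le_total (⌊p * N * a⌋₊ + T * p * N) (⌊p * N * b⌋₊ + S * p * N) with h | h
  · refine sum_range_eq_of_forall_eq_zero h fun e h₁ h₂ => near e ?_
    rify at h₁ h₂
    rw [abs_le]
    constructor <;> linarith
  · refine (sum_range_eq_of_forall_eq_zero h fun e h₁ h₂ => near e ?_).symm
    rify at h₁ h₂
    rw [abs_le]
    constructor <;> linarith

end PeriodicSum

/-! ### Lifting chains to approximate `p`-th roots -/

section ApproximateRoots

open ListCochain
open scoped Uniformity Topology FourierTransform

/-- Lists of pairwise `V`-close points of `C`: the small simplices of `C`. -/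
def smallLists {Z : Type*} (V : Set (Z × Z)) (C : Set Z) : Set (List Z) :=
  {t | (∀ z ∈ t, z ∈ C) ∧ ∀ z ∈ t, ∀ w ∈ t, (z, w) ∈ V}

lemma smallLists_mono {Z : Type*} {U V : Set (Z × Z)} (h : U ⊆ V) {C : Set Z} :
    smallLists U C ⊆ smallLists V C :=
  fun _ ht => ⟨ht.1, fun z hz w hw => h (ht.2 z hz w hw)⟩

/-- `C` carries `R`-valued fundamental chains of a cube with face pairs `ps`, supported on
arbitrarily small simplices. -/
def HasSmallCubeChains (R : Type*) [CommRing R] {Z : Type*} [UniformSpace Z]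
    (ps : List (Set Z × Set Z)) (C : Set Z) : Prop :=
  ∀ V ∈ 𝓤 Z, ∃ L : (List Z → R) →ₗ[R] R, IsCubeChain (smallLists V C) ps univ L

section Uniform

variable {T Z : Type*} [PseudoMetricSpace T] [CompactSpace T] [UniformSpace Z] [CompactSpace Z]

lemma exists_entourage_of_continuous {W : Type*} [UniformSpace W] {φ : T → Z → W}
    (hφ : Continuous (uncurry φ)) {V : Set (W × W)} (hV : V ∈ 𝓤 W) :
    ∃ U ∈ 𝓤 Z, ∃ η > 0, ∀ u v z w, (z, w) ∈ U → dist u v < η → (φ u z, φ v w) ∈ V := by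
  have h := CompactSpace.uniformContinuous_of_continuous hφ hV
  rw [Filter.mem_map, uniformity_prod_eq_comap_prod, Filter.mem_comap] at h
  obtain ⟨S, hS, hSV⟩ := h
  obtain ⟨A, hA, U, hU, hAU⟩ := Filter.mem_prod_iff.1 hS
  obtain ⟨η, hη, hηA⟩ := Metric.mem_uniformity_dist.1 hA
  exact ⟨U, hU, η, hη, fun u v z w hz hv => hSV (a := ((u, z), (v, w))) (hAU ⟨hηA hv, hz⟩)⟩

lemma exists_prismLists_subset_smallLists {φ : T → Z → Z} (hφ : Continuous (uncurry φ))
    {V : Set (Z × Z)} (hV : V ∈ 𝓤 Z) :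
    ∃ U ∈ 𝓤 Z, ∃ η > 0, ∀ u v, dist u v < η → ∀ (C D : Set Z), ∀ t ∈ smallLists U C,
      (∀ z ∈ t, φ u z ∈ D) → (∀ z ∈ t, φ v z ∈ D) →
        prismLists (φ u) (φ v) t ⊆ smallLists V D := by
  obtain ⟨U, hU, η, hη, hUV⟩ := exists_entourage_of_continuous hφ hV
  refine ⟨U, hU, η, hη, fun u v huv C D t ht hu hv l hl =>
    ⟨fun y hy => ?_, fun y hy y' hy' => ?_⟩⟩
  · obtain ⟨x, hx, rfl | rfl⟩ := hl y hy
    exacts [hu x hx, hv x hx]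
  · obtain ⟨x, hx, hxy⟩ := hl y hy
    obtain ⟨x', hx', hxy'⟩ := hl y' hy'
    have hclose := ht.2 x hx x' hx'
    rcases hxy with rfl | rfl <;> rcases hxy' with rfl | rfl <;>
      exact hUV _ _ x x' hclose (by simpa [dist_comm] using by first | exact huv | exact hη)

end Uniform

section Cube

variable {ι T : Type*}

/-- The pair of opposite faces of the cube `I^ι`, multiplied by `T`, in the direction `i`. -/
def facePair (T : Type*) (i : ι) : Set ((ι → unitInterval) × T) × Set ((ι → unitInterval) × T) :=
  ({z | z.1 i = 0}, {z | z.1 i = 1})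

lemma dist_projIcc_nat_div_succ_lt {N : ℕ} {η : ℝ} (hN : 1 / (N + 1 : ℝ) < η) (e : ℕ) :
    dist (projIcc (0 : ℝ) 1 zero_le_one (e / (N + 1)))
      (projIcc (0 : ℝ) 1 zero_le_one ((e + 1 : ℕ) / (N + 1))) < η := by
  refine lt_of_le_of_lt ?_ hN
  rw [Subtype.dist_eq, Real.dist_eq]
  refine (abs_projIcc_sub_projIcc _).trans_eq ?_
  rw [← sub_div, abs_div, abs_of_pos (Nat.cast_add_one_pos N (α := ℝ))]
  simp

lemma mapsTo_facePair_update [DecidableEq ι] {i j : ι} (hij : j ≠ i) (v : unitInterval) :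
    MapsTo (fun z : (ι → unitInterval) × T => (update z.1 i v, z.2))
        (facePair T j).1 (facePair T j).1 ∧
      MapsTo (fun z : (ι → unitInterval) × T => (update z.1 i v, z.2))
        (facePair T j).2 (facePair T j).2 := by
  simp [MapsTo, facePair, hij]

lemma hasSmallCubeChains_facePair (R : Type*) [CommRing R] [UniformSpace T] [CompactSpace T]
    [Nonempty T] {idx : List ι} (hidx : idx.Nodup) :
    HasSmallCubeChains R (idx.map (facePair T)) univ := by
  classical
  induction idx with
  | nil =>
    intro V hV
    let z₀ : (ι → unitInterval) × T := (fun _ => 0, Classical.arbitrary T)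
    refine ⟨LinearMap.proj [z₀], fun α hα => hα _ ?_ (by simp), fun α h0 => ?_, rfl⟩
    · exact ⟨fun _ _ => mem_univ _, by simpa using refl_mem_uniformity hV⟩
    · change δ α [z₀] = 0
      rw [δ_cons, h0, δ_nil, sub_zero]
  | cons i idx ih =>
    intro V hV
    obtain ⟨hi, hidx⟩ := List.nodup_cons.1 hidx
    let φ : unitInterval → (ι → unitInterval) × T → (ι → unitInterval) × T :=
      fun v z => (update z.1 i v, z.2)
    have hφ : Continuous (uncurry φ) := by
      unfold φ uncurry
      fun_prop
    obtain ⟨U, hU, η, hη, hUV⟩ := exists_prismLists_subset_smallLists hφ hV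
    obtain ⟨L, hL⟩ := ih hidx U hU
    obtain ⟨N, hN⟩ := exists_nat_one_div_lt hη
    let f : ℕ → (ι → unitInterval) × T → (ι → unitInterval) × T :=
      fun e => φ (projIcc (0 : ℝ) 1 zero_le_one (e / (N + 1)))
    refine ⟨_, hL.cons f (N + 1) (fun z => ?_) (fun z => ?_) (fun t ht e => ?_) fun Q hQ e => ?_⟩
    · change update z.1 i _ i = 0
      simp
    · have hNN : ((N + 1 : ℕ) : ℝ) / (N + 1) = 1 := by
        rw [Nat.cast_succ, div_self (Nat.cast_add_one_ne_zero N)]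
      change update z.1 i _ i = 1
      rw [update_self, hNN, projIcc_right]
      rfl
    · exact hUV _ _ (dist_projIcc_nat_div_succ_lt hN e) univ univ t ht (fun _ _ => mem_univ _)
        fun _ _ => mem_univ _
    · obtain ⟨j, hj, rfl⟩ := List.mem_map.1 hQ
      exact mapsTo_facePair_update (ne_of_mem_of_not_mem hj hi) _

end Cube

section PowDefect

variable {p : ℕ}

/-- The failure of `v` to be the direction of the `p`-th power of `w`. -/
def powDefect (p : ℕ) (w : ℂ) (v : Circle) : ℝ := ‖w ^ p - (‖w‖ : ℂ) ^ p * v‖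

@[fun_prop]
lemma continuous_powDefect {Z : Type*} [TopologicalSpace Z] {F : Z → ℂ} {g : Z → Circle}
    (hF : Continuous F) (hg : Continuous g) : Continuous fun z => powDefect p (F z) (g z) := by
  unfold powDefect
  fun_prop

lemma powDefect_le (w : ℂ) (v : Circle) : powDefect p w v ≤ 2 * ‖w‖ ^ p := by
  refine (norm_sub_le _ _).trans_eq ?_
  rw [norm_mul, Circle.norm_coe, norm_pow, norm_pow, Complex.norm_real, norm_norm]
  ring

lemma powDefect_fourierChar_add_intCast {w : ℂ} {a : ℝ} (hw : w = ‖w‖ * 𝐞 a) (T : ℤ) :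
    powDefect p w (𝐞 (p * a + T)) = 0 := by
  have h : (𝐞 (p * a + T) : Circle) = 𝐞 a ^ p := by
    rw [AddChar.map_add_eq_mul, fourierChar_intCast, mul_one, ← nsmul_eq_mul,
      AddChar.map_nsmul_eq_pow]
  rw [powDefect, norm_eq_zero, sub_eq_zero, h, Circle.coe_pow, ← mul_pow, ← hw]

variable {Z : Type*} [UniformSpace Z] [CompactSpace Z] {F : Z → ℂ}

lemma exists_entourage_powDefect_le (hF : Continuous F) {δ : ℝ} (hδ : 0 < δ) :
    ∃ U ∈ 𝓤 Z, ∃ η > 0, ∀ (u v : Circle) (x z : Z), (x, z) ∈ U → dist u v < η →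
      powDefect p (F x) u ≤ δ / 2 → powDefect p (F z) v ≤ δ := by
  have hφ : Continuous (uncurry fun (v : Circle) (z : Z) => powDefect p (F z) v) := by
    unfold uncurry
    fun_prop
  obtain ⟨U, hU, η, hη, h⟩ := exists_entourage_of_continuous hφ
    (Metric.dist_mem_uniformity (half_pos hδ))
  refine ⟨U, hU, η, hη, fun u v x z hxz huv hx => ?_⟩
  have hdist : dist (powDefect p (F x) u) (powDefect p (F z) v) < δ / 2 := h u v x z hxz huv
  rw [Real.dist_eq] at hdist
  linarith [abs_lt.1 hdist]

lemma exists_entourage_powDefect_fourierChar_le (hF : Continuous F) {δ : ℝ} (hδ : 0 < δ) :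
    ∃ U ∈ 𝓤 Z, ∃ ρ > 0, ∀ x z, (x, z) ∈ U → ∀ a, F x = ‖F x‖ * 𝐞 a → ∀ (b : ℝ) (T : ℤ),
      |b - p * a - T| ≤ ρ → powDefect p (F z) (𝐞 b) ≤ δ := by
  obtain ⟨U, hU, η, hη, h⟩ := exists_entourage_powDefect_le (p := p) hF hδ
  refine ⟨U, hU, η / (4 * Real.pi), by positivity, fun x z hxz a ha b T hb => ?_⟩
  refine h (𝐞 (p * a + T)) _ x z hxz ((dist_fourierChar_le _ _).trans_lt ?_)
    ((powDefect_fourierChar_add_intCast ha T).trans_le (half_pos hδ).le)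
  rw [abs_sub_comm, ← sub_sub]
  calc 2 * Real.pi * |b - p * a - T| ≤ 2 * Real.pi * (η / (4 * Real.pi)) := by gcongr
    _ = η / 2 := by field_simp; norm_num
    _ < η := half_lt_self hη

lemma exists_entourage_powDefect_le_of_norm_le (hp : p ≠ 0) (hF : Continuous F) {δ : ℝ}
    (hδ : 0 < δ) :
    ∃ U ∈ 𝓤 Z, ∃ r > 0, ∀ x z, (x, z) ∈ U → ‖F x‖ ≤ r → ∀ v, powDefect p (F z) v ≤ δ := by
  obtain ⟨U, hU, η, hη, h⟩ := exists_entourage_powDefect_le (p := p) hF hδ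
  refine ⟨U, hU, min 1 (δ / 4), by positivity, fun x z hxz hx v => ?_⟩
  refine h v v x z hxz (by simpa) ((powDefect_le _ _).trans ?_)
  have hpow := pow_le_of_le_one (norm_nonneg (F x)) (hx.trans (min_le_left _ _)) hp
  linarith [hx.trans (min_le_right _ _)]

lemma abs_floor_div_sub_le {N : ℕ} (hN : 0 < N) {c : ℝ} (hc : 0 ≤ c) :
    |(⌊N * c⌋₊ : ℝ) / N - c| ≤ 1 / N := by
  have hN' : (0 : ℝ) < N := by exact_mod_cast hN
  have hle := Nat.floor_le (mul_nonneg hN'.le hc)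
  have hlt := Nat.lt_floor_add_one (N * c)
  rw [div_sub' hN'.ne', abs_div, abs_of_pos hN']
  gcongr
  rw [abs_le]
  constructor <;> linarith

lemma exists_entourage_abs_sub_le (hF : Continuous F) {r σ : ℝ} (hr : 0 < r) (hσ : 0 < σ) :
    ∃ U ∈ 𝓤 Z, ∀ x y, (x, y) ∈ U → r ≤ ‖F x‖ → ∀ a b, F x = ‖F x‖ * 𝐞 a → F y = ‖F y‖ * 𝐞 b →
      ∃ s : ℤ, |a - b - s| ≤ σ := by
  refine ⟨_, CompactSpace.uniformContinuous_of_continuous hF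
    (Metric.dist_mem_uniformity (show 0 < 2 * σ * r by positivity)), ?_⟩
  intro x y hxy hx a b ha hb
  have hdist := dist_circle_le_of_eq_norm_mul ha hb hr hx hxy.le
  exact ⟨_, by linarith [four_mul_abs_sub_round_le_dist_fourierChar a b]⟩

/-- Different choices of the argument of `F` change the number of steps around the circle by
multiples of `p * N`, up to steps on which `w` vanishes. -/
lemma exists_entourage_sum_range_floor_eq (hp : 0 < p) (hF : Continuous F) {δ : ℝ} (hδ : 0 < δ) :
    ∃ U ∈ 𝓤 Z, ∀ᶠ N : ℕ in Filter.atTop, ∀ a : Z → ℝ,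
      (∀ z, 0 ≤ a z ∧ F z = ‖F z‖ * 𝐞 (a z)) →
      (∀ x z, (x, z) ∈ U → powDefect p (F z) (𝐞 (⌊p * N * a x⌋₊ / N)) ≤ δ) ∧
      ∀ x y, (x, y) ∈ U → ∀ w : ℕ → ZMod p, Periodic w N →
        (∀ e : ℕ, (∀ z, (x, z) ∈ U → powDefect p (F z) (𝐞 (e / N)) ≤ δ ∧
          powDefect p (F z) (𝐞 ((e + 1 : ℕ) / N)) ≤ δ) → w e = 0) →
        ∑ e ∈ Finset.range ⌊p * N * a x⌋₊, w e = ∑ e ∈ Finset.range ⌊p * N * a y⌋₊, w e := by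
  have hp' : (0 : ℝ) < p := by exact_mod_cast hp
  obtain ⟨U₁, hU₁, ρ, hρ, hnear⟩ :=
    exists_entourage_powDefect_fourierChar_le (p := p) hF hδ
  obtain ⟨U₂, hU₂, r, hr, hsmall⟩ := exists_entourage_powDefect_le_of_norm_le hp.ne' hF hδ
  obtain ⟨U₃, hU₃, hlarge⟩ :=
    exists_entourage_abs_sub_le hF hr (show 0 < ρ / (2 * p) by positivity)
  refine ⟨_, Filter.inter_mem (Filter.inter_mem hU₁ hU₂) hU₃, ?_⟩
  filter_upwards [Filter.eventually_gt_atTop 0,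
    (tendsto_const_div_atTop_nhds_zero_nat 3).eventually (ge_mem_nhds (half_pos hρ))]
    with N hN hNρ a ha
  have hN' : (0 : ℝ) < N := by exact_mod_cast hN
  have hstep : 3 / (N : ℝ) = 1 / N + 2 / N := by ring
  have htwo : (0 : ℝ) < 2 / N := by positivity
  refine ⟨fun x z hxz => hnear x z hxz.1.1 _ (ha x).2 _ 0 ?_, fun x y hxy w hw h0 => ?_⟩
  · have hfloor := abs_floor_div_sub_le hN (mul_nonneg hp'.le (ha x).1)
    rw [← mul_assoc, mul_comm (N : ℝ)] at hfloor
    rw [Int.cast_zero, sub_zero]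
    linarith
  · rcases le_or_gt ‖F x‖ r with hx | hx
    · have hw0 : ∀ e, w e = 0 := fun e => h0 e fun z hz =>
        ⟨hsmall x z hz.1.2 hx _, hsmall x z hz.1.2 hx _⟩
      simp [hw0]
    · obtain ⟨s, hs⟩ := hlarge x y hxy.2 hx.le _ _ (ha x).2 (ha y).2
      have hps : p * |a x - a y - s| ≤ ρ / 2 :=
        (mul_le_mul_of_nonneg_left hs hp'.le).trans_eq (by field_simp)
      refine sum_range_floor_eq (ρ := ρ - 1 / N) hN hw (ha x).1 (ha y).1 (s := s) (by linarith)
        fun e T he => h0 e fun z hz => ⟨?_, ?_⟩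
      · exact hnear x z hz.1.1 _ (ha x).2 _ T (by linarith [one_div_pos.2 hN'])
      · refine hnear x z hz.1.1 _ (ha x).2 _ T ?_
        rw [Nat.cast_succ, add_div]
        rw [abs_le] at he ⊢
        constructor <;> linarith [one_div_pos.2 hN']

end PowDefect

section Tower

/-- The product of `X` and an infinite-dimensional torus. -/
abbrev TorusProd (X : Type*) : Type _ := X × (ℕ → Circle)

variable {X : Type*} {p : ℕ} {F : ℕ → TorusProd X → ℂ}

/-- Replacing the `m`-th circle coordinate. -/
def setCircle (m : ℕ) (v : Circle) (z : TorusProd X) : TorusProd X := (z.1, update z.2 m v)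

@[simp]
lemma setCircle_fst (m : ℕ) (v : Circle) (z : TorusProd X) : (setCircle m v z).1 = z.1 := rfl

@[simp]
lemma setCircle_snd_self (m : ℕ) (v : Circle) (z : TorusProd X) :
    (setCircle m v z).2 m = v :=
  update_self ..

lemma setCircle_snd_of_ne {j m : ℕ} (h : j ≠ m) (v : Circle) (z : TorusProd X) :
    (setCircle m v z).2 j = z.2 j :=
  update_of_ne h ..

lemma continuous_setCircle [TopologicalSpace X] (m : ℕ) :
    Continuous (uncurry (setCircle (X := X) m)) := by
  unfold setCircle uncurry
  fun_prop

/-- A sequence of functions on `X × (S¹)^ℕ` is triangular if its `j`-th member depends only on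
the circle coordinates with index less than `j`. -/
def IsTriangular (F : ℕ → TorusProd X → ℂ) : Prop :=
  ∀ ⦃j m⦄, j ≤ m → ∀ v z, F j (setCircle m v z) = F j z

/-- The points whose first `m` circle coordinates are, up to `δ`, the directions of the `p`-th
powers of the values of `F`. -/
def approxRootSet (p : ℕ) (F : ℕ → TorusProd X → ℂ) (m : ℕ) (δ : ℝ) : Set (TorusProd X) :=
  {z | ∀ j < m, powDefect p (F j z) (z.2 j) ≤ δ}

@[simp]
lemma approxRootSet_zero (δ : ℝ) : approxRootSet p F 0 δ = univ := by
  simp [approxRootSet]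

lemma IsTriangular.setCircle_mem_approxRootSet_succ (hF : IsTriangular F) {m : ℕ} {δ : ℝ}
    {z : TorusProd X} (hz : z ∈ approxRootSet p F m δ) {v : Circle}
    (hv : powDefect p (F m z) v ≤ δ) : setCircle m v z ∈ approxRootSet p F (m + 1) δ := by
  intro j hj
  rcases Nat.lt_succ_iff_lt_or_eq.1 hj with hj | rfl
  · rw [hF hj.le, setCircle_snd_of_ne hj.ne]
    exact hz j hj
  · rwa [hF le_rfl, setCircle_snd_self]

variable [UniformSpace X] [CompactSpace X] {ps : List (Set (TorusProd X) × Set (TorusProd X))}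

lemma hasSmallCubeChains_approxRootSet_succ (hp : 0 < p) {m : ℕ} (hFc : Continuous (F m))
    (hF : IsTriangular F) (hps : ∀ Q ∈ ps, ∀ v,
      MapsTo (setCircle m v) Q.1 Q.1 ∧ MapsTo (setCircle m v) Q.2 Q.2) {δ : ℝ} (hδ : 0 < δ)
    (h : HasSmallCubeChains (ZMod p) ps (approxRootSet p F m δ)) :
    HasSmallCubeChains (ZMod p) ps (approxRootSet p F (m + 1) δ) := by
  intro V hV
  obtain ⟨U₁, hU₁, η, hη, hlists⟩ :=
    exists_prismLists_subset_smallLists (continuous_setCircle (X := X) m) hV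
  obtain ⟨U₂, hU₂, hsum⟩ := exists_entourage_sum_range_floor_eq hp hFc hδ
  choose a ha using fun z => exists_eq_norm_mul_fourierChar (F m z)
  obtain ⟨N, hN, hNη, hsum⟩ := ((Filter.eventually_gt_atTop 0).and
    (((tendsto_const_div_atTop_nhds_zero_nat (2 * Real.pi)).eventually (gt_mem_nhds hη)).and
      hsum)).exists
  obtain ⟨hfloor, hsum⟩ := hsum a ha
  obtain ⟨L, hL⟩ := h _ (Filter.inter_mem hU₁ hU₂)
  set f : ℕ → TorusProd X → TorusProd X := fun e => setCircle m (𝐞 (e / N))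
  have hNpos : (0 : ℝ) < N := by exact_mod_cast hN
  have hdist : ∀ e : ℕ, dist (𝐞 (e / N) : Circle) (𝐞 ((e + 1 : ℕ) / N)) < η := fun e => by
    refine (dist_fourierChar_le _ _).trans_lt ?_
    rw [← sub_div, Nat.cast_succ, sub_add_cancel_left, abs_div, abs_neg, abs_one, abs_of_pos hNpos,
      mul_one_div]
    exact hNη
  refine ⟨_, hL.spread (f := f) (k := fun z => ⌊p * N * a z⌋₊) (N := N) (fun e => ?_)
    (fun Q hQ e => hps Q hQ _) ⟨by simp, by simp⟩ (fun x t ht => ?_) fun x y t ht w hw h0 => ?_⟩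
  · simp only [f]
    have hone := fourierChar_intCast 1
    rw [Int.cast_one] at hone
    rw [Nat.cast_add, add_div, div_self hNpos.ne', AddChar.map_add_eq_mul, hone, mul_one]
  · have hD : ∀ z ∈ x :: t, f ⌊p * N * a x⌋₊ z ∈ approxRootSet p F (m + 1) δ := fun z hz =>
      hF.setCircle_mem_approxRootSet_succ (ht.1 z hz) (hfloor x z (ht.2 x (by simp) z hz).2)
    exact hlists _ _ (by simpa) _ _ _ (smallLists_mono inter_subset_left ht) hD hD
      (map_mem_prismLists _ _ _)
  · refine hsum x y (ht.2 x (by simp) y (by simp)).2 w hw fun e he => h0 e ?_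
    have hz : ∀ z ∈ x :: y :: t, (x, z) ∈ U₂ := fun z hz => (ht.2 x (by simp) z hz).2
    exact hlists _ _ (hdist e) _ _ _ (smallLists_mono inter_subset_left ht)
      (fun z h => hF.setCircle_mem_approxRootSet_succ (ht.1 z h) (he z (hz z h)).1)
      fun z h => hF.setCircle_mem_approxRootSet_succ (ht.1 z h) (he z (hz z h)).2

lemma hasSmallCubeChains_approxRootSet (hp : 0 < p) (hFc : ∀ j, Continuous (F j))
    (hF : IsTriangular F) (hps : ∀ Q ∈ ps, ∀ m v,
      MapsTo (setCircle m v) Q.1 Q.1 ∧ MapsTo (setCircle m v) Q.2 Q.2)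
    (h : HasSmallCubeChains (ZMod p) ps univ) {δ : ℝ} (hδ : 0 < δ) (m : ℕ) :
    HasSmallCubeChains (ZMod p) ps (approxRootSet p F m δ) := by
  induction m with
  | zero => simpa using h
  | succ m ih =>
    exact hasSmallCubeChains_approxRootSet_succ hp (hFc m) hF (fun Q hQ => hps Q hQ m) hδ ih

end Tower

end ApproximateRoots

/-! ### Essential maps -/

section Essential

open ListCochain
open scoped Uniformity Topology FourierTransform

lemma HasSmallCubeChains.exists_abs_sub_half_le {R ι Z : Type*} [CommRing R] [Nontrivial R]
    [Finite ι] [UniformSpace Z] {idx : List ι} {P : ι → Set Z × Set Z} {C : Set Z}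
    (h : HasSmallCubeChains R (idx.map P) C) {H : ι → Z → ℝ} (hH : ∀ i, UniformContinuous (H i))
    (h0 : ∀ i, ∀ z ∈ (P i).1, H i z = 0) (h1 : ∀ i, ∀ z ∈ (P i).2, H i z = 1) {ε : ℝ}
    (hε : 0 < ε) : ∃ z ∈ C, ∀ i ∈ idx, |H i z - 1 / 2| ≤ ε := by
  classical
  obtain ⟨L, hL⟩ := h _ (Filter.iInter_mem.2 fun i => hH i (Metric.dist_mem_uniformity hε))
  let s : ι → Z → R := fun i z => if H i z ≤ 1 / 2 then 0 else 1
  obtain ⟨t, ht, htne, hsep⟩ := hL.exists_mem_forall_ne (s := s)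
    (fun i z hz => by simp [s, h0 i z hz])
    (fun i z hz => by simp only [s, h1 i z hz]; norm_num)
  obtain ⟨x, hx⟩ := List.exists_mem_of_ne_nil t htne
  refine ⟨x, ht.1 x hx, fun i hi => ?_⟩
  obtain ⟨y, hy, w, hw, hyw⟩ := hsep i hi
  have hxy : dist (H i x) (H i y) < ε := mem_iInter.1 (ht.2 x hx y hy) i
  have hxw : dist (H i x) (H i w) < ε := mem_iInter.1 (ht.2 x hx w hw) i
  rw [Real.dist_eq, abs_lt] at hxy hxw
  rw [abs_le]
  by_cases hy2 : H i y ≤ 1 / 2 <;> by_cases hw2 : H i w ≤ 1 / 2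
  · exact absurd (by simp only [s, hy2, hw2]) hyw
  · constructor <;> linarith
  · constructor <;> linarith
  · exact absurd (by simp only [s, hy2, hw2]) hyw

section RootSet

variable {X : Type*} {p : ℕ} {F : ℕ → TorusProd X → ℂ}

/-- The points whose circle coordinates are the directions of the `p`-th powers of the values
of `F`. Where `F j` vanishes, the `j`-th circle coordinate is unconstrained. -/
def rootSet (p : ℕ) (F : ℕ → TorusProd X → ℂ) : Set (TorusProd X) :=
  {z | ∀ j, F j z ^ p = (‖F j z‖ : ℂ) ^ p * z.2 j}

lemma powDefect_eq_zero {w : ℂ} {v : Circle} :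
    powDefect p w v = 0 ↔ w ^ p = (‖w‖ : ℂ) ^ p * v := by
  rw [powDefect, norm_eq_zero, sub_eq_zero]

lemma exists_mem_approxRootSet_zero_fst_eq (hF : IsTriangular F) (x : X) (m : ℕ) :
    ∃ z ∈ approxRootSet p F m 0, z.1 = x := by
  induction m with
  | zero => exact ⟨(x, fun _ => 1), by simp, rfl⟩
  | succ m ih =>
    obtain ⟨z, hz, hzx⟩ := ih
    obtain ⟨a, -, ha⟩ := exists_eq_norm_mul_fourierChar (F m z)
    exact ⟨_, hF.setCircle_mem_approxRootSet_succ hz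
      (powDefect_fourierChar_add_intCast ha 0).le, hzx⟩

variable [TopologicalSpace X]

lemma isClosed_rootSet (hFc : ∀ j, Continuous (F j)) : IsClosed (rootSet p F) := by
  simp only [rootSet, ofPred_forall]
  exact isClosed_iInter fun j => isClosed_eq (by fun_prop) (by fun_prop)

lemma isClosed_approxRootSet (hFc : ∀ j, Continuous (F j)) (m : ℕ) (δ : ℝ) :
    IsClosed (approxRootSet p F m δ) := by
  simp only [approxRootSet, ofPred_forall]
  exact isClosed_iInter fun j => isClosed_iInter fun _ => isClosed_le (by fun_prop) (by fun_prop)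

lemma exists_mem_rootSet_of_forall_approxRootSet [CompactSpace X] (hFc : ∀ j, Continuous (F j))
    {K : ℕ → Set (TorusProd X)} (hK : ∀ m, IsClosed (K m)) (hKa : Antitone K)
    (h : ∀ m : ℕ, ∃ z ∈ approxRootSet p F m (1 / (m + 1)), z ∈ K m) :
    ∃ z ∈ rootSet p F, ∀ m, z ∈ K m := by
  obtain ⟨z, hz⟩ := IsCompact.nonempty_iInter_of_sequence_nonempty_isCompact_isClosed
    (fun m : ℕ => approxRootSet p F m (1 / (m + 1)) ∩ K m)
    (fun m => inter_subset_inter (fun z hz j hj => (hz j (hj.trans m.lt_succ_self)).trans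
      (one_div_le_one_div_of_le (by positivity) (by simp))) (hKa m.le_succ)) h
    ((isClosed_approxRootSet hFc _ _).inter (hK 0)).isCompact
    fun m => (isClosed_approxRootSet hFc _ _).inter (hK m)
  rw [mem_iInter] at hz
  refine ⟨z, fun j => powDefect_eq_zero.1 (le_antisymm ?_ (norm_nonneg _)), fun m => (hz m).2⟩
  exact ge_of_tendsto tendsto_one_div_add_atTop_nhds_zero_nat
    ((Filter.eventually_gt_atTop j).mono fun m hm => (hz m).1 j hm)

lemma exists_mem_rootSet_fst_eq [CompactSpace X] [T1Space X] (hFc : ∀ j, Continuous (F j))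
    (hF : IsTriangular F) (x : X) : ∃ z ∈ rootSet p F, z.1 = x := by
  obtain ⟨z, hz, hzx⟩ := exists_mem_rootSet_of_forall_approxRootSet (p := p) hFc
    (K := fun _ => Prod.fst ⁻¹' {x}) (fun _ => isClosed_singleton.preimage continuous_fst)
    antitone_const fun m => by
      obtain ⟨z, hz, hzx⟩ := exists_mem_approxRootSet_zero_fst_eq (p := p) hF x m
      exact ⟨z, fun j hj => (hz j hj).trans (by positivity), hzx⟩
  exact ⟨z, hz, hzx 0⟩

end RootSet

lemma exists_continuous_eqOn_of_eqOn_inter {Z : Type*} [TopologicalSpace Z] [NormalSpace Z]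
    {A B : Set Z} (hA : IsClosed A) (hB : IsClosed B) {f g : Z → ℝ} (hf : ContinuousOn f A)
    (hg : ContinuousOn g B) (hfg : EqOn f g (A ∩ B)) :
    ∃ H : C(Z, ℝ), EqOn H f A ∧ EqOn H g B := by
  classical
  have hfA : EqOn (A.piecewise f g) f A := A.piecewise_eqOn f g
  have hgB : EqOn (A.piecewise f g) g B := fun z hz => by
    by_cases hzA : z ∈ A
    · rw [hfA hzA, hfg ⟨hzA, hz⟩]
    · exact A.piecewise_eq_of_notMem f g hzA
  have hcont : ContinuousOn (A.piecewise f g) (A ∪ B) :=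
    (hf.congr hfA).union_of_isClosed (hg.congr hgB) hA hB
  obtain ⟨H, hH⟩ := ContinuousMap.exists_restrict_eq (hA.union hB)
    ⟨_, continuousOn_iff_continuous_domRestrict.1 hcont⟩
  have hHu : ∀ z ∈ A ∪ B, H z = A.piecewise f g z := fun z hz =>
    DFunLike.congr_fun hH (⟨z, hz⟩ : ↑(A ∪ B))
  exact ⟨H, fun z hz => (hHu z (Or.inl hz)).trans (hfA hz),
    fun z hz => (hHu z (Or.inr hz)).trans (hgB hz)⟩

lemma isClosed_cubeBoundary (n : ℕ) : IsClosed (cubeBoundary n) := by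
  simp only [cubeBoundary, ofPred_exists, ofPred_or]
  exact isClosed_iUnion_of_finite fun i =>
    (isClosed_eq (continuous_apply i) continuous_const).union
      (isClosed_eq (continuous_apply i) continuous_const)

lemma exists_continuous_ne_of_not_isEssential {Z : Type*} [TopologicalSpace Z] [NormalSpace Z]
    {n : ℕ} {f : Z → Fin n → unitInterval} (hf : ¬ IsEssential f) {c : Fin n → unitInterval}
    (hc : c ∉ cubeBoundary n) :
    ∃ h : Z → Fin n → unitInterval, Continuous h ∧ (∀ z, h z ≠ c) ∧
      ∀ z, f z ∈ cubeBoundary n → h z = f z := by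
  obtain ⟨G, hG, hG0, hGb, hG1⟩ := not_not.1 hf
  have hfc : Continuous f := by
    have hGz : Continuous fun z => G (z, 0) := by fun_prop
    simpa only [hG0] using hGz
  have hA : IsClosed (Prod.fst '' (G ⁻¹' {c})) :=
    isClosedMap_fst_of_compactSpace _ (isClosed_singleton.preimage hG)
  have hBA : Disjoint (f ⁻¹' cubeBoundary n) (Prod.fst '' (G ⁻¹' {c})) := by
    rw [disjoint_left]
    rintro y hy ⟨⟨_, t⟩, ht, rfl⟩
    exact hc (ht ▸ hGb _ hy t)
  obtain ⟨τ, hτB, hτA, hτ⟩ :=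
    exists_continuous_zero_one_of_isClosed ((isClosed_cubeBoundary n).preimage hfc) hA hBA
  refine ⟨fun y => G (y, ⟨τ y, hτ y⟩), by fun_prop, fun y hy => ?_, fun y hy => ?_⟩
  · have hone : (⟨τ y, hτ y⟩ : unitInterval) = 1 := Subtype.ext (hτA ⟨_, hy, rfl⟩)
    refine hc (hy ▸ ?_)
    simpa only [hone] using hG1 y
  · have hzero : (⟨τ y, hτ y⟩ : unitInterval) = 0 := Subtype.ext (hτB hy)
    simp only [hzero, hG0]

lemma exists_continuous_extension_of_eq_on_faces {Z : Type*} [TopologicalSpace Z] [NormalSpace Z]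
    {Y : Set Z} (hY : IsClosed Y) {f : Z → unitInterval} (hf : Continuous f)
    {h : Y → unitInterval} (hh : Continuous h) (hfh : ∀ y : Y, f y = 0 ∨ f y = 1 → h y = f y) :
    ∃ H : C(Z, ℝ), (∀ z, f z = 0 → H z = 0) ∧ (∀ z, f z = 1 → H z = 1) ∧ ∀ y : Y, H y = h y := by
  obtain ⟨h', hh'⟩ := ContinuousMap.exists_restrict_eq hY
    (⟨fun y => (h y : ℝ), by fun_prop⟩ : C(Y, ℝ))
  have hh' : ∀ y : Y, h' y = h y := DFunLike.congr_fun hh'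
  obtain ⟨H, hHY, hHf⟩ := exists_continuous_eqOn_of_eqOn_inter hY
    ((isClosed_singleton.preimage hf).union (isClosed_singleton.preimage hf))
    (f := h') (g := fun z => f z) (A := Y) (B := f ⁻¹' {0} ∪ f ⁻¹' {1})
    h'.continuous.continuousOn (by fun_prop)
    fun z hz => by rw [hh' ⟨z, hz.1⟩, hfh ⟨z, hz.1⟩ hz.2]
  exact ⟨H, fun z hz => (hHf (Or.inl hz)).trans (congrArg Subtype.val hz),
    fun z hz => (hHf (Or.inr hz)).trans (congrArg Subtype.val hz),
    fun y => by rw [hHY y.2, hh']⟩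

section Cube

variable {ι : Type*} {p n : ℕ} {F : ℕ → TorusProd (ι → unitInterval) → ℂ}

lemma exists_mem_rootSet_eq_half (hp : p.Prime) (hFc : ∀ j, Continuous (F j))
    (hF : IsTriangular F) {c : Fin n → ι} (hc : Injective c)
    {H : Fin n → TorusProd (ι → unitInterval) → ℝ} (hH : ∀ i, Continuous (H i))
    (h0 : ∀ i z, z.1 (c i) = 0 → H i z = 0) (h1 : ∀ i z, z.1 (c i) = 1 → H i z = 1) :
    ∃ z ∈ rootSet p F, ∀ i, H i z = 1 / 2 := by
  have : Fact p.Prime := ⟨hp⟩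
  have hchains := hasSmallCubeChains_facePair (T := ℕ → Circle) (ZMod p)
    ((List.nodup_finRange n).map hc)
  rw [List.map_map] at hchains
  obtain ⟨z, hz, hzH⟩ := exists_mem_rootSet_of_forall_approxRootSet (p := p) hFc
    (K := fun m => {z | ∀ i, |H i z - 1 / 2| ≤ 1 / (m + 1)})
    (fun m => by
      simp only [ofPred_forall]
      exact isClosed_iInter fun i => isClosed_le (by fun_prop) (by fun_prop))
    (antitone_nat_of_succ_le fun m z hz i => (hz i).trans
      (one_div_le_one_div_of_le (by positivity) (by simp)))
    fun m => by
      obtain ⟨z, hz, hzH⟩ := (hasSmallCubeChains_approxRootSet hp.pos hFc hF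
        (by simp [MapsTo, facePair]) hchains (δ := 1 / (m + 1)) (by positivity)
        m).exists_abs_sub_half_le (fun i => CompactSpace.uniformContinuous_of_continuous (hH i))
        h0 h1 (ε := 1 / (m + 1)) (by positivity)
      exact ⟨z, hz, fun i => hzH i (List.mem_finRange i)⟩
  refine ⟨z, hz, fun i => ?_⟩
  have hle := ge_of_tendsto (tendsto_one_div_add_atTop_nhds_zero_nat (𝕜 := ℝ))
    (Filter.Eventually.of_forall fun m => hzH m i)
  exact sub_eq_zero.1 (abs_nonpos_iff.1 hle)

theorem isEssential_rootSet (hp : p.Prime) (hFc : ∀ j, Continuous (F j)) (hF : IsTriangular F)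
    {c : Fin n → ι} (hc : Injective c) :
    IsEssential fun (z : rootSet p F) i => z.1.1 (c i) := by
  by_contra hess
  have hY := isClosed_rootSet (p := p) hFc
  have : CompactSpace (rootSet p F) := isCompact_iff_compactSpace.1 hY.isCompact
  let center : Fin n → unitInterval := fun _ => ⟨1 / 2, by norm_num⟩
  have hcenter : center ∉ cubeBoundary n := by
    rintro ⟨i, hi | hi⟩ <;>
    · have hval := congrArg Subtype.val hi
      norm_num [center] at hval
  obtain ⟨h, hh, hhc, hhb⟩ := exists_continuous_ne_of_not_isEssential hess hcenter
  choose H h0 h1 hHh using fun i => exists_continuous_extension_of_eq_on_faces hY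
    (f := fun z => z.1 (c i)) (by fun_prop) (h := fun y => h y i) (by fun_prop)
    fun y hy => congrFun (hhb y ⟨i, hy⟩) i
  obtain ⟨z, hz, hzH⟩ :=
    exists_mem_rootSet_eq_half hp hFc hF hc (fun i => (H i).continuous) h0 h1
  exact hhc ⟨z, hz⟩ (funext fun i => Subtype.ext ((hHh i ⟨z, hz⟩).symm.trans (hzH i)))

end Cube

theorem stronglyInfiniteDimensional_rootSet {p : ℕ} (hp : p.Prime)
    {F : ℕ → TorusProd (ℕ → unitInterval) → ℂ} (hFc : ∀ j, Continuous (F j))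
    (hF : IsTriangular F) : StronglyInfiniteDimensional (rootSet p F) :=
  ⟨fun z => z.1.1, by fun_prop, fun x => by
    obtain ⟨z, hz, rfl⟩ := exists_mem_rootSet_fst_eq hFc hF x
    exact ⟨⟨z, hz⟩, rfl⟩, fun _ _ hc => isEssential_rootSet hp hFc hF hc⟩

end Essential

/-! ### Extending integral cocycles -/

section

open scoped Uniformity Topology FourierTransform

/-- The `p`-th power of every circle-valued map on a closed subset extends to the whole
space. This is the property of a compact space that bounds its dimension over `ℤ[1/p]` by one. -/
def PowersExtend (p : ℕ) (X : Type*) [TopologicalSpace X] : Prop :=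
  ∀ C : Set X, IsClosed C → ∀ f : X → Circle, ContinuousOn f C →
    ∃ g : X → Circle, Continuous g ∧ ∀ x ∈ C, g x = f x ^ p

/-- A function of two variables that satisfies the identity of a `1`-cocycle on all triples of
points of `C` which are small with respect to the entourage `V`. -/
def IsCocycleOn {X G : Type*} [Add G] (c : X → X → G) (V : Set (X × X)) (C : Set X) : Prop :=
  ∀ x ∈ C, ∀ y ∈ C, ∀ z ∈ C, (x, y) ∈ V → (y, z) ∈ V → (x, z) ∈ V → c x y + c y z = c x z

variable {X : Type*} [UniformSpace X]

lemma exists_finset_subset_forall_mem_entourage {C : Set X} (hC : IsCompact C) {W : Set (X × X)}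
    (hW : W ∈ 𝓤 X) :
    ∃ T : Finset X, ↑T ⊆ C ∧ C ⊆ ⋃ t : T, interior (UniformSpace.ball (t : X) W) := by
  obtain ⟨T, hTC, hT⟩ := hC.elim_nhds_subcover (fun x => interior (UniformSpace.ball x W))
    fun x _ => interior_mem_nhds.2 (UniformSpace.ball_mem_nhds x hW)
  exact ⟨T, hTC, by rwa [iUnion_subtype]⟩

lemma exists_entourage_abs_sum_sub_mul_lt {ι : Type*} [Fintype ι] {l : ι → X → ℝ}
    (hl : ∀ t, UniformContinuous (l t)) (M : ℝ) {ε : ℝ} (hε : 0 < ε) :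
    ∃ U ∈ 𝓤 X, ∀ q ∈ U, ∀ k : ι → ℝ, (∀ t, |k t| ≤ M) →
      |∑ t, (l t q.1 - l t q.2) * k t| < ε := by
  have hlim : Filter.Tendsto (fun q : X × X => ∑ t, dist (l t q.1) (l t q.2) * M) (𝓤 X) (𝓝 0) := by
    simpa using tendsto_finsetSum Finset.univ fun t _ =>
      (tendsto_uniformity_iff_dist_tendsto_zero.1 (hl t)).mul_const M
  refine ⟨_, hlim.eventually_lt_const hε, fun q hq k hk => lt_of_le_of_lt ?_ hq⟩
  refine (Finset.abs_sum_le_sum_abs _ _).trans (Finset.sum_le_sum fun t _ => ?_)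
  rw [abs_mul, ← Real.dist_eq]
  exact mul_le_mul_of_nonneg_left (hk t) dist_nonneg

lemma continuousOn_fourierChar_comp_of_forall_abs_sub_lt {C : Set X} {a : X → ℝ} {c : X → X → ℤ}
    (h : ∀ ε > 0, ∃ U ∈ 𝓤 X, ∀ x ∈ C, ∀ y ∈ C, (x, y) ∈ U → |a x - a y - c x y| < ε) :
    ContinuousOn (fun x => 𝐞 (a x)) C := by
  intro x hx
  rw [Metric.continuousWithinAt_iff']
  intro ε hε
  obtain ⟨U, hU, hUa⟩ := h (ε / (2 * Real.pi)) (by positivity)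
  filter_upwards [nhdsWithin_le_nhds (mem_nhds_right x hU), self_mem_nhdsWithin] with y hy hyC
  have hperiod : 𝐞 (a x) = 𝐞 (a x + c y x) := (fourierChar_eq_fourierChar_iff.2 ⟨_, rfl⟩).symm
  rw [hperiod]
  refine (dist_fourierChar_le _ _).trans_lt ?_
  rw [← sub_sub, mul_comm, ← lt_div_iff₀ (by positivity)]
  exact hUa y hyC x hx hy

variable [CompactSpace X]

lemma exists_real_potential [T2Space X] {C : Set X} (hC : IsClosed C) {c : X → X → ℝ} {M : ℝ}
    (hM : ∀ x ∈ C, ∀ y ∈ C, |c x y| ≤ M) {V : Set (X × X)} (hV : V ∈ 𝓤 X)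
    (hc : IsCocycleOn c V C) :
    ∃ a : X → ℝ, ∀ ε > 0, ∃ U ∈ 𝓤 X, ∀ x ∈ C, ∀ y ∈ C, (x, y) ∈ U → |a x - a y - c x y| < ε := by
  obtain ⟨W, hW, hWs, hWV⟩ := comp_symm_mem_uniformity_sets hV
  have hWV' : W ⊆ V := (subset_comp_self_of_mem_uniformity hW).trans hWV
  obtain ⟨T, hTC, hT⟩ := exists_finset_subset_forall_mem_entourage hC.isCompact hW
  obtain ⟨l, hl⟩ := PartitionOfUnity.exists_isSubordinate hC _ (fun _ => isOpen_interior) hT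
  have hsum : ∀ x ∈ C, ∑ t, l t x = 1 := fun x hx => by
    rw [← finsum_eq_sum_of_fintype, l.sum_eq_one hx]
  have hlW : ∀ t x, l t x ≠ 0 → ((t : X), x) ∈ W := fun t x h =>
    (interior_subset (hl t (subset_tsupport _ h)) : x ∈ UniformSpace.ball (t : X) W)
  refine ⟨fun x => ∑ t, l t x * c x t, fun ε hε => ?_⟩
  obtain ⟨U, hU, hUε⟩ := exists_entourage_abs_sum_sub_mul_lt
    (fun t => CompactSpace.uniformContinuous_of_continuous (l t).continuous) M hε
  refine ⟨W ∩ U, Filter.inter_mem hW hU, fun x hx y hy hxy => ?_⟩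
  have hterm : ∀ t : T, l t x * c x t = l t x * c x y + l t x * c y t := fun t => by
    by_cases h : l t x = 0
    · simp [h]
    · have hxt := SetRel.symm W (hlW t x h)
      rw [← hc x hx y hy t (hTC t.2) (hWV' hxy.1) (hWV ⟨x, SetRel.symm W hxy.1, hxt⟩) (hWV' hxt),
        mul_add]
  have hdiff : ∑ t, l t x * c x t - ∑ t, l t y * c y t - c x y =
      ∑ t : T, (l t x - l t y) * c y t := by
    simp_rw [hterm, sub_mul]
    rw [Finset.sum_add_distrib, ← Finset.sum_mul, hsum x hx, Finset.sum_sub_distrib]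
    ring
  rw [hdiff]
  exact hUε (x, y) hxy.2 _ fun t => hM y hy t (hTC t.2)

/-- Integrating `c` to a circle-valued map `f`, an extension of `f ^ p` differentiates to an
integral cocycle that extends `p * c` up to a coboundary. -/
lemma PowersExtend.exists_integral_extension [T2Space X] {p : ℕ} (hp : 0 < p)
    (hX : PowersExtend p X) {C : Set X} (hC : IsClosed C) {c : X → X → ℤ} {M : ℤ}
    (hM : ∀ x ∈ C, ∀ y ∈ C, |c x y| ≤ M) {V : Set (X × X)} (hV : V ∈ 𝓤 X)
    (hc : IsCocycleOn c V C) :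
    ∃ (e : X → X → ℤ) (m : X → ℤ), ∃ U ∈ 𝓤 X, IsCocycleOn e U univ ∧
      ∀ x ∈ C, ∀ y ∈ C, (x, y) ∈ U → p * c x y = e x y - (m x - m y) := by
  have hp' : (0 : ℝ) < p := by exact_mod_cast hp
  obtain ⟨a, ha⟩ := exists_real_potential hC (c := fun x y => (c x y : ℝ)) (M := M)
    (fun x hx y hy => by exact_mod_cast hM x hx y hy) hV
    fun x hx y hy z hz hxy hyz hxz => by
      simp only [← hc x hx y hy z hz hxy hyz hxz, Int.cast_add]
  obtain ⟨g, hg, hgC⟩ := hX C hC _ (continuousOn_fourierChar_comp_of_forall_abs_sub_lt ha)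
  choose b hb using fun x => fourierChar_surjective (g x)
  obtain ⟨U, hU, hUa⟩ := ha (1 / (2 * p)) (by positivity)
  have hW : {q : X × X | dist (g q.1) (g q.2) < 1} ∈ 𝓤 X :=
    CompactSpace.uniformContinuous_of_continuous hg (Metric.dist_mem_uniformity one_pos)
  have hb_eq : ∀ x ∈ C, ∃ n : ℤ, b x = p * a x + n := fun x hx => by
    rw [← fourierChar_eq_fourierChar_iff, hb, hgC x hx, ← nsmul_eq_mul, AddChar.map_nsmul_eq_pow]
  choose! m hm using hb_eq
  refine ⟨fun x y => round (b x - b y), m, _,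
    Filter.inter_mem hU hW, fun x _ y _ z _ hxy hyz hxz => ?_, fun x hx y hy hxy => ?_⟩
  · refine round_sub_add_round_sub ?_ ?_ ?_ <;> rw [hb, hb]
    exacts [hxy.2, hyz.2, hxz.2]
  · have hsmall : |p * (a x - a y - c x y)| < 1 / 2 := by
      have h := mul_lt_mul_of_pos_left (hUa x hx y hy hxy.1) hp'
      rwa [← abs_of_pos hp', ← abs_mul, abs_of_pos hp', mul_one_div, div_mul_cancel_right₀ hp'.ne',
        ← one_div] at h
    have hround : round (p * (a x - a y - c x y)) = 0 := by
      rw [round_eq_zero_iff]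
      exact ⟨by linarith [(abs_lt.1 hsmall).1], (abs_lt.1 hsmall).2⟩
    have hsplit : b x - b y = p * (a x - a y - c x y) + (p * c x y + m x - m y : ℤ) := by
      push_cast
      linear_combination hm x hx - hm y hy
    simp only [hsplit, round_add_intCast, hround]
    ring

end

/-! ### Vanishing of cohomology -/

section

open scoped Uniformity Topology

namespace AS

section Coboundary

variable {A : Type*} [AddCommGroup A] {X : Type*}

lemma d_apply {n : ℕ} (φ : Cochain A X n) (s : Fin (n + 2) → X) :
    d A X n φ s = ∑ i : Fin (n + 2), ((-1 : ℤ) ^ (i : ℕ)) • φ (s ∘ i.succAbove) := rfl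

lemma d_congr {n : ℕ} {φ ψ : Cochain A X n} {s : Fin (n + 2) → X}
    (h : ∀ i : Fin (n + 2), φ (s ∘ i.succAbove) = ψ (s ∘ i.succAbove)) :
    d A X n φ s = d A X n ψ s := by
  simp only [d_apply, h]

lemma d_zero_apply (φ : Cochain A X 0) (s : Fin 2 → X) :
    d A X 0 φ s = φ (fun _ => s 1) - φ (fun _ => s 0) := by
  have h0 : s ∘ (0 : Fin 2).succAbove = fun _ => s 1 := by
    funext i; fin_cases i; rfl
  have h1 : s ∘ (1 : Fin 2).succAbove = fun _ => s 0 := by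
    funext i; fin_cases i; rfl
  rw [d_apply, Fin.sum_univ_two, h0, h1]
  simp [sub_eq_add_neg]

lemma d_one_apply (φ : Cochain A X 1) (s : Fin 3 → X) :
    d A X 1 φ s = φ ![s 1, s 2] - φ ![s 0, s 2] + φ ![s 0, s 1] := by
  have h0 : s ∘ (0 : Fin 3).succAbove = ![s 1, s 2] := by
    funext i; fin_cases i <;> rfl
  have h1 : s ∘ (1 : Fin 3).succAbove = ![s 0, s 2] := by
    funext i; fin_cases i <;> rfl
  have h2 : s ∘ (2 : Fin 3).succAbove = ![s 0, s 1] := by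
    funext i; fin_cases i <;> rfl
  rw [d_apply, Fin.sum_univ_three, h0, h1, h2]
  simp [sub_eq_add_neg]

lemma d_cons {n : ℕ} (φ : Cochain A X (n + 1)) (x : X) (t : Fin (n + 2) → X) :
    d A X (n + 1) φ (Fin.cons x t : Fin (n + 3) → X) =
      φ t - d A X n (fun s => φ (Fin.cons x s : Fin (n + 2) → X)) t := by
  have h0 : (Fin.cons x t : Fin (n + 3) → X) ∘ (0 : Fin (n + 3)).succAbove = t := by
    funext i; simp
  have h1 : ∀ i : Fin (n + 2), (Fin.cons x t : Fin (n + 3) → X) ∘ i.succ.succAbove =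
      (Fin.cons x (t ∘ i.succAbove) : Fin (n + 2) → X) := by
    intro i
    funext j
    refine Fin.cases ?_ (fun j => ?_) j <;> simp
  rw [d_apply, Fin.sum_univ_succ, h0, d_apply, sub_eq_add_neg, ← Finset.sum_neg_distrib]
  congr 1
  · simp
  · refine Finset.sum_congr rfl fun i _ => ?_
    rw [h1, Fin.val_succ, pow_succ]
    simp

lemma d_d {n : ℕ} (φ : Cochain A X n) : d A X (n + 1) (d A X n φ) = 0 := by
  induction n with
  | zero =>
    funext s
    rw [d_one_apply]
    simp [d_zero_apply]
  | succ n ih =>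
    funext s
    rw [← Fin.cons_self_tail s, d_cons]
    have h : (fun t => d A X (n + 1) φ (Fin.cons (s 0) t : Fin (n + 3) → X)) =
        φ - d A X n (fun t => φ (Fin.cons (s 0) t : Fin (n + 2) → X)) :=
      funext fun t => d_cons φ (s 0) t
    rw [h, map_sub, ih]
    simp

end Coboundary

section Uniform

variable {A : Type*} [AddCommGroup A] {X : Type*} [UniformSpace X] {n : ℕ}
  {φ ψ : Cochain A X n} {C D : Set X}

/-- A cochain that vanishes on all sufficiently small tuples in `C`. -/
def LocZeroOn (φ : Cochain A X n) (C : Set X) : Prop :=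
  ∃ V ∈ 𝓤 X, ∀ s : Fin (n + 1) → X, (∀ i, s i ∈ C) → (∀ i j, (s i, s j) ∈ V) → φ s = 0

namespace LocZeroOn

lemma mono (h : LocZeroOn φ C) (hD : D ⊆ C) : LocZeroOn φ D := by
  obtain ⟨V, hV, h⟩ := h
  exact ⟨V, hV, fun s hs => h s fun i => hD (hs i)⟩

lemma add (h : LocZeroOn φ C) (h' : LocZeroOn ψ C) : LocZeroOn (φ + ψ) C := by
  obtain ⟨V, hV, h⟩ := h
  obtain ⟨W, hW, h'⟩ := h'
  refine ⟨V ∩ W, Filter.inter_mem hV hW, fun s hs hsV => ?_⟩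
  rw [Pi.add_apply, h s hs fun i j => (hsV i j).1, h' s hs fun i j => (hsV i j).2, add_zero]

lemma neg (h : LocZeroOn φ C) : LocZeroOn (-φ) C := by
  obtain ⟨V, hV, h⟩ := h
  exact ⟨V, hV, fun s hs hsV => by rw [Pi.neg_apply, h s hs hsV, neg_zero]⟩

lemma sub (h : LocZeroOn φ C) (h' : LocZeroOn ψ C) : LocZeroOn (φ - ψ) C := by
  rw [sub_eq_add_neg]
  exact h.add h'.neg

end LocZeroOn

lemma mem_locZero_iff [CompactSpace X] : φ ∈ locZero A X n ↔ LocZeroOn φ univ := by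
  constructor
  · rintro ⟨U, ⟨hUo, hUc⟩, h⟩
    obtain ⟨V, hV, hVU⟩ := lebesgue_number_lemma_sUnion isCompact_univ hUo hUc.ge
    refine ⟨V, hV, fun s _ hs => ?_⟩
    obtain ⟨u, hu, hsu⟩ := hVU (s 0) (mem_univ _)
    exact h s ⟨u, hu, fun i => hsu (hs 0 i)⟩
  · rintro ⟨V, hV, h⟩
    obtain ⟨W, hW, hWs, hWV⟩ := comp_symm_mem_uniformity_sets hV
    refine ⟨range fun x => interior (UniformSpace.ball x W), ⟨?_, ?_⟩, ?_⟩
    · rintro _ ⟨x, rfl⟩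
      exact isOpen_interior
    · exact eq_univ_of_forall fun x => ⟨_, ⟨x, rfl⟩, mem_interior_iff_mem_nhds.2
        (UniformSpace.ball_mem_nhds x hW)⟩
    · rintro s ⟨_, ⟨x, rfl⟩, hs⟩
      have hs' : ∀ i, (x, s i) ∈ W := fun i =>
        (interior_subset (hs i) : s i ∈ UniformSpace.ball x W)
      exact h s (fun _ => mem_univ _) fun i j => hWV ⟨x, SetRel.symm W (hs' i), hs' j⟩

variable (A X) in
/-- Cocycles on closed subsets are restrictions of cocycles on the whole space. In degree
`n + 1` this forces cocycles of all higher degrees to be coboundaries. -/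
def CocyclesExtend (n : ℕ) : Prop :=
  ∀ C : Set X, IsClosed C → ∀ φ : Cochain A X n, LocZeroOn (AS.d A X n φ) C →
    ∃ φ' : Cochain A X n, LocZeroOn (AS.d A X n φ') univ ∧ LocZeroOn (φ - φ') C

variable (A X) in
/-- Cocycles of degree `n + 1` on closed subsets are coboundaries: relative to `C = univ`, this is
the vanishing of cohomology in degree `n + 1`. -/
def CocyclesSplit (n : ℕ) : Prop :=
  ∀ C : Set X, IsClosed C → ∀ φ : Cochain A X (n + 1), LocZeroOn (AS.d A X (n + 1) φ) C →
    ∃ ψ : Cochain A X n, LocZeroOn (φ - AS.d A X n ψ) C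

lemma CocyclesSplit.cocyclesExtend (h : CocyclesSplit A X n) : CocyclesExtend A X (n + 1) := by
  intro C hC φ hφ
  obtain ⟨ψ, hψ⟩ := h C hC φ hφ
  refine ⟨AS.d A X n ψ, ⟨univ, Filter.univ_mem, fun s _ _ => ?_⟩, hψ⟩
  rw [d_d]
  rfl

/-- The cochain `φ` is a coboundary on the part in `C` of a closed uniform neighbourhood `D`
of `S`. -/
def CoboundsNear (φ : Cochain A X (n + 1)) (C S : Set X) : Prop :=
  ∃ D : Set X, IsClosed D ∧ (∃ W ∈ 𝓤 X, ∀ x ∈ S, UniformSpace.ball x W ⊆ D) ∧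
    ∃ ψ : Cochain A X n, LocZeroOn (φ - AS.d A X n ψ) (D ∩ C)

lemma exists_locZeroOn_sub_d_union {D E P : Set X} {φ : Cochain A X (n + 1)} {α β : Cochain A X n}
    (hα : LocZeroOn (φ - AS.d A X n α) (D ∩ C)) (hβ : LocZeroOn (φ - AS.d A X n β) (E ∩ C))
    (hαβ : LocZeroOn (α - β) (D ∩ E ∩ C)) {W : Set (X × X)} (hW : W ∈ 𝓤 X)
    (hP : ∀ x ∈ P, UniformSpace.ball x W ⊆ D) :
    ∃ ψ : Cochain A X n, LocZeroOn (φ - AS.d A X n ψ) ((P ∪ E) ∩ C) := by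
  classical
  obtain ⟨V₁, hV₁, hα⟩ := hα
  obtain ⟨V₂, hV₂, hβ⟩ := hβ
  obtain ⟨V₃, hV₃, hαβ⟩ := hαβ
  refine ⟨fun s => if ∀ i, s i ∈ D then α s else β s, W ∩ (V₁ ∩ (V₂ ∩ V₃)),
    Filter.inter_mem hW (Filter.inter_mem hV₁ (Filter.inter_mem hV₂ hV₃)), fun s hs hsV => ?_⟩
  by_cases hsD : ∀ i, s i ∈ D
  · rw [← hα s (fun i => ⟨hsD i, (hs i).2⟩) fun i j => (hsV i j).2.1, Pi.sub_apply, Pi.sub_apply]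
    congr 1
    exact d_congr fun i => if_pos fun j => hsD _
  · obtain ⟨k, hk⟩ := not_forall.1 hsD
    have hsE : ∀ i, s i ∈ E := fun i => (hs i).1.resolve_left fun h => hk (hP _ h (hsV i k).1)
    rw [← hβ s (fun i => ⟨hsE i, (hs i).2⟩) fun i j => (hsV i j).2.2.1, Pi.sub_apply, Pi.sub_apply]
    congr 1
    refine d_congr fun i => ?_
    by_cases hi : ∀ j, (s ∘ i.succAbove) j ∈ D
    · rw [if_pos hi]
      exact sub_eq_zero.1 (hαβ (s ∘ i.succAbove) (fun j => ⟨⟨hi j, hsE _⟩, (hs _).2⟩)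
        fun j k => (hsV _ _).2.2.2)
    · exact if_neg hi

/-- The discrepancy of two splittings is a cocycle on the overlap; extending it lets one correct
the first splitting so that the two agree there. -/
lemma CocyclesExtend.coboundsNear_union (hE : CocyclesExtend A X n) (hC : IsClosed C)
    {φ : Cochain A X (n + 1)} {S T : Set X} (hS : CoboundsNear φ C S) (hT : CoboundsNear φ C T) :
    CoboundsNear φ C (S ∪ T) := by
  obtain ⟨D, hD, ⟨W₁, hW₁, hSD⟩, α, hα⟩ := hS
  obtain ⟨E, hE', ⟨W₂, hW₂, hTE⟩, β, hβ⟩ := hT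
  have hcocycle : LocZeroOn (AS.d A X n (α - β)) (D ∩ E ∩ C) := by
    have h := (hβ.mono (inter_subset_inter_left C inter_subset_right)).sub
      (hα.mono (inter_subset_inter_left C inter_subset_left))
    rwa [sub_sub_sub_cancel_left, ← map_sub] at h
  obtain ⟨γ, hγ, hαβ⟩ := hE _ ((hD.inter hE').inter hC) _ hcocycle
  have hα' : LocZeroOn (φ - AS.d A X n (α - γ)) (D ∩ C) := by
    have h := hα.add (hγ.mono (subset_univ _))
    rwa [sub_add, ← map_sub] at h
  obtain ⟨W', hW', -, hW'₁⟩ := comp_symm_mem_uniformity_sets hW₁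
  obtain ⟨W, hW, hWs, hWW'⟩ := comp_symm_mem_uniformity_sets hW'
  have hWsub : W ⊆ W' := (subset_comp_self_of_mem_uniformity hW).trans hWW'
  have hSW : ∀ x ∈ closure {y | ∃ x ∈ S, (x, y) ∈ W}, UniformSpace.ball x W ⊆ D := by
    intro x hx y hxy
    obtain ⟨z, hz, w, hw, hwz⟩ := mem_closure_iff_nhds.1 hx _ (UniformSpace.ball_mem_nhds x hW)
    exact hSD w hw (hW'₁ ⟨x, hWW' ⟨z, hwz, SetRel.symm W hz⟩, hWsub hxy⟩)
  rw [sub_right_comm] at hαβ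
  refine ⟨_, isClosed_closure.union hE', ⟨W ∩ W₂, Filter.inter_mem hW hW₂, ?_⟩,
    exists_locZeroOn_sub_d_union hα' hβ hαβ hW hSW⟩
  rintro x (hx | hx) y hxy
  · exact Or.inl (subset_closure ⟨x, hx, hxy.1⟩)
  · exact Or.inr (hTE x hx hxy.2)

/-- Near a point `x` of `C`, the cone with apex `x` splits a cocycle. -/
lemma LocZeroOn.exists_coboundsNear {φ : Cochain A X (n + 2)}
    (hφ : LocZeroOn (AS.d A X (n + 2) φ) C) {x : X} (hx : x ∈ C) :
    ∃ S ∈ 𝓝[C] x, CoboundsNear φ C S := by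
  obtain ⟨V, hV, hφ⟩ := hφ
  obtain ⟨V₀, ⟨hV₀, hV₀c⟩, hV₀V⟩ := uniformity_hasBasis_closed.mem_iff.1
    (Filter.inter_mem hV (symm_le_uniformity hV))
  obtain ⟨W, hW, -, hWV⟩ := comp_symm_mem_uniformity_sets hV₀
  refine ⟨UniformSpace.ball x W, mem_nhdsWithin_of_mem_nhds (UniformSpace.ball_mem_nhds x hW),
    {y | (x, y) ∈ V₀}, hV₀c.preimage (by fun_prop), ⟨W, hW, fun y hy z hyz => hWV ⟨y, hy, hyz⟩⟩,
    fun s => φ (Fin.cons x s : Fin (n + 3) → X), V, hV, fun s hs hsV => ?_⟩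
  rw [Pi.sub_apply, ← d_cons]
  refine hφ _ (Fin.cases (by simpa using hx) fun i => by simpa using (hs i).2) fun i j => ?_
  refine Fin.cases ?_ (fun i => ?_) i <;> refine Fin.cases ?_ (fun j => ?_) j
  · simpa using refl_mem_uniformity hV
  · simpa using (hV₀V (hs j).1).1
  · simpa using (hV₀V (hs i).1).2
  · simpa using hsV i j

lemma CocyclesExtend.cocyclesSplit [CompactSpace X] (hE : CocyclesExtend A X (n + 1)) :
    CocyclesSplit A X (n + 1) := by
  intro C hC φ hφ
  have hCC : CoboundsNear φ C C := by
    refine hC.isCompact.induction_on (p := CoboundsNear φ C) ?_ ?_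
      (fun _ _ => hE.coboundsNear_union hC) fun x hx => hφ.exists_coboundsNear hx
    · exact ⟨∅, isClosed_empty, ⟨univ, Filter.univ_mem, fun x hx => absurd hx id⟩,
        0, univ, Filter.univ_mem, fun s hs => absurd (hs 0).1 id⟩
    · rintro S T hST ⟨D, hD, ⟨W, hW, h⟩, hψ⟩
      exact ⟨D, hD, ⟨W, hW, fun x hx => h x (hST hx)⟩, hψ⟩
  obtain ⟨D, -, ⟨W, hW, h⟩, ψ, hψ⟩ := hCC
  exact ⟨ψ, hψ.mono fun x hx => ⟨h x hx (refl_mem_uniformity hW), hx⟩⟩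

lemma CocyclesExtend.cocyclesSplit_add [CompactSpace X] {n : ℕ} (hE : CocyclesExtend A X (n + 1))
    (k : ℕ) : CocyclesSplit A X (n + 1 + k) := by
  induction k with
  | zero => exact hE.cocyclesSplit
  | succ k ih => exact CocyclesExtend.cocyclesSplit (n := n + 1 + k) ih.cocyclesExtend

lemma CocyclesSplit.subsingleton_ASH [CompactSpace X] {n : ℕ} (h : CocyclesSplit A X n) :
    Subsingleton (ASH A (n + 1) X) := by
  refine QuotientAddGroup.subsingleton_iff.2 ?_
  rw [eq_top_iff]
  rintro ⟨x, hx⟩ -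
  induction x using QuotientAddGroup.induction_on with
  | H φ =>
    have h1 : AS.d A X (n + 1) φ ∈ locZero A X (n + 2) :=
      (QuotientAddGroup.eq_zero_iff _).1 hx
    obtain ⟨ψ, hψ⟩ := h univ isClosed_univ φ (mem_locZero_iff.1 h1)
    refine ⟨(ψ : QC A X n), ?_⟩
    refine (QuotientAddGroup.eq.2 ?_ : ((AS.d A X n ψ : Cochain A X (n + 1)) : QC A X (n + 1)) = φ)
    rw [neg_add_eq_sub]
    exact mem_locZero_iff.2 hψ

end Uniform

end AS

end

section

open scoped Uniformity

lemma intCast_localizationAway_injective {p : ℕ} (hp : p ≠ 0) :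
    Injective (Int.cast : ℤ → Localization.Away (p : ℤ)) := by
  intro m n h
  refine IsLocalization.injective (Localization.Away (p : ℤ))
    (powers_le_nonZeroDivisors_of_noZeroDivisors (Int.natCast_ne_zero.2 hp)) ?_
  simpa only [eq_intCast] using h

lemma exists_unit_forall_mem_eq_mul_intCast (p : ℕ) (S : Finset (Localization.Away (p : ℤ))) :
    ∃ v : (Localization.Away (p : ℤ))ˣ, ∀ a ∈ S, ∃ k : ℤ, a = v * (p * k) := by
  obtain ⟨b, hb⟩ := IsLocalization.exist_integer_multiples_of_finset (Submonoid.powers (p : ℤ)) S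
  obtain ⟨u, hu⟩ := (IsLocalization.map_units (Localization.Away (p : ℤ)) b).mul
    (IsLocalization.Away.algebraMap_isUnit (S := Localization.Away (p : ℤ)) (p : ℤ))
  refine ⟨u⁻¹, fun a ha => ?_⟩
  obtain ⟨k, hk⟩ := hb a ha
  refine ⟨k, ?_⟩
  rw [Units.eq_inv_mul_iff_mul_eq, hu]
  rw [Algebra.smul_def] at hk
  simp only [eq_intCast, Int.cast_natCast] at hk ⊢
  rw [hk]
  ring

variable {X : Type*} [UniformSpace X] {C : Set X}

/-- Moving every point to a finite net changes a `1`-cocycle by a coboundary, so that up to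
coboundaries a cocycle takes finitely many values. -/
lemma IsCocycleOn.exists_finset_retraction {A : Type*} [AddCommGroup A] (hC : IsCompact C)
    {c : X → X → A} {V : Set (X × X)} (hV : V ∈ 𝓤 X) (hc : IsCocycleOn c V C) :
    ∃ (T : Finset X) (r : X → X), (∀ x ∈ C, r x ∈ T) ∧ ∃ W ∈ 𝓤 X,
      IsCocycleOn (fun x y => c (r x) (r y)) W C ∧
      ∀ x ∈ C, ∀ y ∈ C, (x, y) ∈ W → c x y = c (r x) (r y) + c (r y) y - c (r x) x := by
  obtain ⟨V₁, hV₁, -, hV₁V⟩ := comp_symm_mem_uniformity_sets hV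
  obtain ⟨W, hW, hWs, hWV⟩ := comp_symm_mem_uniformity_sets hV₁
  have hW₁ : W ⊆ V₁ := (subset_comp_self_of_mem_uniformity hW).trans hWV
  have h₁ : V₁ ⊆ V := (subset_comp_self_of_mem_uniformity hV₁).trans hV₁V
  obtain ⟨T, hTC, hT⟩ := exists_finset_subset_forall_mem_entourage hC hW
  have hr : ∀ x ∈ C, ∃ t, t ∈ T ∧ (t, x) ∈ W := fun x hx => by
    obtain ⟨t, ht⟩ := mem_iUnion.1 (hT hx)
    exact ⟨t, t.2, (interior_subset ht : x ∈ UniformSpace.ball (t : X) W)⟩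
  choose! r hrT hrW using hr
  have hrC : ∀ x ∈ C, r x ∈ C := fun x hx => hTC (hrT x hx)
  have hry : ∀ x ∈ C, ∀ y, (x, y) ∈ W → (r x, y) ∈ V₁ := fun x hx y hxy => hWV ⟨x, hrW x hx, hxy⟩
  have hrr : ∀ x ∈ C, ∀ y ∈ C, (x, y) ∈ W → (r x, r y) ∈ V := fun x hx y hy hxy =>
    hV₁V ⟨y, hry x hx y hxy, hW₁ (SetRel.symm W (hrW y hy))⟩
  refine ⟨T, r, hrT, W, hW, fun x hx y hy z hz hxy hyz hxz => ?_, fun x hx y hy hxy => ?_⟩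
  · exact hc _ (hrC x hx) _ (hrC y hy) _ (hrC z hz) (hrr x hx y hy hxy) (hrr y hy z hz hyz)
      (hrr x hx z hz hxz)
  · have hx_apex := hc _ (hrC x hx) x hx y hy (h₁ (hW₁ (hrW x hx))) (h₁ (hW₁ hxy))
      (h₁ (hry x hx y hxy))
    have hy_apex := hc _ (hrC x hx) _ (hrC y hy) y hy (hrr x hx y hy hxy) (h₁ (hW₁ (hrW y hy)))
      (h₁ (hry x hx y hxy))
    rw [hy_apex, ← hx_apex, add_sub_cancel_left]

lemma IsCocycleOn.exists_intCast {p : ℕ} (hp : p ≠ 0) (hC : IsCompact C)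
    {c : X → X → Localization.Away (p : ℤ)} {V : Set (X × X)} (hV : V ∈ 𝓤 X)
    (hc : IsCocycleOn c V C) :
    ∃ (v : Localization.Away (p : ℤ)) (k : X → X → ℤ) (M : ℤ) (b : X → Localization.Away (p : ℤ)),
      (∀ x ∈ C, ∀ y ∈ C, |k x y| ≤ M) ∧ ∃ W ∈ 𝓤 X, IsCocycleOn k W C ∧
      ∀ x ∈ C, ∀ y ∈ C, (x, y) ∈ W → c x y = v * (p * k x y) + b y - b x := by
  classical
  obtain ⟨T, r, hrT, W, hW, hcr, hcb⟩ := hc.exists_finset_retraction hC hV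
  let S : Finset (Localization.Away (p : ℤ)) := (T ×ˢ T).image fun q => c q.1 q.2
  have hS : ∀ x ∈ C, ∀ y ∈ C, c (r x) (r y) ∈ S := fun x hx y hy =>
    Finset.mem_image_of_mem (fun q : X × X => c q.1 q.2)
      (Finset.mk_mem_product (hrT x hx) (hrT y hy))
  obtain ⟨v, hv⟩ := exists_unit_forall_mem_eq_mul_intCast p S
  choose! k hk using hv
  obtain ⟨M, hM⟩ := (S.image fun a => |k a|).exists_le
  refine ⟨v, fun x y => k (c (r x) (r y)), M, fun x => c (r x) x,
    fun x hx y hy => hM _ (Finset.mem_image_of_mem _ (hS x hx y hy)), W, hW,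
    fun x hx y hy z hz hxy hyz hxz => ?_, fun x hx y hy hxy => ?_⟩
  · have h := hcr x hx y hy z hz hxy hyz hxz
    beta_reduce at h
    rw [hk _ (hS x hx y hy), hk _ (hS y hy z hz), hk _ (hS x hx z hz), ← mul_add, ← mul_add,
      Units.mul_right_inj] at h
    refine mul_left_cancel₀ (Int.natCast_ne_zero.2 hp) (intCast_localizationAway_injective hp ?_)
    exact_mod_cast h
  · rw [← hk _ (hS x hx y hy), hcb x hx y hy hxy]

namespace AS

lemma LocZeroOn.exists_isCocycleOn {A : Type*} [AddCommGroup A] {φ : Cochain A X 1}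
    (h : LocZeroOn (d A X 1 φ) C) : ∃ V ∈ 𝓤 X, IsCocycleOn (fun x y => φ ![x, y]) V C := by
  obtain ⟨V, hV, h⟩ := h
  refine ⟨V ∩ Prod.swap ⁻¹' V, Filter.inter_mem hV (symm_le_uniformity hV),
    fun x hx y hy z hz hxy hyz hxz => ?_⟩
  have hdiag : ∀ w, (w, w) ∈ V := fun w => refl_mem_uniformity hV
  have hd := h ![x, y, z] (by simp [Fin.forall_fin_succ, hx, hy, hz])
    (by simp [Fin.forall_fin_succ, hdiag, hxy.1, hyz.1, hxz.1, show (y, x) ∈ V from hxy.2,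
      show (z, y) ∈ V from hyz.2, show (z, x) ∈ V from hxz.2])
  rw [d_one_apply] at hd
  have hperm : φ ![x, y] + φ ![y, z] - φ ![x, z] = φ ![y, z] - φ ![x, z] + φ ![x, y] := by abel
  exact sub_eq_zero.1 (hperm.trans hd)

lemma locZeroOn_d_of_isCocycleOn {A : Type*} [AddCommGroup A] {c : X → X → A} {V : Set (X × X)}
    (hV : V ∈ 𝓤 X) (hc : IsCocycleOn c V C) :
    LocZeroOn (d A X 1 fun s => c (s 0) (s 1)) C := by
  refine ⟨V, hV, fun s hs hsV => ?_⟩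
  rw [d_one_apply]
  simp only [Matrix.cons_val_zero, Matrix.cons_val_one]
  rw [← hc _ (hs 0) _ (hs 1) _ (hs 2) (hsV 0 1) (hsV 1 2) (hsV 0 2)]
  abel

lemma cocyclesExtend_one [CompactSpace X] [T2Space X] {p : ℕ} (hp : p ≠ 0)
    (hX : PowersExtend p X) : CocyclesExtend (Localization.Away (p : ℤ)) X 1 := by
  intro C hC φ hφ
  obtain ⟨V, hV, hc⟩ := hφ.exists_isCocycleOn
  obtain ⟨v, k, M, b, hM, W, hW, hk, hφk⟩ := hc.exists_intCast hp hC.isCompact hV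
  obtain ⟨e, m, U, hU, he, hke⟩ := hX.exists_integral_extension (Nat.pos_of_ne_zero hp) hC hM hW hk
  let b' : X → Localization.Away (p : ℤ) := fun x => v * m x + b x
  let c' : X → X → Localization.Away (p : ℤ) := fun x y => v * e x y + b' y - b' x
  refine ⟨fun s => c' (s 0) (s 1),
    locZeroOn_d_of_isCocycleOn hU fun x hx y hy z hz hxy hyz hxz => ?_,
    W ∩ U, Filter.inter_mem hW hU, fun s hs hsV => ?_⟩
  · simp only [c']
    rw [← he x hx y hy z hz hxy hyz hxz]
    push_cast
    ring
  · have hs_eq : s = ![s 0, s 1] := by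
      funext i; fin_cases i <;> rfl
    have hφs : φ s = v * (p * k (s 0) (s 1)) + b (s 1) - b (s 0) := by
      conv_lhs => rw [hs_eq]
      exact hφk _ (hs 0) _ (hs 1) (hsV 0 1).1
    have hks : (p * k (s 0) (s 1) : Localization.Away (p : ℤ)) =
        e (s 0) (s 1) - (m (s 0) - m (s 1)) := by
      exact_mod_cast congrArg (Int.cast : ℤ → Localization.Away (p : ℤ))
        (hke _ (hs 0) _ (hs 1) (hsV 0 1).2)
    rw [Pi.sub_apply, hφs, hks]
    ring

theorem subsingleton_ASH_of_powersExtend {p : ℕ} {X : Type*} [TopologicalSpace X] [CompactSpace X]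
    [T2Space X] (hp : p ≠ 0) (hX : PowersExtend p X) (k : ℕ) :
    Subsingleton (ASH (Localization.Away (p : ℤ)) (k + 2) X) := by
  let := uniformSpaceOfCompactR1 (γ := X)
  have h := ((cocyclesExtend_one hp hX).cocyclesSplit_add k).subsingleton_ASH
  rwa [show 0 + 1 + k + 1 = k + 2 by omega] at h

end AS

end

/-! ### Dense triangular sequences -/

section

open scoped Uniformity Topology

section Dense

variable {X : Type*}

/-- Reset all circle coordinates from the `j`-th on; precomposition with this map makes any
function triangular. -/
def truncateCircles (j : ℕ) (z : TorusProd X) : TorusProd X :=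
  (z.1, fun i => if i < j then z.2 i else 1)

lemma truncateCircles_setCircle {j m : ℕ} (hj : j ≤ m) (v : Circle) (z : TorusProd X) :
    truncateCircles j (setCircle m v z) = truncateCircles j z := by
  refine Prod.ext rfl (funext fun i => ?_)
  by_cases hi : i < j
  · simp [truncateCircles, hi, setCircle_snd_of_ne (hi.trans_le hj).ne]
  · simp [truncateCircles, hi]

lemma continuous_truncateCircles [TopologicalSpace X] (j : ℕ) :
    Continuous (truncateCircles (X := X) j) := by
  refine continuous_fst.prodMk (continuous_pi fun i => ?_)
  split_ifs <;> fun_prop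

lemma tendstoUniformly_truncateCircles [UniformSpace X] :
    TendstoUniformly (truncateCircles (X := X)) id Filter.atTop := by
  rw [tendstoUniformly_iff_tendsto, uniformity_prod, Filter.tendsto_inf, Filter.tendsto_comap_iff,
    Filter.tendsto_comap_iff, Pi.uniformity, Filter.tendsto_iInf]
  refine ⟨fun s hs => Filter.mem_map.2 (Filter.univ_mem' fun q : ℕ × TorusProd X =>
    (refl_mem_uniformity hs : (q.2.1, q.2.1) ∈ s)), fun i => ?_⟩
  rw [Filter.tendsto_comap_iff]
  intro s hs
  have hlt : ∀ᶠ q : ℕ × TorusProd X in Filter.atTop ×ˢ ⊤, i < q.1 :=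
    (Filter.eventually_gt_atTop i).prod_inl _
  refine Filter.mem_map.2 ?_
  filter_upwards [hlt] with q hq
  simpa [truncateCircles, hq] using refl_mem_uniformity hs

theorem exists_denseRange_isTriangular [UniformSpace X] [CompactSpace X]
    [SecondCountableTopology X] :
    ∃ F : ℕ → C(TorusProd X, ℂ), DenseRange F ∧ IsTriangular fun j => F j := by
  let G := TopologicalSpace.denseSeq C(TorusProd X, ℂ)
  let F : ℕ → C(TorusProd X, ℂ) := fun k =>
    (G k.unpair.1).comp ⟨truncateCircles k, continuous_truncateCircles k⟩
  refine ⟨F, Metric.denseRange_iff.2 fun H ε hε => ?_, fun j m hj v z => by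
    simp [F, truncateCircles_setCircle hj]⟩
  obtain ⟨i, hi⟩ := (TopologicalSpace.denseRange_denseSeq C(TorusProd X, ℂ)).exists_dist_lt H
    (half_pos hε)
  have htendsto := (CompactSpace.uniformContinuous_of_continuous
    (G i).continuous).comp_tendstoUniformly tendstoUniformly_truncateCircles
  obtain ⟨N, hN⟩ :=
    Filter.eventually_atTop.1 (Metric.tendstoUniformly_iff.1 htendsto _ (half_pos hε))
  refine ⟨Nat.pair i N, (ContinuousMap.dist_lt_iff hε).2 fun z => ?_⟩
  simp only [F, Nat.unpair_pair]
  calc dist (H z) (G i (truncateCircles (Nat.pair i N) z))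
      ≤ dist (H z) (G i z) + dist (G i z) (G i (truncateCircles (Nat.pair i N) z)) :=
        dist_triangle _ _ _
    _ < ε / 2 + ε / 2 := add_lt_add ((ContinuousMap.dist_apply_le_dist z).trans_lt hi)
        (hN _ (Nat.right_le_pair i N) z)
    _ = ε := add_halves ε

end Dense

lemma eq_pow_mul_exp_arg {p : ℕ} {w f u : ℂ} (hf : ‖f‖ = 1) (hw : w ≠ 0)
    (h : (w * f) ^ p = (‖w * f‖ : ℂ) ^ p * u) :
    u = f ^ p * Complex.exp (p * (w.arg * Complex.I)) := by
  refine mul_left_cancel₀ (pow_ne_zero p (by simpa using hw) : (‖w‖ : ℂ) ^ p ≠ 0) ?_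
  calc (‖w‖ : ℂ) ^ p * u = (w * f) ^ p := by rw [h, norm_mul, hf, mul_one]
    _ = (‖w‖ * Complex.exp (w.arg * Complex.I)) ^ p * f ^ p := by
        rw [Complex.norm_mul_exp_arg_mul_I, mul_pow]
    _ = (‖w‖ : ℂ) ^ p * (f ^ p * Complex.exp (p * (w.arg * Complex.I))) := by
        rw [Complex.exp_nat_mul]
        ring

lemma mem_slitPlane_of_norm_sub_one_lt {w : ℂ} (hw : ‖w - 1‖ < 1) : w ∈ Complex.slitPlane := by
  have hre := (Complex.abs_re_le_norm _).trans_lt hw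
  rw [Complex.sub_re, Complex.one_re, abs_lt] at hre
  exact Or.inl (by linarith)

lemma exists_continuous_eq_pow_of_norm_sub_lt {Z : Type*} [TopologicalSpace Z] [NormalSpace Z]
    {C : Set Z} (hC : IsClosed C) {f u : Z → Circle} (hf : ContinuousOn f C) (hu : Continuous u)
    {F : Z → ℂ} (hF : Continuous F) (hFf : ∀ z ∈ C, ‖F z - f z‖ < 1) {p : ℕ}
    (hFu : ∀ z, F z ^ p = (‖F z‖ : ℂ) ^ p * u z) :
    ∃ g : Z → Circle, Continuous g ∧ ∀ z ∈ C, g z = f z ^ p := by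
  have hw : ∀ z ∈ C, F z / f z ∈ Complex.slitPlane := fun z hz => by
    refine mem_slitPlane_of_norm_sub_one_lt ?_
    rw [div_sub_one (Circle.coe_ne_zero _), norm_div, Circle.norm_coe, div_one]
    exact hFf z hz
  have hdiv : ContinuousOn (fun z => F z / f z) C :=
    hF.continuousOn.div (continuous_subtype_val.comp_continuousOn hf)
      fun z _ => Circle.coe_ne_zero (f z)
  have harg : ContinuousOn (fun z => (F z / f z).arg) C := fun z hz =>
    (Complex.continuousAt_arg (hw z hz)).comp_continuousWithinAt (f := fun z => F z / f z)
      (hdiv z hz)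
  obtain ⟨θ, hθ⟩ := ContinuousMap.exists_extension hC.isClosedEmbedding_subtypeVal
    (⟨_, harg.domRestrict⟩ : C(C, ℝ))
  refine ⟨fun z => u z * (Circle.exp (p * θ z))⁻¹, by fun_prop, fun z hz => ?_⟩
  have hθz : θ z = (F z / f z).arg := DFunLike.congr_fun hθ ⟨z, hz⟩
  rw [mul_inv_eq_iff_eq_mul, hθz]
  ext
  rw [eq_pow_mul_exp_arg (Circle.norm_coe (f z)) (Complex.slitPlane_ne_zero (hw z hz))
    (u := u z) (p := p) (by rw [div_mul_cancel₀ _ (Circle.coe_ne_zero _), hFu])]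
  push_cast
  rw [mul_assoc]

theorem powersExtend_rootSet {X : Type*} [TopologicalSpace X] [CompactSpace X] [T2Space X]
    (p : ℕ) {F : ℕ → C(TorusProd X, ℂ)} (hF : DenseRange F) :
    PowersExtend p (rootSet p fun j => F j) := by
  have hY : IsClosed (rootSet p fun j => F j) := isClosed_rootSet fun j => (F j).continuous
  have : CompactSpace (rootSet p fun j => F j) := isCompact_iff_compactSpace.1 hY.isCompact
  intro C hC f hf
  obtain ⟨G, hG⟩ := ContinuousMap.exists_extension
    (hY.isClosedEmbedding_subtypeVal.comp hC.isClosedEmbedding_subtypeVal)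
    (⟨_, continuous_subtype_val.comp hf.domRestrict⟩ : C(C, ℂ))
  obtain ⟨j, hj⟩ := hF.exists_dist_lt G one_pos
  refine exists_continuous_eq_pow_of_norm_sub_lt hC hf (u := fun z => z.1.2 j) (by fun_prop)
    (F := fun z => F j z) (by fun_prop) (fun z hz => ?_) fun z => z.2 j
  have hGz : G z = f z := DFunLike.congr_fun hG ⟨z, hz⟩
  rw [← hGz, ← dist_eq_norm, dist_comm]
  exact (ContinuousMap.dist_apply_le_dist _).trans_lt hj

end

/-! ### Cohomology with compact supports -/

section

open Topology

lemma isOpenEmbedding_of_isDenseEmbedding {B Z : Type*} [TopologicalSpace B]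
    [TopologicalSpace Z] [LocallyCompactSpace B] [T2Space Z] {e : B → Z}
    (he : IsDenseEmbedding e) : IsOpenEmbedding e := by
  refine ⟨he.isEmbedding, isOpen_iff_mem_nhds.2 ?_⟩
  rintro _ ⟨b, rfl⟩
  obtain ⟨K, hK, hKb⟩ := exists_compact_mem_nhds b
  refine Filter.mem_of_superset (he.isDenseInducing.closure_image_mem_nhds hKb) ?_
  rw [(hK.image he.continuous).isClosed.closure_eq]
  exact image_subset_range e K

/-- The map that collapses the complement of the range of `e : B → Z` to the point at infinity of
the one-point compactification of `B`. -/
def collapse {B Z : Type*} (e : B → Z) : Z → OnePoint B := extend e (↑) fun _ => OnePoint.infty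

section Collapse

variable {B Z : Type*} {e : B → Z}

lemma collapse_apply (he : Injective e) (b : B) : collapse e (e b) = b := he.extend_apply _ _ b

lemma collapse_of_notMem {z : Z} (hz : z ∉ range e) : collapse e z = OnePoint.infty :=
  extend_apply' _ _ _ hz

lemma collapse_ne_infty_iff (he : Injective e) {z : Z} :
    collapse e z ≠ OnePoint.infty ↔ z ∈ range e := by
  refine ⟨fun h => not_not.1 fun hz => h (collapse_of_notMem hz), ?_⟩
  rintro ⟨b, rfl⟩
  rw [collapse_apply he]
  exact OnePoint.coe_ne_infty b

lemma eq_of_collapse_eq_of_ne_infty (he : Injective e) {z z' : Z}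
    (hz : collapse e z ≠ OnePoint.infty) (h : collapse e z = collapse e z') : z = z' := by
  obtain ⟨b, rfl⟩ := (collapse_ne_infty_iff he).1 hz
  obtain ⟨b', rfl⟩ := (collapse_ne_infty_iff he).1 (h ▸ hz)
  rw [collapse_apply he, collapse_apply he, OnePoint.coe_eq_coe] at h
  rw [h]

lemma collapse_surjective (he : Injective e) (hr : range e ≠ univ) : Surjective (collapse e) := by
  intro w
  induction w using OnePoint.rec with
  | infty =>
    obtain ⟨z, hz⟩ := (ne_univ_iff_exists_notMem _).1 hr
    exact ⟨z, collapse_of_notMem hz⟩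
  | coe b => exact ⟨e b, collapse_apply he b⟩

lemma preimage_collapse (he : Injective e) {s : Set (OnePoint B)} (hs : OnePoint.infty ∉ s) :
    collapse e ⁻¹' s = e '' ((↑) ⁻¹' s) := by
  ext z
  by_cases hz : z ∈ range e
  · obtain ⟨b, rfl⟩ := hz
    simp [collapse_apply he, he.mem_set_image]
  · have hz' : z ∉ e '' ((↑) ⁻¹' s) := fun h => hz (image_subset_range _ _ h)
    simp [collapse_of_notMem hz, hs, hz']

variable [TopologicalSpace B] [TopologicalSpace Z] [T2Space Z]

lemma continuous_collapse (he : IsOpenEmbedding e) : Continuous (collapse e) := by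
  refine continuous_def.2 fun s hs => ?_
  by_cases h : OnePoint.infty ∈ s
  · rw [← compl_compl s, preimage_compl, preimage_collapse he.injective (not_not.2 h)]
    exact (((OnePoint.isOpen_iff_of_mem' h).1 hs).1.image he.continuous).isClosed.isOpen_compl
  · rw [preimage_collapse he.injective h]
    exact he.isOpenMap _ ((OnePoint.isOpen_iff_of_notMem h).1 hs)

lemma isQuotientMap_collapse [CompactSpace Z] [LocallyCompactSpace B] (he : IsOpenEmbedding e)
    (hr : range e ≠ univ) : IsQuotientMap (collapse e) :=
  have : T2Space B := he.isEmbedding.t2Space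
  (continuous_collapse he).isClosedMap.isQuotientMap (continuous_collapse he)
    (collapse_surjective he.injective hr)

end Collapse

namespace PowersExtend

variable {p : ℕ} {X Z : Type*} [TopologicalSpace X] [TopologicalSpace Z]

lemma of_isClosedEmbedding (hX : PowersExtend p X) {e : Z → X} (he : IsClosedEmbedding e) :
    PowersExtend p Z := by
  intro C hC f hf
  obtain ⟨g, hg, hgf⟩ := hX (e '' C) (he.isClosedMap C hC) (extend e f fun _ => 1) (by
    rintro _ ⟨z, hz, rfl⟩
    rw [ContinuousWithinAt, ← he.isEmbedding.map_nhdsWithin_eq, Filter.tendsto_map'_iff,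
      he.injective.extend_apply]
    exact Filter.Tendsto.congr (fun z => (he.injective.extend_apply f _ z).symm) (hf z hz))
  refine ⟨g ∘ e, hg.comp he.continuous, fun z hz => ?_⟩
  rw [comp_apply, hgf _ (mem_image_of_mem e hz), he.injective.extend_apply]

/-- Enlarging `C` by the point `a` makes the extension constant on the fibre over `a`. -/
lemma of_isQuotientMap [T1Space X] (hZ : PowersExtend p Z) {q : Z → X} (hq : IsQuotientMap q)
    {a : X} (hqa : ∀ z z', q z ≠ a → q z = q z' → z = z') : PowersExtend p X := by
  classical
  intro C hC f hf
  obtain ⟨f', hf', hff'⟩ : ∃ f' : X → Circle, ContinuousOn f' (C ∪ {a}) ∧ EqOn f' f C := by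
    by_cases ha : a ∈ C
    · refine ⟨f, ?_, fun _ _ => rfl⟩
      rwa [union_eq_self_of_subset_right (singleton_subset_iff.2 ha)]
    · have h : EqOn (update f a 1) f C := fun x hx => update_of_ne (ne_of_mem_of_not_mem hx ha) _ _
      exact ⟨update f a 1, (hf.congr h).union_of_isClosed (continuousOn_singleton _ _) hC
        isClosed_singleton, h⟩
  obtain ⟨g, hg, hgf⟩ := hZ (q ⁻¹' (C ∪ {a}))
    ((hC.union isClosed_singleton).preimage hq.continuous) (f' ∘ q)
    (hf'.comp hq.continuous.continuousOn fun _ h => h)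
  have hinv := surjInv_eq hq.surjective
  have hgq : (fun x => g (surjInv hq.surjective x)) ∘ q = g := by
    funext z
    by_cases hz : q z = a
    · rw [comp_apply, hgf _ (Or.inr ((hinv _).trans hz)), hgf z (Or.inr hz), comp_apply, hinv,
        comp_apply]
    · rw [comp_apply, ← hqa z _ hz (hinv _).symm]
  refine ⟨fun x => g (surjInv hq.surjective x), hq.continuous_iff.2 (hgq.symm ▸ hg), fun x hx => ?_⟩
  beta_reduce
  rw [hgf _ (Or.inl (by rwa [hinv])), comp_apply, hinv, hff' hx]

lemma onePoint [CompactSpace Z] [T2Space Z] (hZ : PowersExtend p Z) [LocallyCompactSpace X]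
    {e : X → Z} (he : IsDenseEmbedding e) (hr : range e ≠ univ) : PowersExtend p (OnePoint X) :=
  have : T2Space X := he.isEmbedding.t2Space
  hZ.of_isQuotientMap (isQuotientMap_collapse (isOpenEmbedding_of_isDenseEmbedding he) hr)
    fun _ _ => eq_of_collapse_eq_of_ne_infty he.injective

end PowersExtend

theorem subsingleton_Hc_of_powersExtend {p : ℕ} (hp : p ≠ 0) {Y : Type*} [TopologicalSpace Y]
    [CompactSpace Y] [T2Space Y] (hY : PowersExtend p Y) (B : Set Y) [LocallyCompactSpace B]
    (k : ℕ) : Subsingleton (AS.Hc (Localization.Away (p : ℤ)) (k + 2) B) := by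
  unfold AS.Hc
  split_ifs with hB
  · exact AS.subsingleton_ASH_of_powersExtend hp (hY.of_isClosedEmbedding
      (isCompact_iff_compactSpace.2 hB).isClosed.isClosedEmbedding_subtypeVal) k
  · have he : IsDenseEmbedding (inclusion (subset_closure (s := B))) :=
      ⟨⟨(IsEmbedding.inclusion _).isInducing, denseRange_inclusion_iff _ |>.2 subset_rfl⟩,
        inclusion_injective _⟩
    have hr : range (inclusion (subset_closure (s := B))) ≠ univ := by
      rw [range_inclusion, Ne, eq_univ_iff_forall, Subtype.forall]
      exact fun h => hB (isCompact_iff_compactSpace.1 (isClosed_of_closure_subset h).isCompact)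
    have : CompactSpace (closure B) := isCompact_iff_compactSpace.1 isClosed_closure.isCompact
    exact AS.subsingleton_ASH_of_powersExtend hp ((hY.of_isClosedEmbedding
      isClosed_closure.isClosedEmbedding_subtypeVal).onePoint he hr) k

end

/-! ### Nonvanishing of first cohomology -/

section

open scoped Topology FourierTransform

namespace AS

variable {A : Type*} [AddCommGroup A] {K : Type*} [TopologicalSpace K]

lemma exists_sub_d_mem_locZero_of_subsingleton_ASH {n : ℕ} (h : Subsingleton (ASH A (n + 1) K))
    {φ : Cochain A K (n + 1)} (hφ : d A K (n + 1) φ ∈ locZero A K (n + 2)) :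
    ∃ ψ : Cochain A K n, φ - d A K n ψ ∈ locZero A K (n + 1) := by
  obtain ⟨ψ, hψ⟩ := (QuotientAddGroup.subsingleton_iff.1 h).ge (AddSubgroup.mem_top
    (⟨(φ : QC A K (n + 1)), (QuotientAddGroup.eq_zero_iff _).2 hφ⟩ : cocycles A K (n + 1)))
  induction ψ using QuotientAddGroup.induction_on with
  | H ψ =>
    have hψφ : ((d A K n ψ : Cochain A K (n + 1)) : QC A K (n + 1)) = φ := hψ
    rw [QuotientAddGroup.eq, neg_add_eq_sub] at hψφ
    exact ⟨ψ, hψφ⟩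

/-- When `𝐞 ∘ g : K → Circle` is continuous (`g` need not be), this `1`-cochain represents minus the
pullback under `𝐞 ∘ g` of `a` times the fundamental class of the circle. -/
def roundCochain (g : K → ℝ) (a : A) : Cochain A K 1 := fun s => round (g (s 1) - g (s 0)) • a

variable {u : K → Circle} {g : K → ℝ}

lemma d_roundCochain_mem_locZero (hu : Continuous u) (hg : ∀ x, 𝐞 (g x) = u x) (a : A) :
    d A K 1 (roundCochain g a) ∈ locZero A K 2 := by
  refine ⟨range fun x => u ⁻¹' Metric.ball (u x) (1 / 2), ⟨?_, ?_⟩, ?_⟩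
  · rintro _ ⟨x, rfl⟩
    exact Metric.isOpen_ball.preimage hu
  · exact eq_univ_of_forall fun x => ⟨_, ⟨x, rfl⟩, Metric.mem_ball_self one_half_pos⟩
  · rintro s ⟨_, ⟨x, rfl⟩, hs⟩
    have hdist : ∀ i j, dist (𝐞 (g (s i))) (𝐞 (g (s j))) < 1 := fun i j => by
      rw [hg, hg]
      exact (dist_triangle_right _ _ (u x)).trans_lt
        ((add_lt_add (hs i) (hs j)).trans_eq (add_halves 1))
    rw [d_one_apply]
    simp only [roundCochain, Matrix.cons_val_zero, Matrix.cons_val_one]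
    rw [← round_sub_add_round_sub (hdist 2 1) (hdist 1 0) (hdist 2 0), add_smul]
    abel

lemma exists_eventually_sub_eq_of_subsingleton_ASH (h : Subsingleton (ASH A 1 K))
    (hu : Continuous u) (hg : ∀ x, 𝐞 (g x) = u x) (a : A) :
    ∃ ψ : K → A, ∀ x, ∀ᶠ y in 𝓝 x, ψ y - ψ x = round (g y - g x) • a := by
  obtain ⟨ψ, U, ⟨hUo, hUc⟩, hU⟩ :=
    exists_sub_d_mem_locZero_of_subsingleton_ASH h (d_roundCochain_mem_locZero hu hg a)
  refine ⟨fun x => ψ fun _ => x, fun x => ?_⟩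
  obtain ⟨v, hv, hxv⟩ := hUc.ge (mem_univ x)
  filter_upwards [(hUo v hv).mem_nhds hxv] with y hyv
  have hxy := hU ![x, y] ⟨v, hv, by simp [Fin.forall_fin_succ, hxv, hyv]⟩
  rw [Pi.sub_apply, d_zero_apply, sub_eq_zero] at hxy
  exact hxy.symm

end AS

section Nontrivial

variable {A : Type*} [AddCommGroup A] {K Y : Type*} [TopologicalSpace K] [TopologicalSpace Y]

/-- Although `g ∘ q` may jump, `g ∘ q - h` is integer valued, and `ψ` follows its jumps. -/
lemma isLocallyConstant_sub_round_zsmul {q : Y → K} (hq : Continuous q) {h : Y → ℝ}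
    (hh : Continuous h) {g : K → ℝ} (hgh : ∀ y, 𝐞 (g (q y)) = 𝐞 (h y)) {ψ : K → A} {a : A}
    (hψ : ∀ x, ∀ᶠ y in 𝓝 x, ψ y - ψ x = round (g y - g x) • a) :
    IsLocallyConstant fun y => ψ (q y) - round (g (q y) - h y) • a := by
  choose n hn using fun y => fourierChar_eq_fourierChar_iff.1 (hgh y)
  have hround : ∀ y, round (g (q y) - h y) = n y := fun y => by
    rw [hn, add_sub_cancel_left, round_intCast]
  simp only [hround]
  rw [IsLocallyConstant.iff_eventually_eq]
  intro y
  filter_upwards [hq.continuousAt.eventually (hψ (q y)),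
    hh.continuousAt.eventually (Metric.ball_mem_nhds (h y) one_half_pos)] with z hz hzy
  have hjump : round (g (q z) - g (q y)) = n z - n y := by
    have hsplit : g (q z) - g (q y) = h z - h y + ((n z - n y : ℤ) : ℝ) := by
      rw [hn, hn]
      push_cast
      ring
    rw [Real.dist_eq, abs_lt] at hzy
    rw [hsplit, round_add_intCast, round_eq_zero_iff.2 ⟨hzy.1.le, hzy.2⟩, zero_add]
  rw [hjump, sub_smul] at hz
  rw [sub_eq_sub_iff_sub_eq_sub, hz]

theorem nontrivial_ASH_one (A : Type*) [AddCommGroup A] [Nontrivial A] {u : K → Circle}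
    (hu : Continuous u) {q : Y → K} (hq : Continuous q) {h : Y → ℝ} (hh : Continuous h)
    (huh : ∀ y, u (q y) = 𝐞 (h y)) {x₀ : K} (hx₀ : ∀ y, h y = 0 ∨ h y = 1 → q y = x₀)
    (hS : ∀ S : Set Y, IsClopen S → h ⁻¹' {0} ⊆ S → (S ∩ h ⁻¹' {1}).Nonempty) :
    Nontrivial (AS.ASH A 1 K) := by
  rw [← not_subsingleton_iff_nontrivial]
  intro hsub
  obtain ⟨a, ha⟩ := exists_ne (0 : A)
  choose g hg using fun x => fourierChar_surjective (u x)
  obtain ⟨ψ, hψ⟩ := AS.exists_eventually_sub_eq_of_subsingleton_ASH hsub hu hg a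
  let χ : Y → A := fun y => ψ (q y) - round (g (q y) - h y) • a
  have hχ : IsLocallyConstant χ :=
    isLocallyConstant_sub_round_zsmul hq hh (fun y => (hg _).trans (huh y)) hψ
  obtain ⟨y, hy, hy1⟩ := hS (χ ⁻¹' {ψ x₀ - round (g x₀) • a}) (hχ.isClopen_fiber _)
    fun y (hy : h y = 0) => by simp [χ, hx₀ y (Or.inl hy), hy]
  have hy1 : h y = 1 := hy1
  simp [χ, hx₀ y (Or.inr hy1), hy1, sub_smul, ha] at hy

variable [T2Space Y] {h : Y → ℝ}

lemma not_compactSpace_preimage_Ioo (hh : Continuous h) (h01 : ∀ y, h y ∈ Icc (0 : ℝ) 1)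
    (hS : ∀ S : Set Y, IsClopen S → h ⁻¹' {0} ⊆ S → (S ∩ h ⁻¹' {1}).Nonempty) :
    ¬CompactSpace (h ⁻¹' Ioo 0 1) := by
  intro hcomp
  have hclosed : IsClosed (h ⁻¹' Ioo 0 1) := (isCompact_iff_compactSpace.2 hcomp).isClosed
  have hzero : h ⁻¹' {0} = h ⁻¹' Iio 1 \ h ⁻¹' Ioo 0 1 := by
    ext y
    simp only [mem_preimage, mem_singleton_iff, mem_sdiff, mem_Iio, mem_Ioo, not_and, not_lt]
    exact ⟨fun hy => by simp [hy], fun hy => ((h01 y).1.eq_of_not_lt fun hpos =>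
      (hy.2 hpos).not_gt hy.1).symm⟩
  obtain ⟨y, hy0, hy1⟩ := hS (h ⁻¹' {0})
    ⟨isClosed_singleton.preimage hh, hzero ▸ (isOpen_Iio.preimage hh).sdiff hclosed⟩ subset_rfl
  exact zero_ne_one ((show h y = 0 from hy0).symm.trans hy1)

theorem nontrivial_Hc_one [CompactSpace Y] (A : Type*) [AddCommGroup A] [Nontrivial A]
    (hh : Continuous h)
    (h01 : ∀ y, h y ∈ Icc (0 : ℝ) 1)
    (hS : ∀ S : Set Y, IsClopen S → h ⁻¹' {0} ⊆ S → (S ∩ h ⁻¹' {1}).Nonempty) :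
    Nontrivial (AS.Hc A 1 (h ⁻¹' Ioo 0 1)) := by
  rw [AS.Hc, if_neg (not_compactSpace_preimage_Ioo hh h01 hS)]
  have hB : IsOpen (h ⁻¹' Ioo 0 1) := isOpen_Ioo.preimage hh
  have : LocallyCompactSpace (h ⁻¹' Ioo 0 1) := hB.locallyCompactSpace
  have he := hB.isOpenEmbedding_subtypeVal
  obtain ⟨y₁, -, hy₁⟩ := hS univ isClopen_univ (subset_univ _)
  have hrange : range ((↑) : h ⁻¹' Ioo 0 1 → Y) ≠ univ := by
    rw [Subtype.range_val]
    exact fun hu => ((hu.ge (mem_univ y₁)).2.ne hy₁).elim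
  let u (w : OnePoint (h ⁻¹' Ioo 0 1)) : Circle := w.elim 1 fun b => 𝐞 (h b)
  have huh : ∀ y, u (collapse Subtype.val y) = 𝐞 (h y) := fun y => by
    by_cases hy : y ∈ h ⁻¹' Ioo 0 1
    · exact congrArg u (collapse_apply Subtype.val_injective ⟨y, hy⟩)
    · rw [collapse_of_notMem (by rwa [Subtype.range_val])]
      rcases eq_endpoints_or_mem_Ioo_of_mem_Icc (h01 y) with h0 | h1 | hmem
      · simp [u, h0]
      · simpa [u, h1] using (fourierChar_intCast 1).symm
      · exact (hy hmem).elim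
  refine nontrivial_ASH_one A (u := u) ?_ (continuous_collapse he) hh huh
    (x₀ := OnePoint.infty) (fun y hy => collapse_of_notMem ?_) hS
  · rw [(isQuotientMap_collapse he hrange).continuous_iff, show u ∘ _ = _ from funext huh]
    exact Real.continuous_fourierChar.comp hh
  · rw [Subtype.range_val]
    rintro ⟨hpos, hlt⟩
    exact hy.elim hpos.ne' hlt.ne

end Nontrivial

end

/-! ### The cohomological dimension of root sets -/

section CohDim

open scoped Topology

variable {ι : Type*} {p : ℕ} {F : ℕ → TorusProd (ι → unitInterval) → ℂ}

lemma inter_face_nonempty_of_isClopen (hp : p.Prime) (hFc : ∀ j, Continuous (F j))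
    (hF : IsTriangular F) (i : ι) {S : Set (rootSet p F)} (hS : IsClopen S)
    (hS0 : {z | z.1.1 i = 0} ⊆ S) : (S ∩ {z | z.1.1 i = 1}).Nonempty := by
  by_contra hS1
  have hY : IsClosed (rootSet p F) := isClosed_rootSet hFc
  let P : Set (TorusProd (ι → unitInterval)) := (↑) '' S ∪ {z | z.1 i = 0}
  let Q : Set (TorusProd (ι → unitInterval)) := (↑) '' Sᶜ ∪ {z | z.1 i = 1}
  have hP : IsClosed P := (hY.isClosedMap_subtype_val _ hS.1).union
    (isClosed_eq (by fun_prop) continuous_const)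
  have hQ : IsClosed Q := (hY.isClosedMap_subtype_val _ hS.compl.1).union
    (isClosed_eq (by fun_prop) continuous_const)
  have hPQ : Disjoint P Q := by
    rw [Set.disjoint_left]
    rintro _ (⟨z, hz, rfl⟩ | hz) (⟨w, hw, hwz⟩ | hw)
    · exact hw (Subtype.ext hwz ▸ hz)
    · exact hS1 ⟨z, hz, hw⟩
    · subst hwz
      exact hw (hS0 hz)
    · exact zero_ne_one ((show _ = _ from hz).symm.trans hw)
  obtain ⟨H, hH0, hH1, -⟩ := exists_continuous_zero_one_of_isClosed hP hQ hPQ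
  obtain ⟨z, hz, hzH⟩ := exists_mem_rootSet_eq_half hp hFc hF (c := fun _ : Fin 1 => i)
    (injective_of_subsingleton _) (H := fun _ => H) (fun _ => H.continuous)
    (fun _ z hz => hH0 (Or.inr hz)) (fun _ z hz => hH1 (Or.inr hz))
  have hhalf : H z = 1 / 2 := hzH 0
  by_cases hzS : (⟨z, hz⟩ : rootSet p F) ∈ S
  · rw [hH0 (Or.inl ⟨_, hzS, rfl⟩)] at hhalf
    norm_num at hhalf
  · rw [hH1 (Or.inl ⟨_, hzS, rfl⟩)] at hhalf
    norm_num at hhalf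

lemma exists_nontrivial_Hc_one_rootSet [Nonempty ι] (hp : p.Prime) (hFc : ∀ j, Continuous (F j))
    (hF : IsTriangular F) (A : Type*) [AddCommGroup A] [Nontrivial A] :
    ∃ B : Set (rootSet p F), LocallyCompactSpace B ∧ Nontrivial (AS.Hc A 1 B) := by
  have : CompactSpace (rootSet p F) :=
    isCompact_iff_compactSpace.1 (isClosed_rootSet hFc).isCompact
  obtain ⟨i⟩ := ‹Nonempty ι›
  let h : rootSet p F → ℝ := fun z => z.1.1 i
  have hh : Continuous h := by fun_prop
  refine ⟨h ⁻¹' Ioo 0 1, (isOpen_Ioo.preimage hh).locallyCompactSpace,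
    nontrivial_Hc_one A hh (fun z => (z.1.1 i).2) fun S hS hS0 => ?_⟩
  obtain ⟨z, hzS, hz⟩ := inter_face_nonempty_of_isClopen hp hFc hF i hS fun z hz =>
    hS0 (congrArg Subtype.val hz)
  exact ⟨z, hzS, congrArg Subtype.val hz⟩

theorem cohDim_le_one_of_powersExtend (hp : p ≠ 0) {Y : Type*} [TopologicalSpace Y]
    [CompactSpace Y] [T2Space Y] (hY : PowersExtend p Y) :
    cohDim (Localization.Away (p : ℤ)) Y ≤ 1 := by
  refine sSup_le ?_
  rintro _ ⟨n, rfl, B, hB, hn⟩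
  by_contra! hlt
  obtain ⟨k, rfl⟩ := Nat.exists_eq_add_of_le' (Nat.one_lt_cast.1 hlt)
  exact not_subsingleton_iff_nontrivial.2 hn (subsingleton_Hc_of_powersExtend hp hY B k)

theorem cohDim_rootSet [Nonempty ι] (hp : p.Prime) {F : ℕ → C(TorusProd (ι → unitInterval), ℂ)}
    (hF : IsTriangular fun j => F j) (hdense : DenseRange F) :
    cohDim (Localization.Away (p : ℤ)) (rootSet p fun j => F j) = 1 := by
  have hFc : ∀ j, Continuous (F j) := fun j => (F j).continuous
  have : CompactSpace (rootSet p fun j => F j) :=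
    isCompact_iff_compactSpace.1 (isClosed_rootSet hFc).isCompact
  have : Nontrivial (Localization.Away (p : ℤ)) :=
    (intCast_localizationAway_injective hp.ne_zero).nontrivial
  exact le_antisymm (cohDim_le_one_of_powersExtend hp.ne_zero (powersExtend_rootSet p hdense))
    (le_sSup ⟨1, rfl, exists_nontrivial_Hc_one_rootSet hp hFc hF _⟩)

end CohDim

/-- **Lemma 6** of the "Strongly infinite-dimensional orbit spaces" section
(Dranishnikov–West): for every prime `p` there is a strongly infinite-dimensional compact
metric space `Y` with cohomological dimension `dim_{ℤ[1/p]} Y = 1`. -/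
theorem exists_SID_compactum_cohDim_away_eq_one (p : ℕ) (hp : p.Prime) :
    ∃ (Y : Type) (_ : MetricSpace Y) (_ : CompactSpace Y),
      StronglyInfiniteDimensional Y ∧
      cohDim (Localization.Away (p : ℤ)) Y = 1 := by
  obtain ⟨F, hdense, hF⟩ := exists_denseRange_isTriangular (X := ℕ → unitInterval)
  have hFc : ∀ j, Continuous (F j) := fun j => (F j).continuous
  exact ⟨rootSet p fun j => F j, TopologicalSpace.metrizableSpaceMetric _,
    isCompact_iff_compactSpace.1 (isClosed_rootSet hFc).isCompact,
    stronglyInfiniteDimensional_rootSet hp hFc hF, cohDim_rootSet hp hF hdense⟩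
end
end

section
/- If f: X → Y is a closed surjective continuous map of metric spaces, then dim X ≤ dim Y + sup{ dim f^{-1}(y) : y ∈ Y }. -/
open Set Function

open scoped ENNReal

noncomputable section

/-! ### Covering dimension -/

/-- `CovDimLE X n` : every open cover of `X` has an open refinement of order at most `n + 1`
(i.e. at most `n + 1` members of the refinement have a common point). -/
def CovDimLE (X : Type*) [TopologicalSpace X] (n : ℕ) : Prop :=
  ∀ U : Set (Set X), (∀ u ∈ U, IsOpen u) → ⋃₀ U = univ →
    ∃ V : Set (Set X), (∀ v ∈ V, IsOpen v) ∧ ⋃₀ V = univ ∧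
      (∀ v ∈ V, ∃ u ∈ U, v ⊆ u) ∧
      ∀ T : Finset (Set X), ↑T ⊆ V → (⋂₀ (T : Set (Set X))).Nonempty → T.card ≤ n + 1

/-- The (Lebesgue) covering dimension of a topological space, valued in `ℕ∞`. -/
noncomputable def covDim (X : Type*) [TopologicalSpace X] : ℕ∞ :=
  sInf {e : ℕ∞ | ∃ n : ℕ, e = (n : ℕ∞) ∧ CovDimLE X n}

/-!
Colorings in the sense of Ostrand replace covers of bounded order: `dim A < m` means that covers of
`A` can be refined by `m` disjoint families of open sets of the ambient space. If `dim Y = n`, then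
`Y` is a union of `n + 1` zero-dimensional sets: in a sequence of colored covers of `Y`, each so
fine that its members meet at most one set of each color of the preceding cover, the chains formed
by sets of one color are small, so the points lying infinitely often in that color form a
zero-dimensional set.

Suppose that the fibers of `f` need `k + 1` colors. Then `k + j` colors suffice for `f ⁻¹' L`, for
every closed set `L` contained in a union of `j` zero-dimensional sets. Indeed, as `f` is closed,
`k + 1` colors suffice over a neighborhood of each point, and the first zero-dimensional set has a
disjoint, locally finite cover by such neighborhoods. The rest of `L` is contained in the other
`j - 1` sets, so `k + j - 1` colors suffice over it. The two colorings are glued as on a mapping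
cylinder, passing from one to the other one color at a time, at the cost of a single extra color.
-/

open Topology TopologicalSpace

section Order

variable {X ι : Type*}

theorem encard_le_of_forall_finset_card_le {s : Set ι} {n : ℕ}
    (h : ∀ T : Finset ι, ↑T ⊆ s → T.card ≤ n) : s.encard ≤ n := by
  by_contra! hlt
  obtain ⟨t, hts, ht⟩ := exists_subset_encard_eq (Order.add_one_le_of_lt hlt)
  have hfin : t.Finite := finite_of_encard_le_coe (k := n + 1) (by exact_mod_cast ht.le)
  lift t to Finset ι using hfin
  have hcard : t.card = n + 1 := by exact_mod_cast ht
  exact absurd (h t hts) (by omega)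

theorem encard_le_of_forall_exists_fin {s : Set ι} {n : ℕ} (R : Fin n → ι → Prop)
    (hR : ∀ i ∈ s, ∃ c, R c i) (huniq : ∀ c i j, R c i → R c j → i = j) : s.encard ≤ n := by
  choose g hg using fun i : s ↦ hR i i.2
  have hinj : Injective g := fun i j hij ↦
    Subtype.ext (huniq (g i) i j (hg i) (hij ▸ hg j))
  simpa using ENat.card_le_card_of_injective hinj

theorem forall_finset_card_le_iff_forall_encard_le {V : Set (Set X)} {n : ℕ} :
    (∀ T : Finset (Set X), ↑T ⊆ V → (⋂₀ (T : Set (Set X))).Nonempty → T.card ≤ n) ↔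
      ∀ x, {v ∈ V | x ∈ v}.encard ≤ n := by
  refine ⟨fun h x ↦ encard_le_of_forall_finset_card_le fun T hT ↦
    h T (fun v hv ↦ (hT hv).1) ⟨x, fun v hv ↦ (hT hv).2⟩, ?_⟩
  rintro h T hT ⟨x, hx⟩
  have hsub : (T : Set (Set X)) ⊆ {v ∈ V | x ∈ v} := fun v hv ↦ ⟨hT hv, hx v hv⟩
  simpa using (encard_le_encard hsub).trans (h x)

theorem CovDimLE.mono [TopologicalSpace X] {k n : ℕ} (h : CovDimLE X k) (hkn : k ≤ n) :
    CovDimLE X n := fun U hU hUX ↦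
  let ⟨V, hV, hVX, hVU, hord⟩ := h U hU hUX
  ⟨V, hV, hVX, hVU, fun T hT hne ↦ (hord T hT hne).trans (by omega)⟩

theorem covDim_le_natCast_iff [TopologicalSpace X] {n : ℕ} : covDim X ≤ n ↔ CovDimLE X n := by
  refine ⟨fun h ↦ ?_, fun h ↦ sInf_le ⟨n, rfl, h⟩⟩
  obtain ⟨_, ⟨k, rfl, hk⟩, hkn⟩ := sInf_lt_iff.1 <|
    h.trans_lt (ENat.natCast_lt_natCast.2 n.lt_succ_self)
  exact hk.mono (Nat.lt_succ_iff.1 (by exact_mod_cast hkn))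

end Order

section Coloring

variable {X Y ι : Type*} [TopologicalSpace X]

/-- `IsDisjointRefinement F U` says that `F` is a disjoint family of open sets, each contained in a
member of `U`; the families `F` and `U` need not have the same union. -/
structure IsDisjointRefinement (F U : Set (Set X)) : Prop where
  isOpen : ∀ b ∈ F, IsOpen b
  refines : ∀ b ∈ F, ∃ u ∈ U, b ⊆ u
  pairwiseDisjoint : F.PairwiseDisjoint id

/-- `HasColoring U A m` says that `A` is covered by `m` disjoint families of open sets refining `U`,
the colors. The members of the families are open and disjoint in the ambient space, not just
in `A`. -/
def HasColoring (U : Set (Set X)) (A : Set X) (m : ℕ) : Prop :=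
  ∃ B : Fin m → Set (Set X), (∀ c, IsDisjointRefinement (B c) U) ∧ A ⊆ ⋃ c, ⋃₀ B c

/-- `ColorCoverable A m` is Ostrand's form of `dim A ≤ m - 1`: every family of open sets covering
`A` has a refinement that covers `A` and splits into `m` disjoint families. In particular
`ColorCoverable A 1` expresses that `A` is zero-dimensional or empty. -/
def ColorCoverable (A : Set X) (m : ℕ) : Prop :=
  ∀ U : Set (Set X), (∀ u ∈ U, IsOpen u) → A ⊆ ⋃₀ U → HasColoring U A m

variable {A A' L : Set X} {F G U U' : Set (Set X)} {m : ℕ}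

theorem IsDisjointRefinement.of_subset (h : IsDisjointRefinement F U) (hGF : G ⊆ F)
    (href : ∀ b ∈ G, ∃ u ∈ U', b ⊆ u) : IsDisjointRefinement G U' where
  isOpen b hb := h.isOpen b (hGF hb)
  refines := href
  pairwiseDisjoint := h.pairwiseDisjoint.subset hGF

theorem IsDisjointRefinement.eq_of_mem (h : IsDisjointRefinement F U) {b b' : Set X} {x : X}
    (hb : b ∈ F) (hb' : b' ∈ F) (hx : x ∈ b) (hx' : x ∈ b') : b = b' :=
  h.pairwiseDisjoint.elim_set hb hb' x hx hx'

theorem IsDisjointRefinement.iUnion_inter {F : ι → Set (Set X)} {O : ι → Set X}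
    (hF : ∀ i, IsDisjointRefinement (F i) U) (hO : ∀ i, IsOpen (O i))
    (hOdisj : Pairwise (Disjoint on O)) :
    IsDisjointRefinement (⋃ i, (· ∩ O i) '' F i) U where
  isOpen := by
    rintro _ ⟨_, ⟨i, rfl⟩, b, hb, rfl⟩
    exact ((hF i).isOpen b hb).inter (hO i)
  refines := by
    rintro _ ⟨_, ⟨i, rfl⟩, b, hb, rfl⟩
    obtain ⟨u, hu, hbu⟩ := (hF i).refines b hb
    exact ⟨u, hu, inter_subset_left.trans hbu⟩
  pairwiseDisjoint := by
    rintro _ ⟨_, ⟨i, rfl⟩, b, hb, rfl⟩ _ ⟨_, ⟨j, rfl⟩, b', hb', rfl⟩ hne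
    refine disjoint_left.2 fun x ⟨hxb, hxi⟩ ⟨hxb', hxj⟩ ↦ hne ?_
    obtain rfl : i = j := hOdisj.eq (not_disjoint_iff.2 ⟨x, hxi, hxj⟩)
    exact congrArg (· ∩ O i) ((hF i).eq_of_mem hb hb' hxb hxb')

theorem IsDisjointRefinement.exists_indexed {w : ι → Set X}
    (h : IsDisjointRefinement F (range w)) :
    ∃ O : ι → Set X, (∀ i, IsOpen (O i)) ∧ Pairwise (Disjoint on O) ∧ (∀ i, O i ⊆ w i) ∧
      ⋃₀ F ⊆ ⋃ i, O i := by
  have href (b : F) : ∃ i, (b : Set X) ⊆ w i := by simpa using h.refines b b.2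
  choose α hα using href
  refine ⟨fun i ↦ ⋃ b ∈ α ⁻¹' {i}, (b : Set X),
    fun i ↦ isOpen_biUnion fun b _ ↦ h.isOpen b b.2, fun i j hij ↦ disjoint_left.2 ?_,
    fun i ↦ iUnion₂_subset fun b hb ↦ hb ▸ hα b, ?_⟩
  · intro x hx hx'
    obtain ⟨b, rfl, hb⟩ := mem_iUnion₂.1 hx
    obtain ⟨b', rfl, hb'⟩ := mem_iUnion₂.1 hx'
    exact hij (congrArg α (Subtype.ext (h.eq_of_mem b.2 b'.2 hb hb')))
  · rintro x ⟨b, hb, hxb⟩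
    exact mem_iUnion.2 ⟨α ⟨b, hb⟩, mem_iUnion₂.2 ⟨⟨b, hb⟩, rfl, hxb⟩⟩

theorem HasColoring.mono (h : HasColoring U A m) (hA : A' ⊆ A)
    (href : ∀ u ∈ U, ∃ u' ∈ U', u ⊆ u') : HasColoring U' A' m := by
  obtain ⟨B, hB, hcov⟩ := h
  refine ⟨B, fun c ↦ (hB c).of_subset subset_rfl fun b hb ↦ ?_, hA.trans hcov⟩
  obtain ⟨u, hu, hbu⟩ := (hB c).refines b hb
  obtain ⟨u', hu', huu'⟩ := href u hu
  exact ⟨u', hu', hbu.trans huu'⟩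

theorem HasColoring.mono_set (h : HasColoring U A m) (hA : A' ⊆ A) : HasColoring U A' m :=
  h.mono hA fun u hu ↦ ⟨u, hu, subset_rfl⟩

theorem HasColoring.exists_isOpen_superset (h : HasColoring U A m) :
    ∃ Q, IsOpen Q ∧ A ⊆ Q ∧ HasColoring U Q m := by
  obtain ⟨B, hB, hcov⟩ := h
  exact ⟨⋃ c, ⋃₀ B c, isOpen_iUnion fun c ↦ isOpen_sUnion (hB c).isOpen, hcov, B, hB, subset_rfl⟩

theorem HasColoring.exists_preimage_of_isClosedMap [TopologicalSpace Y] {f : X → Y}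
    (hf : IsClosedMap f) {y : Y} (h : HasColoring U (f ⁻¹' {y}) m) :
    ∃ W, IsOpen W ∧ y ∈ W ∧ HasColoring U (f ⁻¹' W) m := by
  obtain ⟨Q, hQo, hyQ, hQ⟩ := h.exists_isOpen_superset
  exact ⟨kernImage f Q, isClosedMap_iff_kernImage.1 hf hQo, fun x hx ↦ hyQ hx,
    hQ.mono_set (subset_kernImage_iff.1 subset_rfl)⟩

theorem ColorCoverable.inter_isClosed (h : ColorCoverable A m) (hL : IsClosed L) :
    ColorCoverable (A ∩ L) m := by
  intro U hU hAU
  obtain ⟨B, hB, hcov⟩ := h (insert Lᶜ U) (forall_mem_insert.2 ⟨hL.isOpen_compl, hU⟩) <| by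
    rwa [sUnion_insert, ← sdiff_subset_iff, sdiff_compl]
  refine ⟨fun c ↦ {b ∈ B c | (b ∩ L).Nonempty},
    fun c ↦ (hB c).of_subset (sep_subset _ _) ?_, ?_⟩
  · rintro b ⟨hb, x, hxb, hxL⟩
    obtain ⟨u, rfl | hu, hbu⟩ := (hB c).refines b hb
    · exact absurd hxL (hbu hxb)
    · exact ⟨u, hu, hbu⟩
  · rintro x ⟨hxA, hxL⟩
    obtain ⟨c, b, hb, hxb⟩ := mem_iUnion.1 (hcov hxA)
    exact mem_iUnion.2 ⟨c, b, ⟨hb, x, hxb, hxL⟩, hxb⟩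

theorem encard_le_of_isDisjointRefinement {B : Fin m → Set (Set X)}
    (hB : ∀ c, IsDisjointRefinement (B c) U) (x : X) : {v ∈ ⋃ c, B c | x ∈ v}.encard ≤ m :=
  encard_le_of_forall_exists_fin (fun c v ↦ v ∈ B c ∧ x ∈ v)
    (fun _ hv ↦ let ⟨c, hc⟩ := mem_iUnion.1 hv.1; ⟨c, hc, hv.2⟩)
    fun c _ _ hv hw ↦ (hB c).eq_of_mem hv.1 hw.1 hv.2 hw.2

theorem ColorCoverable.covDimLE {n : ℕ} (h : ColorCoverable (univ : Set X) (n + 1)) :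
    CovDimLE X n := by
  intro U hU hUX
  obtain ⟨B, hB, hcov⟩ := h U hU hUX.ge
  refine ⟨⋃ c, B c, ?_, ?_, ?_, forall_finset_card_le_iff_forall_encard_le.2
    (encard_le_of_isDisjointRefinement hB)⟩
  · exact fun v hv ↦ let ⟨c, hc⟩ := mem_iUnion.1 hv; (hB c).isOpen v hc
  · rw [sUnion_iUnion]
    exact univ_subset_iff.1 hcov
  · exact fun v hv ↦ let ⟨c, hc⟩ := mem_iUnion.1 hv; (hB c).refines v hc

theorem ColorCoverable.exists_disjoint_locallyFinite [ParacompactSpace X] [NormalSpace X]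
    (h : ColorCoverable A 1) (hL : IsClosed L) {W : ι → Set X} (hW : ∀ i, IsOpen (W i))
    (hLW : L ⊆ ⋃ i, W i) :
    ∃ O : ι → Set X, (∀ i, IsOpen (O i)) ∧ Pairwise (Disjoint on O) ∧ LocallyFinite O ∧
      (∀ i, closure (O i) ⊆ W i) ∧ A ∩ L ⊆ ⋃ i, O i := by
  obtain ⟨w, hw, hLw, hwfin, hwW⟩ := precise_refinement_set hL W hW hLW
  obtain ⟨v, hLv, hv, hvw⟩ :=
    exists_subset_iUnion_closure_subset hL hw (fun x _ ↦ hwfin.point_finite x) hLw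
  obtain ⟨B, hB, hcov⟩ := h.inter_isClosed hL (range v) (forall_mem_range.2 hv)
    (inter_subset_right.trans hLv)
  obtain ⟨O, hO, hOdisj, hOv, hBO⟩ := (hB 0).exists_indexed
  refine ⟨O, hO, hOdisj, hwfin.subset fun i ↦ (hOv i).trans (subset_closure.trans (hvw i)),
    fun i ↦ (closure_mono (hOv i)).trans ((hvw i).trans (hwW i)), ?_⟩
  rw [← iSup_eq_iUnion, iSup_unique] at hcov
  exact hcov.trans hBO

end Coloring

section Ostrand

variable {X ι : Type*} [PseudoEMetricSpace X]

/-- The points whose distance to the complement of `E i` exceeds some common `r` for exactly the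
`i ∈ S`. For `S` of a given size these sets are disjoint: they form a color in Ostrand's theorem. -/
def depthStratum (E : ι → Set X) (S : Finset ι) : Set X :=
  {x | ∃ r, (∀ i ∈ S, r < Metric.infEDist x (E i)ᶜ) ∧ ∀ j ∉ S, Metric.infEDist x (E j)ᶜ ≤ r}

theorem isOpen_depthStratum (E : ι → Set X) {S : Finset ι} (hS : S.Nonempty) :
    IsOpen (depthStratum E S) := by
  rw [isOpen_iff_mem_nhds]
  rintro x ⟨r, hin, hout⟩
  obtain ⟨r', hrr', hr'⟩ := exists_between ((Finset.lt_inf'_iff hS).2 hin)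
  have hin' : ∀ᶠ y in 𝓝 x, ∀ i ∈ S, r' < Metric.infEDist y (E i)ᶜ :=
    (Filter.eventually_all_finset S).2 fun i hi ↦
      Metric.continuous_infEDist.continuousAt.eventually_const_lt
        ((Finset.lt_inf'_iff hS).1 hr' i hi)
  have hnear : ∀ᶠ y in 𝓝 x, r + edist y x < r' := by
    have hcont : Continuous fun y ↦ r + edist y x := by fun_prop
    exact hcont.continuousAt.eventually_lt_const (by simpa using hrr')
  filter_upwards [hin', hnear] with y hy hyx
  refine ⟨r', hy, fun j hj ↦ ?_⟩
  calc Metric.infEDist y (E j)ᶜ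
      ≤ Metric.infEDist x (E j)ᶜ + edist y x := Metric.infEDist_le_infEDist_add_edist
    _ ≤ r + edist y x := by gcongr; exact hout j hj
    _ ≤ r' := hyx.le

theorem eq_of_mem_depthStratum {E : ι → Set X} {S S' : Finset ι} (hcard : S.card = S'.card)
    {x : X} (hx : x ∈ depthStratum E S) (hx' : x ∈ depthStratum E S') : S = S' := by
  obtain ⟨r, hin, hout⟩ := hx
  obtain ⟨r', hin', hout'⟩ := hx'
  by_contra hne
  obtain ⟨i, hi, hi'⟩ := Finset.not_subset.1 fun h ↦ hne (Finset.eq_of_subset_of_card_le h hcard.ge)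
  obtain ⟨j, hj, hj'⟩ := Finset.not_subset.1 fun h ↦
    hne (Finset.eq_of_subset_of_card_le h hcard.le).symm
  exact lt_asymm ((hin i hi).trans_le (hout' i hi')) ((hin' j hj).trans_le (hout j hj'))

theorem depthStratum_subset {E : ι → Set X} {S : Finset ι} {i : ι} (hi : i ∈ S) :
    depthStratum E S ⊆ E i := by
  rintro x ⟨r, hin, -⟩
  by_contra hx
  exact not_lt_zero ((hin i hi).trans_eq (Metric.infEDist_zero_of_mem hx))

theorem mem_depthStratum {E : ι → Set X} (hE : ∀ i, IsOpen (E i)) {S : Finset ι} {x : X}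
    (hS : ∀ i, i ∈ S ↔ x ∈ E i) : x ∈ depthStratum E S := by
  refine ⟨0, fun i hi ↦ ?_, fun j hj ↦ ?_⟩
  · rw [Metric.infEDist_pos_iff_notMem_closure, (hE i).isClosed_compl.closure_eq, notMem_compl_iff]
    exact (hS i).1 hi
  · exact (Metric.infEDist_zero_of_mem ((hS j).not.1 hj)).le

theorem hasColoring_range_of_encard_le {E : ι → Set X} (hE : ∀ i, IsOpen (E i)) {A : Set X}
    {m : ℕ} (hcov : A ⊆ ⋃ i, E i) (hord : ∀ x ∈ A, {i | x ∈ E i}.encard ≤ m) :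
    HasColoring (range E) A m := by
  refine ⟨fun c ↦ depthStratum E '' {S | S.card = c + 1}, fun c ↦ ⟨?_, ?_, ?_⟩, fun x hx ↦ ?_⟩
  · rintro _ ⟨S, hS, rfl⟩
    exact isOpen_depthStratum E (Finset.card_pos.1 (c.1.succ_pos.trans_eq hS.symm))
  · rintro _ ⟨S, hS, rfl⟩
    obtain ⟨i, hi⟩ := Finset.card_pos.1 (c.1.succ_pos.trans_eq hS.symm)
    exact ⟨E i, mem_range_self i, depthStratum_subset hi⟩
  · rintro _ ⟨S, hS, rfl⟩ _ ⟨S', hS', rfl⟩ hne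
    refine disjoint_left.2 fun x hx hx' ↦ hne ?_
    rw [eq_of_mem_depthStratum (hS.trans hS'.symm) hx hx']
  · obtain ⟨S, hS⟩ := (finite_of_encard_le_coe (hord x hx)).exists_finset_coe
    have hmem (i : ι) : i ∈ S ↔ x ∈ E i := Set.ext_iff.1 hS i
    have hcard : S.card ≤ m := by simpa [← hS] using hord x hx
    obtain ⟨i, hi⟩ := mem_iUnion.1 (hcov hx)
    have hpos : 0 < S.card := Finset.card_pos.2 ⟨i, (hmem i).2 hi⟩
    exact mem_iUnion.2 ⟨⟨S.card - 1, by omega⟩, _, ⟨S, by simp; omega, rfl⟩,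
      mem_depthStratum hE hmem⟩

theorem CovDimLE.colorCoverable_range {W : Type*} [TopologicalSpace W] {e : W → X}
    (he : IsInducing e) {n : ℕ} (h : CovDimLE W n) : ColorCoverable (range e) (n + 1) := by
  intro U hU hAU
  obtain ⟨V, hV, hVW, hVU, hord⟩ := h (preimage e '' U)
    (forall_mem_image.2 fun u hu ↦ (hU u hu).preimage he.continuous)
    (by rwa [sUnion_image, ← preimage_iUnion₂, ← sUnion_eq_biUnion, preimage_eq_univ_iff])
  have hext (v : V) : ∃ w : Set X, IsOpen w ∧ (∃ u ∈ U, w ⊆ u) ∧ e ⁻¹' w = v := by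
    obtain ⟨w, hw, hwv⟩ := he.isOpen_iff.1 (hV v v.2)
    obtain ⟨_, ⟨u, hu, rfl⟩, hvu⟩ := hVU v v.2
    refine ⟨w ∩ u, hw.inter (hU u hu), ⟨u, hu, inter_subset_right⟩, ?_⟩
    rw [preimage_inter, hwv, inter_eq_left.2 hvu]
  choose E hE hEU hEV using hext
  refine (hasColoring_range_of_encard_le hE ?_ ?_).mono subset_rfl (forall_mem_range.2 hEU)
  · rintro _ ⟨x, rfl⟩
    obtain ⟨v, hv, hxv⟩ : x ∈ ⋃₀ V := hVW ▸ mem_univ x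
    exact mem_iUnion.2 ⟨⟨v, hv⟩, (hEV ⟨v, hv⟩).ge hxv⟩
  · rintro _ ⟨x, rfl⟩
    have himage : Subtype.val '' {v : V | e x ∈ E v} ⊆ {v ∈ V | x ∈ v} := by
      rintro _ ⟨v, hv, rfl⟩
      exact ⟨v.2, (hEV v).le hv⟩
    rw [← Subtype.val_injective.encard_image]
    exact (encard_le_encard himage).trans (forall_finset_card_le_iff_forall_encard_le.1 hord x)

end Ostrand

section Chain

variable {X : Type*} {A b : Set X} {F G : Set (Set X)} {x y : X}

/-- The points that can be joined to `x` by a finite chain of members of `F`, consecutive members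
meeting; just `x` itself if no member of `F` contains `x`. -/
def chainComponent (F : Set (Set X)) (x : X) : Set X :=
  {y | Relation.ReflTransGen (fun a b ↦ ∃ s ∈ F, a ∈ s ∧ b ∈ s) x y}

theorem mem_chainComponent_self (F : Set (Set X)) (x : X) : x ∈ chainComponent F x :=
  Relation.ReflTransGen.refl

theorem subset_chainComponent (hb : b ∈ F) (h : (b ∩ chainComponent F x).Nonempty) :
    b ⊆ chainComponent F x :=
  let ⟨_, hzb, hz⟩ := h
  fun _ hy ↦ hz.tail ⟨b, hb, hzb, hy⟩

theorem chainComponent_subset (hx : x ∈ A) (hA : ∀ b ∈ F, (b ∩ A).Nonempty → b ⊆ A) :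
    chainComponent F x ⊆ A := by
  intro y hy
  induction hy with
  | refl => exact hx
  | tail _ hstep hmem =>
    obtain ⟨b, hb, hzb, hyb⟩ := hstep
    exact hA b hb ⟨_, hzb, hmem⟩ hyb

theorem chainComponent_mono (hFG : F ⊆ G) : chainComponent F x ⊆ chainComponent G x :=
  chainComponent_subset (mem_chainComponent_self G x) fun _ hb ↦ subset_chainComponent (hFG hb)

theorem chainComponent_eq_of_mem (hy : y ∈ chainComponent F x) :
    chainComponent F y = chainComponent F x := by
  have : Std.Symm fun a b : X ↦ ∃ s ∈ F, a ∈ s ∧ b ∈ s :=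
    ⟨fun _ _ ⟨s, hs, ha, hb⟩ ↦ ⟨s, hs, hb, ha⟩⟩
  exact Subset.antisymm (fun z hz ↦ Relation.ReflTransGen.trans hy hz)
    fun z hz ↦ (symm_of (Relation.ReflTransGen _) hy).trans hz

theorem chainComponent_iUnion_subset {F : ℕ → Set (Set X)} (hF : Monotone F) :
    chainComponent (⋃ n, F n) x ⊆ ⋃ n, chainComponent (F n) x := by
  refine chainComponent_subset (mem_iUnion.2 ⟨0, mem_chainComponent_self _ x⟩) ?_
  rintro b hb ⟨y, hyb, hy⟩
  obtain ⟨k, hk⟩ := mem_iUnion.1 hb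
  obtain ⟨n, hn⟩ := mem_iUnion.1 hy
  exact (subset_chainComponent (hF (le_max_left k n) hk)
    ⟨y, hyb, chainComponent_mono (hF (le_max_right k n)) hn⟩).trans
    (subset_iUnion (fun n ↦ chainComponent (F n) x) _)

theorem isOpen_chainComponent [TopologicalSpace X] (hF : ∀ b ∈ F, IsOpen b) (hx : x ∈ ⋃₀ F) :
    IsOpen (chainComponent F x) := by
  rw [isOpen_iff_forall_mem_open]
  intro y hy
  obtain ⟨b, hb, hyb⟩ : y ∈ ⋃₀ F :=
    chainComponent_subset hx (fun b hb _ ↦ subset_sUnion_of_mem hb) hy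
  exact ⟨b, subset_chainComponent hb ⟨y, hyb, hy⟩, hF b hb, hyb⟩

theorem colorCoverable_one_of_antitone [TopologicalSpace X] {G : ℕ → Set (Set X)}
    (hanti : Antitone G) (hopen : ∀ n, ∀ b ∈ G n, IsOpen b)
    (hsmall : ∀ x, ∀ u ∈ 𝓝 x, ∃ n, chainComponent (G n) x ⊆ u) :
    ColorCoverable (⋂ n, ⋃₀ G n) 1 := by
  classical
  intro U hU hcov
  have hfine (x : (⋂ n, ⋃₀ G n : Set X)) : ∃ n, ∃ u ∈ U, chainComponent (G n) x ⊆ u := by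
    obtain ⟨u, hu, hxu⟩ := hcov x.2
    obtain ⟨n, hn⟩ := hsmall x u ((hU u hu).mem_nhds hxu)
    exact ⟨n, u, hu, hn⟩
  let C (x : (⋂ n, ⋃₀ G n : Set X)) : Set X := chainComponent (G (Nat.find (hfine x))) x
  refine ⟨fun _ ↦ range C, fun _ ↦ ⟨?_, ?_, ?_⟩, fun x hx ↦ ?_⟩
  · exact forall_mem_range.2 fun x ↦ isOpen_chainComponent (hopen _) (mem_iInter.1 x.2 _)
  · exact forall_mem_range.2 fun x ↦ Nat.find_spec (hfine x)
  · rintro _ ⟨x, rfl⟩ _ ⟨y, rfl⟩ hne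
    refine disjoint_left.2 fun z hzx hzy ↦ hne ?_
    wlog hle : Nat.find (hfine x) ≤ Nat.find (hfine y) generalizing x y
    · exact (this y x hne.symm hzy hzx (le_of_not_ge hle)).symm
    have hyx : chainComponent (G (Nat.find (hfine x))) y = C x :=
      (chainComponent_eq_of_mem (chainComponent_mono (hanti hle) hzy)).symm.trans
        (chainComponent_eq_of_mem hzx)
    have hfind : Nat.find (hfine y) = Nat.find (hfine x) :=
      (Nat.find_min' (hfine y) (hyx ▸ Nat.find_spec (hfine x))).antisymm hle
    rw [← hyx, ← hfind]
  · exact mem_iUnion.2 ⟨0, C ⟨x, hx⟩, mem_range_self _, mem_chainComponent_self _ _⟩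

end Chain

section Interposed

variable {X : Type*} [TopologicalSpace X] {F U : Set (Set X)} {A : Set X} {N : ℕ}

/-- The family `B` lies between the open covers `w` and `w'`, given as assignments of neighborhoods
to points: the union of all `w' x` meeting a member of `B` is contained in some `w z`, while no
`w' x` meets two members of `B`. -/
structure IsInterposed (w w' : ∀ x : X, OpenNhdsOf x) (B : Set (Set X)) : Prop where
  isOpen : ∀ b ∈ B, IsOpen b
  le : w' ≤ w
  exists_star_subset : ∀ b ∈ B, ∃ z, ∀ x, (b ∩ w' x).Nonempty → (w' x : Set X) ⊆ w z
  eq_of_nonempty_inter : ∀ b ∈ B, ∀ b' ∈ B, ∀ x, (b ∩ w' x).Nonempty → (b' ∩ w' x).Nonempty →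
    b = b'

theorem IsInterposed.exists_chainComponent_subset {w w' : ∀ x : X, OpenNhdsOf x}
    {B G : Set (Set X)} (h : IsInterposed w w' B)
    (hG : ∀ x, ∃ z, chainComponent G x ⊆ w' z) (x : X) :
    ∃ z, chainComponent (B ∪ G) x ⊆ w z := by
  choose t ht using hG
  by_cases hB : ∃ b ∈ B, (b ∩ chainComponent G x).Nonempty
  · obtain ⟨b, hb, y, hyb, hy⟩ := hB
    have hmeet {z : X} (hz : z ∈ b) : (b ∩ w' (t z)).Nonempty :=
      ⟨z, hz, ht z (mem_chainComponent_self G z)⟩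
    obtain ⟨z, hz⟩ := h.exists_star_subset b hb
    refine ⟨z, (chainComponent_subset (A := ⋃ z ∈ b, chainComponent G z) ?_ ?_).trans <|
      iUnion₂_subset fun z' hz' ↦ (ht z').trans (hz _ (hmeet hz'))⟩
    · exact mem_biUnion hyb (chainComponent_eq_of_mem hy ▸ mem_chainComponent_self G x)
    · rintro g hg ⟨p, hpg, hp⟩
      obtain ⟨q, hqb, hpq⟩ := mem_iUnion₂.1 hp
      rcases hg with hg | hg
      · obtain rfl := h.eq_of_nonempty_inter g hg b hb (t q) ⟨p, hpg, ht q hpq⟩ (hmeet hqb)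
        exact fun p' hp' ↦ mem_biUnion hp' (mem_chainComponent_self G p')
      · exact (subset_chainComponent hg ⟨p, hpg, hpq⟩).trans
          (subset_biUnion_of_mem (u := fun z ↦ chainComponent G z) hqb)
  · refine ⟨t x, (chainComponent_subset (mem_chainComponent_self G x) ?_).trans
      ((ht x).trans (h.le (t x)))⟩
    rintro g (hg | hg) hne
    · exact absurd ⟨g, hg, hne⟩ hB
    · exact subset_chainComponent hg hne

theorem exists_chainComponent_biUnion_subset {w : ℕ → ∀ x : X, OpenNhdsOf x}
    {B : ℕ → Set (Set X)} (h : ∀ n, IsInterposed (w n) (w (n + 1)) (B n)) (d : ℕ) (x : X) :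
    ∃ z, chainComponent (⋃ n < d, B n) x ⊆ w 0 z := by
  induction d generalizing w B x with
  | zero => exact ⟨x, chainComponent_subset (w 0 x).mem (by simp)⟩
  | succ d ih =>
    rw [biUnion_lt_succ']
    exact (h 0).exists_chainComponent_subset (fun x ↦ ih (fun n ↦ h (n + 1)) x) x

theorem IsDisjointRefinement.exists_openNhdsOf (h : IsDisjointRefinement F U)
    (hA : closure A ⊆ ⋃₀ F) (x : X) :
    ∃ v : OpenNhdsOf x, ∀ b ∈ F, (b ∩ A ∩ v).Nonempty → (v : Set X) ⊆ b := by
  by_cases hx : x ∈ closure A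
  · obtain ⟨b, hb, hxb⟩ := hA hx
    refine ⟨⟨⟨b, h.isOpen b hb⟩, hxb⟩, ?_⟩
    rintro b' hb' ⟨y, ⟨hyb', -⟩, hyb⟩
    exact (h.eq_of_mem hb hb' hyb hyb').subset
  · refine ⟨⟨⟨(closure A)ᶜ, isClosed_closure.isOpen_compl⟩, hx⟩, ?_⟩
    rintro b - ⟨y, ⟨-, hyA⟩, hy⟩
    exact absurd (subset_closure hyA) hy

theorem ColorCoverable.exists_isInterposed [NormalSpace X] (h : ColorCoverable (univ : Set X) N)
    (w e : ∀ x : X, OpenNhdsOf x) :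
    ∃ (w' : ∀ x : X, OpenNhdsOf x) (B : Fin N → Set (Set X)),
      w' ≤ e ∧ ⋃ c, ⋃₀ B c = univ ∧ ∀ c, IsInterposed w w' (B c) := by
  obtain ⟨B, hB, hcov⟩ := h (range fun x ↦ (w x : Set X))
    (forall_mem_range.2 fun x ↦ (w x).isOpen) fun x _ ↦ ⟨w x, mem_range_self x, (w x).mem⟩
  obtain ⟨F, hFcov, hFo, hF⟩ := exists_iUnion_eq_closure_subset
    (fun c ↦ isOpen_sUnion (hB c).isOpen) (fun x ↦ toFinite _) (univ_subset_iff.1 hcov)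
  choose v hv using fun c ↦ (hB c).exists_openNhdsOf (hF c)
  let w' (x : X) : OpenNhdsOf x := w x ⊓ e x ⊓ Finset.univ.inf fun c ↦ v c x
  have hw'v (c : Fin N) (x : X) : w' x ≤ v c x :=
    inf_le_right.trans (Finset.inf_le (Finset.mem_univ c))
  have hkey {c : Fin N} {b : Set X} (hb : b ∈ B c) {x : X} (hx : (b ∩ F c ∩ w' x).Nonempty) :
      (v c x : Set X) ⊆ b :=
    hv c x b hb (hx.mono (inter_subset_inter_right _ (hw'v c x)))
  refine ⟨w', fun c ↦ (· ∩ F c) '' B c, fun x ↦ inf_le_left.trans inf_le_right, ?_,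
    fun c ↦ ⟨?_, fun x ↦ inf_le_left.trans inf_le_left, ?_, ?_⟩⟩
  · rw [← hFcov]
    refine iUnion_congr fun c ↦ ?_
    rw [sUnion_image, ← iUnion₂_inter, ← sUnion_eq_biUnion]
    exact inter_eq_right.2 (subset_closure.trans (hF c))
  · exact forall_mem_image.2 fun b hb ↦ ((hB c).isOpen b hb).inter (hFo c)
  · refine forall_mem_image.2 fun b hb ↦ ?_
    obtain ⟨_, ⟨z, rfl⟩, hbz⟩ := (hB c).refines b hb
    exact ⟨z, fun x hx ↦ Subset.trans (hw'v c x) ((hkey hb hx).trans hbz)⟩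
  · refine forall_mem_image.2 fun b hb ↦ forall_mem_image.2 fun b' hb' x hx hx' ↦ ?_
    exact congrArg (· ∩ F c)
      ((hB c).eq_of_mem hb hb' (hkey hb hx (v c x).mem) (hkey hb' hx' (v c x).mem))

theorem ColorCoverable.exists_isInterposed_seq [NormalSpace X]
    (h : ColorCoverable (univ : Set X) N) (e : ℕ → ∀ x : X, OpenNhdsOf x) :
    ∃ (w : ℕ → ∀ x : X, OpenNhdsOf x) (B : ℕ → Fin N → Set (Set X)),
      w ≤ e ∧ (∀ n, ⋃ c, ⋃₀ B n c = univ) ∧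
        ∀ n c, IsInterposed (w n) (w (n + 1)) (B n c) := by
  choose w' B hle hcov hB using h.exists_isInterposed
  let w (n : ℕ) : ∀ x : X, OpenNhdsOf x := Nat.rec (e 0) (fun n wn ↦ w' wn (e (n + 1))) n
  refine ⟨w, fun n ↦ B (w n) (e (n + 1)), fun n ↦ ?_, fun n ↦ hcov _ _, fun n ↦ hB _ _⟩
  cases n with
  | zero => exact le_rfl
  | succ n => exact hle _ _

end Interposed

section Decomposition

variable {X : Type*} [PseudoMetricSpace X]

theorem dist_lt_of_mem_chainComponent_iUnion {w : ℕ → ∀ x : X, OpenNhdsOf x} {B : ℕ → Set (Set X)}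
    (h : ∀ n, IsInterposed (w n) (w (n + 1)) (B n)) {r : ℝ}
    (hr : ∀ x, (w 0 x : Set X) ⊆ Metric.ball x r) {x y : X}
    (hy : y ∈ chainComponent (⋃ n, B n) x) : dist y x < r + r := by
  have hmono : Monotone fun d ↦ ⋃ n < d, B n := fun d d' hd ↦
    biUnion_subset_biUnion_left fun n hn ↦ lt_of_lt_of_le hn hd
  have hunion : ⋃ n, B n ⊆ ⋃ d, ⋃ n < d, B n := iUnion_subset fun n ↦
    subset_iUnion_of_subset (n + 1) (subset_biUnion_of_mem (u := B) n.lt_succ_self)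
  obtain ⟨d, hd⟩ := mem_iUnion.1 <|
    chainComponent_iUnion_subset hmono (chainComponent_mono hunion hy)
  obtain ⟨z, hz⟩ := exists_chainComponent_biUnion_subset h d x
  exact (dist_triangle_right y x z).trans_lt
    (add_lt_add (hr z (hz hd)) (hr z (hz (mem_chainComponent_self _ x))))

theorem ColorCoverable.exists_decomposition {N : ℕ} (h : ColorCoverable (univ : Set X) N) :
    ∃ Z : Fin N → Set X, ⋃ c, Z c = univ ∧ ∀ c, ColorCoverable (Z c) 1 := by
  obtain ⟨w, B, hwe, hcov, hB⟩ := h.exists_isInterposed_seq fun n x ↦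
    ⟨⟨Metric.ball x (1 / (n + 1)), Metric.isOpen_ball⟩,
      Metric.mem_ball_self Nat.one_div_pos_of_nat⟩
  let G (c : Fin N) (n : ℕ) : Set (Set X) := ⋃ i, B (n + i) c
  refine ⟨fun c ↦ ⋂ n, ⋃₀ G c n, ?_, fun c ↦ colorCoverable_one_of_antitone ?_ ?_ ?_⟩
  · refine eq_univ_of_forall fun x ↦ ?_
    have hfreq : ∃ᶠ n in Filter.atTop, ∃ c, x ∈ ⋃₀ B n c :=
      (Filter.Eventually.of_forall fun n ↦ mem_iUnion.1 (hcov n ▸ mem_univ x)).frequently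
    obtain ⟨c, hc⟩ := Filter.frequently_exists.1 hfreq
    refine mem_iUnion.2 ⟨c, mem_iInter.2 fun n ↦ ?_⟩
    obtain ⟨_, hn, b, hb, hxb⟩ := Filter.frequently_atTop.1 hc n
    obtain ⟨i, rfl⟩ := Nat.exists_eq_add_of_le hn
    exact ⟨b, mem_iUnion.2 ⟨i, hb⟩, hxb⟩
  · refine antitone_nat_of_succ_le fun n ↦ iUnion_subset fun i ↦ ?_
    exact subset_iUnion_of_subset (1 + i) (by rw [← add_assoc])
  · intro n b hb
    obtain ⟨i, hi⟩ := mem_iUnion.1 hb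
    exact (hB _ c).isOpen b hi
  · intro x u hu
    obtain ⟨ε, hε, hεu⟩ := Metric.mem_nhds_iff.1 hu
    obtain ⟨n, hn⟩ := exists_nat_one_div_lt (half_pos hε)
    refine ⟨n, fun y hy ↦ hεu ?_⟩
    have hdist := dist_lt_of_mem_chainComponent_iUnion (w := fun i ↦ w (n + i))
      (fun i ↦ hB (n + i) c) (hwe n) hy
    rw [Metric.mem_ball]
    linarith

end Decomposition

section Cylinder

variable {X ι : Type*} {m : ℕ} {μ : X → ℝ} {B : Fin m → Set (Set X)} {V : ι → Set X}
  {W : Fin m → ι → Set X}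

/-- Interpolates between the colored cover `B`, used where `μ ≤ 1`, and the cover `V`, used where
`μ > 2 * m + 1`. The families in between are the `W c`, with `W c i ⊆ V i`, that refine `V` and
replace the color `B c` as `μ` goes through the interval `(2 * c + 1, 2 * c + 2)`. These intervals
are disjoint, so only one color at a time has both of its families in use. -/
def cylinderCover (μ : X → ℝ) (B : Fin m → Set (Set X)) (V : ι → Set X) (W : Fin m → ι → Set X) :
    (Σ c, B c) ⊕ ι → Set X
  | .inl ⟨c, b⟩ => b ∩ {x | μ x < 2 * c + 2}
  | .inr i => V i ∩ {x | 2 * m + 1 < μ x} ∪ ⋃ c, W c i ∩ {x | 2 * c + 1 < μ x}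

theorem isOpen_cylinderCover [TopologicalSpace X] (hμ : Continuous μ)
    (hB : ∀ c, ∀ b ∈ B c, IsOpen b) (hV : ∀ i, IsOpen (V i)) (hW : ∀ c i, IsOpen (W c i))
    (k : (Σ c, B c) ⊕ ι) : IsOpen (cylinderCover μ B V W k) := by
  rcases k with ⟨c, b⟩ | i
  · exact (hB c b b.2).inter (isOpen_lt hμ continuous_const)
  · exact ((hV i).inter (isOpen_lt continuous_const hμ)).union
      (isOpen_iUnion fun c ↦ (hW c i).inter (isOpen_lt continuous_const hμ))

theorem cylinderCover_inr_subset (hWV : ∀ c i, W c i ⊆ V i) (i : ι) :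
    cylinderCover μ B V W (.inr i) ⊆ V i :=
  union_subset inter_subset_left (iUnion_subset fun c ↦ inter_subset_left.trans (hWV c i))

theorem mem_iUnion_cylinderCover {x : X} (hVx : 2 * m + 1 < μ x → x ∈ ⋃ i, V i)
    (hBx : μ x ≤ 2 * m + 1 → x ∈ ⋃ c, ⋃₀ B c)
    (hWx : ∀ c, 0 < μ x → x ∈ ⋃₀ B c → x ∈ ⋃ i, W c i) :
    x ∈ ⋃ k, cylinderCover μ B V W k := by
  rcases lt_or_ge (2 * m + 1 : ℝ) (μ x) with hx | hx
  · obtain ⟨i, hi⟩ := mem_iUnion.1 (hVx hx)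
    exact mem_iUnion.2 ⟨.inr i, Or.inl ⟨hi, hx⟩⟩
  · obtain ⟨c, b, hb, hxb⟩ := mem_iUnion.1 (hBx hx)
    rcases lt_or_ge (μ x) (2 * c + 2) with hc | hc
    · exact mem_iUnion.2 ⟨.inl ⟨c, b, hb⟩, hxb, hc⟩
    · have hμx : (2 * c + 1 : ℝ) < μ x := by linarith
      have hpos : 0 < μ x := by linarith [c.1.cast_nonneg (α := ℝ)]
      obtain ⟨i, hi⟩ := mem_iUnion.1 (hWx c hpos ⟨b, hb, hxb⟩)
      exact mem_iUnion.2 ⟨.inr i, Or.inr (mem_iUnion.2 ⟨c, hi, hμx⟩)⟩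

theorem encard_cylinderCover_le_of_lt (hWV : ∀ c i, W c i ⊆ V i) {x : X}
    (hx : 2 * m + 1 < μ x) :
    {k | x ∈ cylinderCover μ B V W k}.encard ≤ {i | x ∈ V i}.encard := by
  have himage : {k | x ∈ cylinderCover μ B V W k} ⊆ Sum.inr '' {i | x ∈ V i} := by
    rintro (⟨c, b⟩ | i) hk
    · have hμx : μ x < 2 * c + 2 := hk.2
      have hc : (c + 1 : ℝ) ≤ m := by exact_mod_cast c.2
      linarith
    · exact ⟨i, cylinderCover_inr_subset (B := B) hWV i hk, rfl⟩
  exact (encard_le_encard himage).trans_eq (Sum.inr_injective.encard_image _)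

theorem encard_cylinderCover_le_of_le (hB : ∀ c, (B c).PairwiseDisjoint id)
    (hW : ∀ c, Pairwise (Disjoint on W c)) {x : X} (hx : μ x ≤ 2 * m + 1) :
    {k | x ∈ cylinderCover μ B V W k}.encard ≤ (m + 1 : ℕ) := by
  let color (n : Fin (m + 1)) : (Σ c, B c) ⊕ ι → Prop
    | .inl ⟨c, b⟩ => n = c.succ ∧ x ∈ (b : Set X) ∧ μ x < 2 * c + 2
    | .inr i => ∃ c : Fin m, n = c.castSucc ∧ x ∈ W c i ∧ 2 * c + 1 < μ x
  have hsep {n : Fin (m + 1)} {c c' : Fin m} (hc : n = c.succ) (hc' : n = c'.castSucc)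
      (hlt : μ x < 2 * c + 2) (hgt : 2 * c' + 1 < μ x) : False := by
    have hcc' : (c' : ℝ) = c + 1 := by
      exact_mod_cast (congrArg Fin.val (hc'.symm.trans hc))
    linarith
  refine encard_le_of_forall_exists_fin color ?_ ?_
  · rintro (⟨c, b⟩ | i) hk
    · exact ⟨c.succ, rfl, hk⟩
    · obtain ⟨-, hlt⟩ | hk := hk
      · exact absurd hlt (not_lt.2 hx)
      · obtain ⟨c, hc⟩ := mem_iUnion.1 hk
        exact ⟨c.castSucc, c, rfl, hc⟩
  · rintro n (⟨c, b⟩ | i) (⟨c', b'⟩ | i')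
    · rintro ⟨hc, hxb, -⟩ ⟨hc', hxb', -⟩
      obtain rfl := Fin.succ_injective _ (hc.symm.trans hc')
      obtain rfl := Subtype.ext ((hB c).elim_set b.2 b'.2 x hxb hxb')
      rfl
    · rintro ⟨hc, -, hlt⟩ ⟨c', hc', -, hgt⟩
      exact (hsep hc hc' hlt hgt).elim
    · rintro ⟨c, hc, -, hgt⟩ ⟨hc', -, hlt⟩
      exact (hsep hc' hc hlt hgt).elim
    · rintro ⟨c, hc, hxi, -⟩ ⟨c', hc', hxi', -⟩
      obtain rfl := Fin.castSucc_injective _ (hc.symm.trans hc')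
      exact congrArg Sum.inr ((hW c).eq (not_disjoint_iff.2 ⟨x, hxi, hxi'⟩))

end Cylinder

section Glue

variable {X ι : Type*} {U : Set (Set X)} {A P : Set X} {m l : ℕ}

theorem hasColoring_union_of_refines [PseudoEMetricSpace X] {B D : Fin m → Set (Set X)}
    {V : ι → Set X} (hA : IsClosed A) (hB : ∀ c, IsDisjointRefinement (B c) U)
    (hAB : A ⊆ ⋃ c, ⋃₀ B c) (hV : ∀ i, IsOpen (V i)) (hVU : ∀ i, ∃ u ∈ U, V i ⊆ u)
    (hVord : ∀ x, {i | x ∈ V i}.encard ≤ (m + 1 : ℕ)) (hPV : P ⊆ ⋃ i, V i)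
    (hD : ∀ c, IsDisjointRefinement (D c) (range V)) (hBD : ∀ c, ⋃₀ B c ∩ P ⊆ ⋃₀ D c) :
    HasColoring U (A ∪ P) (m + 1) := by
  choose W hWo hWdisj hWV hDW using fun c ↦ (hD c).exists_indexed
  have hQ : IsOpen (⋃ c, ⋃₀ B c) := isOpen_iUnion fun c ↦ isOpen_sUnion (hB c).isOpen
  obtain ⟨μ, hμA, hμQ, -⟩ := exists_bounded_mem_Icc_of_closed_of_le hA hQ.isClosed_compl
    (disjoint_compl_right_iff_subset.2 hAB) (show (0 : ℝ) ≤ 2 * m + 2 by positivity)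
  refine (hasColoring_range_of_encard_le (E := cylinderCover μ B V W)
    (isOpen_cylinderCover μ.continuous (fun c ↦ (hB c).isOpen) hV hWo) ?_ fun x _ ↦ ?_).mono
    subset_rfl (forall_mem_range.2 ?_)
  · rintro x (hxA | hxP)
    · have hμx : μ x = 0 := hμA hxA
      exact mem_iUnion_cylinderCover (fun hx ↦ by linarith [m.cast_nonneg (α := ℝ)])
        (fun _ ↦ hAB hxA) fun c hx ↦ absurd hx hμx.not_gt
    · refine mem_iUnion_cylinderCover (fun _ ↦ hPV hxP) (fun hx ↦ ?_)
        fun c _ hxB ↦ hDW c (hBD c ⟨hxB, hxP⟩)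
      by_contra hxQ
      have hμx : μ x = 2 * m + 2 := hμQ hxQ
      linarith
  · rcases lt_or_ge (2 * m + 1 : ℝ) (μ x) with hx | hx
    · exact (encard_cylinderCover_le_of_lt hWV hx).trans (hVord x)
    · exact encard_cylinderCover_le_of_le (fun c ↦ (hB c).pairwiseDisjoint) hWdisj hx
  · rintro (⟨c, b⟩ | i)
    · obtain ⟨u, hu, hbu⟩ := (hB c).refines b b.2
      exact ⟨u, hu, inter_subset_left.trans hbu⟩
    · obtain ⟨u, hu, hiu⟩ := hVU i
      exact ⟨u, hu, (cylinderCover_inr_subset hWV i).trans hiu⟩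

theorem hasColoring_union_of_isDisjointRefinement [PseudoEMetricSpace X]
    {B D : Fin m → Set (Set X)} {V : Fin l → Set (Set X)} (hlm : l ≤ m + 1) (hA : IsClosed A)
    (hB : ∀ c, IsDisjointRefinement (B c) U) (hAB : A ⊆ ⋃ c, ⋃₀ B c)
    (hV : ∀ d, IsDisjointRefinement (V d) U) (hPV : P ⊆ ⋃ d, ⋃₀ V d)
    (hD : ∀ c, IsDisjointRefinement (D c) (⋃ d, V d)) (hBD : ∀ c, ⋃₀ B c ∩ P ⊆ ⋃₀ D c) :
    HasColoring U (A ∪ P) (m + 1) := by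
  have hVmem (v : (⋃ d, V d : Set (Set X))) : ∃ d, (v : Set X) ∈ V d := mem_iUnion.1 v.2
  refine hasColoring_union_of_refines (V := fun v : (⋃ d, V d : Set (Set X)) ↦ (v : Set X))
    hA hB hAB (fun v ↦ ?_) (fun v ↦ ?_) (fun x ↦ ?_) ?_ (fun c ↦ ?_) hBD
  · obtain ⟨d, hd⟩ := hVmem v
    exact (hV d).isOpen v hd
  · obtain ⟨d, hd⟩ := hVmem v
    exact (hV d).refines v hd
  · rw [← Subtype.val_injective.encard_image]
    have himage : Subtype.val '' {v : (⋃ d, V d : Set (Set X)) | x ∈ (v : Set X)} ⊆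
        {v ∈ ⋃ d, V d | x ∈ v} := by
      rintro _ ⟨v, hv, rfl⟩
      exact ⟨v.2, hv⟩
    exact (encard_le_encard himage).trans
      ((encard_le_of_isDisjointRefinement hV x).trans (by exact_mod_cast hlm))
  · rwa [← sUnion_eq_iUnion, sUnion_iUnion]
  · rw [Subtype.range_val]
    exact hD c

theorem exists_isOpen_forall_subset_of_locallyFinite [TopologicalSpace X] {O : ι → Set X}
    (hO : LocallyFinite O) {F : ι → Set (Set X)} (hF : ∀ i, ∀ v ∈ F i, IsOpen v)
    (hcov : ∀ i, closure (O i) ⊆ ⋃₀ F i) (x : X) :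
    ∃ w, IsOpen w ∧ x ∈ w ∧ ∀ i, (w ∩ O i).Nonempty → ∃ v ∈ F i, w ⊆ v := by
  choose v hvF hxv using fun i : {i | x ∈ closure (O i)} ↦ hcov i i.2
  have : Finite {i | x ∈ closure (O i)} := hO.closure.point_finite x
  have hmeet : ∀ᶠ y in 𝓝 x, {i | y ∈ closure (O i)} ⊆ {i | x ∈ closure (O i)} :=
    hO.closure.eventually_subset (fun _ ↦ isClosed_closure) x
  have hmem : ∀ᶠ y in 𝓝 x, ∀ i, y ∈ v i :=
    Filter.eventually_all.2 fun i ↦ (hF i _ (hvF i)).mem_nhds (hxv i)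
  obtain ⟨w, hw, hwo, hxw⟩ := eventually_nhds_iff.1 (hmeet.and hmem)
  refine ⟨w, hwo, hxw, fun i ⟨y, hyw, hyi⟩ ↦ ?_⟩
  have hi : x ∈ closure (O i) := (hw y hyw).1 (subset_closure hyi)
  exact ⟨v ⟨i, hi⟩, hvF ⟨i, hi⟩, fun z hz ↦ (hw z hz).2 _⟩

theorem ColorCoverable.hasColoring_of_locallyFinite [TopologicalSpace X]
    (h : ColorCoverable A m) (hU : ∀ u ∈ U, IsOpen u) (hAU : A ⊆ ⋃₀ U) {O : ι → Set X}
    (hO : LocallyFinite O) {F : ι → Set (Set X)} (hF : ∀ i, ∀ v ∈ F i, IsOpen v)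
    (hcov : ∀ i, closure (O i) ⊆ ⋃₀ F i) :
    HasColoring {w | (∃ u ∈ U, w ⊆ u) ∧ ∀ i, (w ∩ O i).Nonempty → ∃ v ∈ F i, w ⊆ v} A m := by
  choose w hwo hxw hw using exists_isOpen_forall_subset_of_locallyFinite hO hF hcov
  refine (h {t | ∃ u ∈ U, ∃ x, w x ∩ u = t} ?_ fun x hx ↦ ?_).mono subset_rfl ?_
  · rintro _ ⟨u, hu, x, rfl⟩
    exact (hwo x).inter (hU u hu)
  · obtain ⟨u, hu, hxu⟩ := hAU hx
    exact ⟨w x ∩ u, ⟨u, hu, x, rfl⟩, hxw x, hxu⟩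
  · rintro _ ⟨u, hu, x, rfl⟩
    refine ⟨_, ⟨⟨u, hu, inter_subset_right⟩, fun i hi ↦ ?_⟩, subset_rfl⟩
    obtain ⟨v, hv, hwv⟩ := hw x i (hi.mono (inter_subset_inter_left _ inter_subset_left))
    exact ⟨v, hv, inter_subset_left.trans hwv⟩

theorem ColorCoverable.hasColoring_union_iUnion [PseudoEMetricSpace X] (h : ColorCoverable A m)
    (hA : IsClosed A) (hU : ∀ u ∈ U, IsOpen u) (hAU : A ⊆ ⋃₀ U) {O : ι → Set X}
    (hO : ∀ i, IsOpen (O i)) (hOdisj : Pairwise (Disjoint on O)) (hOfin : LocallyFinite O)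
    (hcol : ∀ i, HasColoring U (closure (O i)) l) (hlm : l ≤ m + 1) :
    HasColoring U (A ∪ ⋃ i, O i) (m + 1) := by
  choose V hV hOV using hcol
  obtain ⟨B, hB, hAB⟩ := h.hasColoring_of_locallyFinite hU hAU hOfin (F := fun i ↦ ⋃ d, V i d)
    (fun i v hv ↦ let ⟨d, hd⟩ := mem_iUnion.1 hv; (hV i d).isOpen v hd)
    fun i ↦ (hOV i).trans_eq (sUnion_iUnion _).symm
  have hBO (c : Fin m) := IsDisjointRefinement.iUnion_inter (fun _ : ι ↦ hB c) hO hOdisj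
  refine hasColoring_union_of_isDisjointRefinement (V := fun d ↦ ⋃ i, (· ∩ O i) '' V i d)
    (D := fun c ↦ {b ∈ ⋃ i, (· ∩ O i) '' B c | b.Nonempty}) hlm hA
    (fun c ↦ (hB c).of_subset subset_rfl fun b hb ↦ ?_) hAB
    (fun d ↦ .iUnion_inter (fun i ↦ hV i d) hO hOdisj) ?_
    (fun c ↦ (hBO c).of_subset (sep_subset _ _) ?_) fun c ↦ ?_
  · obtain ⟨w, ⟨⟨u, hu, hwu⟩, -⟩, hbw⟩ := (hB c).refines b hb
    exact ⟨u, hu, hbw.trans hwu⟩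
  · refine iUnion_subset fun i x hx ↦ ?_
    obtain ⟨d, v, hv, hxv⟩ := mem_iUnion.1 (hOV i (subset_closure hx))
    exact mem_iUnion.2 ⟨d, v ∩ O i, mem_iUnion.2 ⟨i, v, hv, rfl⟩, hxv, hx⟩
  · rintro _ ⟨hmem, hne⟩
    obtain ⟨i, b, hb, rfl⟩ := mem_iUnion.1 hmem
    obtain ⟨w, ⟨-, hw⟩, hbw⟩ := (hB c).refines b hb
    obtain ⟨v, hv, hwv⟩ := hw i (hne.mono (inter_subset_inter_left _ hbw))
    obtain ⟨d, hd⟩ := mem_iUnion.1 hv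
    exact ⟨v ∩ O i, mem_iUnion.2 ⟨d, mem_iUnion.2 ⟨i, v, hd, rfl⟩⟩,
      inter_subset_inter_left _ (hbw.trans hwv)⟩
  · rintro x ⟨⟨b, hb, hxb⟩, hx⟩
    obtain ⟨i, hxi⟩ := mem_iUnion.1 hx
    exact ⟨b ∩ O i, ⟨mem_iUnion.2 ⟨i, b, hb, rfl⟩, x, hxb, hxi⟩, hxb, hxi⟩

end Glue

section Hurewicz

variable {X Y : Type*} [TopologicalSpace Y] {f : X → Y} {k j n : ℕ}

theorem ColorCoverable.preimage_of_isClosedMap [PseudoEMetricSpace X] [ParacompactSpace Y]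
    [NormalSpace Y] (hf : Continuous f) (hclosed : IsClosedMap f)
    (hfib : ∀ y, ColorCoverable (f ⁻¹' {y}) (k + 1)) {Z : Fin j → Set Y}
    (hZ : ∀ c, ColorCoverable (Z c) 1) {L : Set Y} (hL : IsClosed L) (hLZ : L ⊆ ⋃ c, Z c) :
    ColorCoverable (f ⁻¹' L) (k + j) := by
  induction j generalizing L with
  | zero =>
    have hempty : L = ∅ := by simpa using hLZ
    exact fun U _ _ ↦ ⟨fun _ ↦ ∅, fun _ ↦ ⟨by simp, by simp, by simp⟩, by simp [hempty]⟩
  | succ j ih =>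
    intro U hU hLU
    have htube (y : L) : ∃ W, IsOpen W ∧ (y : Y) ∈ W ∧ HasColoring U (f ⁻¹' W) (k + 1) :=
      (hfib y U hU ((preimage_mono (singleton_subset_iff.2 y.2)).trans
        hLU)).exists_preimage_of_isClosedMap hclosed
    choose W hWo hyW hW using htube
    obtain ⟨O, hO, hOdisj, hOfin, hOW, hZO⟩ := (hZ 0).exists_disjoint_locallyFinite hL hWo
      fun y hy ↦ mem_iUnion.2 ⟨⟨y, hy⟩, hyW _⟩
    let L' : Set Y := L \ ⋃ i, O i
    have hL' : IsClosed L' := hL.sdiff (isOpen_iUnion hO)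
    have hL'Z : L' ⊆ ⋃ c : Fin j, Z c.succ := by
      rintro y ⟨hyL, hyO⟩
      obtain ⟨c, hc⟩ := mem_iUnion.1 (hLZ hyL)
      cases c using Fin.cases with
      | zero => exact absurd (hZO ⟨hc, hyL⟩) hyO
      | succ c => exact mem_iUnion.2 ⟨c, hc⟩
    have hglue := (ih (fun c ↦ hZ c.succ) hL' hL'Z).hasColoring_union_iUnion
      (hL'.preimage hf) hU ((preimage_mono sdiff_subset).trans hLU)
      (fun i ↦ (hO i).preimage hf) (fun i i' hi ↦ (hOdisj hi).preimage f)
      (hOfin.preimage_continuous hf)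
      (fun i ↦ (hW i).mono_set <|
        (hf.closure_preimage_subset _).trans (preimage_mono (hOW i))) (by omega)
    refine hglue.mono_set ?_
    rw [← preimage_iUnion, ← preimage_union]
    exact preimage_mono (subset_sdiff_union _ _)

theorem CovDimLE.of_isClosedMap [TopologicalSpace X] [PseudoMetrizableSpace X]
    [PseudoMetrizableSpace Y] (hf : Continuous f) (hclosed : IsClosedMap f) (hY : CovDimLE Y n)
    (hfib : ∀ y, CovDimLE (f ⁻¹' {y}) k) : CovDimLE X (n + k) := by
  let := pseudoMetrizableSpacePseudoMetric X
  let := pseudoMetrizableSpacePseudoMetric Y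
  have hYcol : ColorCoverable (univ : Set Y) (n + 1) :=
    range_id ▸ hY.colorCoverable_range IsInducing.id
  have hfibcol (y : Y) : ColorCoverable (f ⁻¹' {y}) (k + 1) := by
    simpa only [Subtype.range_coe] using (hfib y).colorCoverable_range IsInducing.subtypeVal
  obtain ⟨Z, hZcov, hZ⟩ := hYcol.exists_decomposition
  have hX := ColorCoverable.preimage_of_isClosedMap hf hclosed hfibcol hZ isClosed_univ hZcov.ge
  rw [preimage_univ, ← add_assoc, add_comm k] at hX
  exact hX.covDimLE

theorem covDim_le_of_closed_surjection_general [TopologicalSpace X] [PseudoMetrizableSpace X]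
    [PseudoMetrizableSpace Y] (hf : Continuous f) (hclosed : IsClosedMap f) :
    covDim X ≤ covDim Y + ⨆ y, covDim (f ⁻¹' {y}) := by
  by_cases htop : covDim Y + ⨆ y, covDim (f ⁻¹' {y}) = ⊤
  · exact htop ▸ le_top
  obtain ⟨hYtop, hfibtop⟩ := WithTop.add_ne_top.1 htop
  obtain ⟨n, hn⟩ := ENat.ne_top_iff_exists.1 hYtop
  obtain ⟨k, hk⟩ := ENat.ne_top_iff_exists.1 hfibtop
  rw [← hn, ← hk, ← Nat.cast_add, covDim_le_natCast_iff]
  exact .of_isClosedMap hf hclosed (covDim_le_natCast_iff.1 hn.ge) fun y ↦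
    covDim_le_natCast_iff.1 (hk ▸ le_iSup (fun y ↦ covDim (f ⁻¹' {y})) y)

end Hurewicz

/-- **Theorem 2** (Hurewicz).  If `f : X → Y` is a closed surjective continuous map of
metric spaces, then `dim X ≤ dim Y + sup { dim f⁻¹(y) : y ∈ Y }`. -/
theorem covDim_le_of_closed_surjection (X : Type*) [MetricSpace X]
    (Y : Type*) [MetricSpace Y] (f : X → Y)
    (hf : Continuous f) (hclosed : IsClosedMap f) (hsurj : Function.Surjective f) :
    covDim X ≤ covDim Y + ⨆ y : Y, covDim (f ⁻¹' {y} : Set X) :=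
  covDim_le_of_closed_surjection_general hf hclosed
end
end
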